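/- arXiv:1901.02475 — 2 statements merged into one kernel-verified Lean document; each statement's English description precedes it below -/
import Mathlib

section
/- Let G be an n-vertex 15-tough (P2 ∪ P3)-free graph with n ≥ 31, and let S ⊆ V(G) be a cutset with |S| ≤ 3n/4. If G - S has at least two clique components with at least two vertices each, and for every edge uv ∈ E(G) we have deg(u) + deg(v) ≥ |S|, then G has a Hamiltonian cycle. -/
open SimpleGraph

variable {V : Type*}

/-- The disjoint union `P2 ∪ P3`: edge 0-1, path 2-3-4, on `Fin 5`. -/
def P2P3 : SimpleGraph (Fin 5) := SimpleGraph.fromRel (fun a b =>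
  (a = 0 ∧ b = 1) ∨ (a = 2 ∧ b = 3) ∨ (a = 3 ∧ b = 4))

/-- `G` has no induced subgraph isomorphic to `P2 ∪ P3`. -/
def P2P3Free (G : SimpleGraph V) : Prop :=
  ¬ ∃ f : Fin 5 ↪ V, ∀ a b, P2P3.Adj a b ↔ G.Adj (f a) (f b)

/-- The number of connected components of `G - S`. -/
noncomputable def numComponents [Fintype V] (G : SimpleGraph V) (S : Finset V) : ℕ :=
  Nat.card ((G.induce ((↑S : Set V)ᶜ)).ConnectedComponent)

/-- `G` is `t`-tough: `|S| ≥ t·c(G-S)` whenever `c(G-S) ≥ 2`. -/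
def IsTough [Fintype V] (t : ℝ) (G : SimpleGraph V) : Prop :=
  ∀ S : Finset V, 2 ≤ numComponents G S → t * numComponents G S ≤ S.card

/-! ### Cyclic lists -/

/-- `l` is a closed chain of `G`. -/
def Cyc (G : SimpleGraph V) (l : List V) : Prop :=
  l.IsChain G.Adj ∧ ∀ x ∈ l.getLast?, ∀ y ∈ l.head?, G.Adj x y

/-- There is a cyclic list covering exactly `A`. -/
def HasCyc [DecidableEq V] (G : SimpleGraph V) (A : Finset V) : Prop :=
  ∃ l : List V, l.Nodup ∧ l.toFinset = A ∧ Cyc G l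

lemma Cyc.swap {G : SimpleGraph V} {l₁ l₂ : List V} (h : Cyc G (l₁ ++ l₂)) : Cyc G (l₂ ++ l₁) := by
  obtain ⟨h1, h2⟩ := h
  rw [List.isChain_append] at h1
  obtain ⟨ha, hb, hc⟩ := h1
  rcases List.eq_nil_or_concat l₁ with rfl | ⟨a, x, rfl⟩
  · simpa [Cyc] using ⟨hb, by simpa using h2⟩
  rcases List.eq_nil_or_concat l₂ with rfl | ⟨b, y, rfl⟩
  · simp only [List.nil_append]
    exact ⟨ha, by simpa using h2⟩
  refine ⟨?_, ?_⟩
  · rw [List.isChain_append]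
    refine ⟨hb, ha, ?_⟩
    intro p hp q hq
    apply h2
    · simp only [List.concat_eq_append, List.getLast?_append] at hp ⊢
      simpa using hp
    · cases a <;> simp_all
  · intro p hp q hq
    apply hc
    · simp only [List.concat_eq_append, List.getLast?_append] at hp ⊢
      simpa using hp
    · cases b <;> simp_all

lemma Cyc.rot {G : SimpleGraph V} {l l' : List V} (h : Cyc G l) (hr : l ~r l') : Cyc G l' := by
  obtain ⟨n, rfl⟩ := hr
  induction n generalizing l with
  | zero => simpa using h
  | succ n ih =>
    cases l with
    | nil => simpa using h
    | cons a t =>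
      rw [List.rotate_cons_succ]
      exact ih (Cyc.swap (l₁ := [a]) (l₂ := t) h)

lemma formPerm_head [DecidableEq V] {v b : V} {s : List V} (h : (v :: s).Nodup) (hb : b ∈ (s ++ [v]).head?) :
    (v :: s).formPerm v = b := by
  cases s with
  | nil => simp at hb; simp [hb]
  | cons c s => simp at hb; subst hb; exact List.formPerm_apply_head _ _ _ h

/-- A cycle can be re-routed through two crossing edges. -/
lemma insert_list [DecidableEq V] {G : SimpleGraph V} {l P : List V} {u w v z : V} (hl : l.Nodup) (hc : Cyc G l)
    (hP : P.IsChain G.Adj) (hPn : P.Nodup) (hd : ∀ x ∈ P, x ∉ l) (hu : u ∈ P.head?) (hw : w ∈ P.getLast?)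
    (hv : v ∈ l) (hz : z ∈ l) (hvz : v ≠ z) (huv : G.Adj u v) (hwz : G.Adj w z)
    (hf : G.Adj (l.formPerm v) (l.formPerm z)) :
    HasCyc G (l.toFinset ∪ P.toFinset) := by
  obtain ⟨a, b, rfl⟩ := List.append_of_mem hv
  have hz' : z ∈ b ++ a := by
    simp at hz ⊢; tauto
  obtain ⟨r, t, hrt⟩ := List.append_of_mem hz'
  have hr1 : (a ++ v :: b) ~r (v :: (r ++ z :: t)) := by
    rw [← hrt, ← List.cons_append]
    exact List.isRotated_append
  have hr2 : (a ++ v :: b) ~r (z :: (t ++ v :: r)) := by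
    refine hr1.trans ?_
    have := List.isRotated_append (l := v :: r) (l' := z :: t)
    simpa using this
  have hn1 : (v :: (r ++ z :: t)).Nodup := hr1.nodup_iff.1 hl
  have hn2 : (z :: (t ++ v :: r)).Nodup := hr2.nodup_iff.1 hl
  rw [List.formPerm_eq_of_isRotated hl hr1] at hf
  have hc1 := hc.rot hr1
  obtain ⟨p, hp⟩ : ∃ p, p ∈ (r ++ [z]).head? := by cases r <;> simp
  obtain ⟨q, hq⟩ : ∃ q, q ∈ (t ++ [v]).head? := by cases t <;> simp
  have hfv : (v :: (r ++ z :: t)).formPerm v = p := by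
    apply formPerm_head hn1
    cases r <;> simp_all
  have hfz : (v :: (r ++ z :: t)).formPerm z = q := by
    rw [← List.formPerm_eq_of_isRotated hl hr1, List.formPerm_eq_of_isRotated hl hr2]
    apply formPerm_head hn2
    cases t <;> simp_all
  rw [hfv, hfz] at hf
  -- chains
  have hch : (v :: r ++ ([z] ++ (t ++ [v]))).IsChain G.Adj := by
    rw [← List.append_assoc, ← List.append_assoc, List.isChain_append]
    refine ⟨by simpa using hc1.1, by simp, ?_⟩
    intro x hx y hy
    apply hc1.2
    · simpa using hx
    · simpa using hy
  have hA : (r ++ [z]).IsChain G.Adj := by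
    apply List.IsChain.infix hch
    exact ⟨[v], t ++ [v], by simp⟩
  have hB : (t ++ [v]).IsChain G.Adj := by
    apply List.IsChain.infix hch
    exact ⟨v :: r ++ [z], [], by simp⟩
  have hA' : (r ++ [z]).reverse.IsChain G.Adj := by
    rw [List.isChain_reverse]
    exact hA.imp (fun _ _ h => h.symm)
  have hperm : ((r ++ [z]).reverse ++ (t ++ [v])).Perm (a ++ v :: b) := by
    refine List.Perm.trans ?_ hr1.perm.symm
    refine ((List.reverse_perm _).append_right _).trans ?_
    have : (v :: (r ++ z :: t)) = [v] ++ ((r ++ [z]) ++ t) := by simp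
    rw [this]
    rw [← List.append_assoc]
    exact List.perm_append_comm
  refine ⟨P ++ ((r ++ [z]).reverse ++ (t ++ [v])), ?_, ?_, ?_, ?_⟩
  · rw [List.nodup_append]
    refine ⟨hPn, hperm.nodup_iff.2 hl, ?_⟩
    intro x hx y hy hxy
    subst hxy
    exact hd x hx (hperm.mem_iff.1 hy)
  · rw [List.toFinset_append, List.toFinset_eq_of_perm _ _ hperm, Finset.union_comm]
  · rw [List.isChain_append, List.isChain_append]
    refine ⟨hP, ⟨hA', hB, ?_⟩, ?_⟩
    · intro x hx y hy
      rw [List.getLast?_reverse] at hx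
      rw [Option.mem_unique hx hp, Option.mem_unique hy hq]
      exact hf
    · intro x hx y hy
      simp at hy
      subst hy
      rw [Option.mem_unique hx hw]; exact hwz
  · intro x hx y hy
    have h1 : v = x := by
      rw [← List.append_assoc, ← List.append_assoc, List.getLast?_append] at hx
      simpa using hx
    have h2 : y = u := by
      cases P with
      | nil => simp at hu
      | cons c P => simp at hu hy; rw [← hu, ← hy]
    rw [← h1, h2]
    exact huv.symm

lemma hamiltonian_of_hasCyc [Fintype V] [DecidableEq V] {G : SimpleGraph V} (hn : 3 ≤ Fintype.card V)
    (h : HasCyc G Finset.univ) : G.IsHamiltonian := by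
  intro _
  obtain ⟨l, hl, hu, hc, hcl⟩ := h
  have hlen : l.length = Fintype.card V := by
    rw [← List.toFinset_card_of_nodup hl, hu, Finset.card_univ]
  have hne : l ≠ [] := by rintro rfl; simp at hlen; omega
  have hadj : G.Adj (l.getLast hne) (l.head hne) :=
    hcl _ (List.getLast?_eq_getLast_of_ne_nil hne ▸ rfl) _ (List.head?_eq_some_head hne ▸ rfl)
  refine ⟨_, Walk.cons hadj (Walk.ofSupport l hne hc), ?_⟩
  rw [Walk.isHamiltonianCycle_iff_isCycle_and_length_eq]
  have hlen2 := Walk.length_ofSupport hne hc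
  have hpath : (Walk.ofSupport l hne hc).IsPath := by
    rw [Walk.isPath_def, Walk.support_ofSupport]; exact hl
  refine ⟨?_, ?_⟩
  · rw [Walk.cons_isCycle_iff]
    refine ⟨hpath, ?_⟩
    intro hmem
    rw [Sym2.eq_swap] at hmem
    have := hpath.length_eq_one_of_mem_edges hmem
    omega
  · rw [Walk.length_cons]; omega

/-! ### Toughness, independence, forbidden subgraph -/

lemma tough_sep [Fintype V] {G : SimpleGraph V} (ht : IsTough 15 G) {ι : Type*} (f : V → ι)
    (X I : Finset V) (hd : ∀ a ∈ I, a ∉ X) (h2 : 2 ≤ I.card)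
    (hf : ∀ a b, a ∉ X → b ∉ X → G.Adj a b → f a = f b)
    (hinj : ∀ a ∈ I, ∀ b ∈ I, f a = f b → a = b) : 15 * I.card ≤ X.card := by
  classical
  let H := G.induce ((↑X : Set V)ᶜ)
  have hw : ∀ (a b : ((↑X : Set V)ᶜ : Set V)), H.Reachable a b → f a.1 = f b.1 := by
    intro a b hr
    obtain ⟨p⟩ := hr
    induction p with
    | nil => rfl
    | @cons a c b h p ih =>
      refine Eq.trans ?_ ih
      exact hf _ _ (fun h => a.2 h) (fun h => c.2 h) h
  let g : I → H.ConnectedComponent := fun a =>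
    H.connectedComponentMk ⟨a.1, by simpa using hd a.1 a.2⟩
  have hg : Function.Injective g := by
    intro a b hab
    have := hw _ _ (ConnectedComponent.exact hab)
    exact Subtype.ext (hinj _ a.2 _ b.2 this)
  have hc : I.card ≤ numComponents G X := by
    have := Nat.card_le_card_of_injective g hg
    simpa [numComponents] using this
  have h3 := ht X (h2.trans hc)
  have h4 : 15 * numComponents G X ≤ X.card := by exact_mod_cast h3
  omega

lemma indep_bound [Fintype V] {G : SimpleGraph V} (ht : IsTough 15 G) (I : Finset V) (h2 : 2 ≤ I.card)
    (hi : ∀ a ∈ I, ∀ b ∈ I, ¬ G.Adj a b) : 16 * I.card ≤ Fintype.card V := by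
  classical
  have := tough_sep ht (fun v => v) Iᶜ I (by simp) h2
    (fun a b ha hb hab => absurd hab (hi a (by simpa using ha) b (by simpa using hb)))
    (fun a _ b _ h => h)
  have h3 := Finset.card_compl I
  have h4 := Finset.card_le_univ I
  omega

lemma p2p3 {G : SimpleGraph V} (hfree : P2P3Free G) {p q x y z : V} (hpq : G.Adj p q)
    (hxy : G.Adj x y) (hyz : G.Adj y z) (hne : x ≠ z) (hxz : ¬ G.Adj x z)
    (h1 : ¬ G.Adj p x) (h2 : ¬ G.Adj p y) (h3 : ¬ G.Adj p z)
    (h4 : ¬ G.Adj q x) (h5 : ¬ G.Adj q y) (h6 : ¬ G.Adj q z) : False := by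
  apply hfree
  have e1 : p ≠ q := hpq.ne
  have e2 : x ≠ y := hxy.ne
  have e3 : y ≠ z := hyz.ne
  have e4 : p ≠ x := by rintro rfl; exact h2 hxy
  have e5 : p ≠ y := by rintro rfl; exact h3 hyz
  have e6 : p ≠ z := by rintro rfl; exact h2 hyz.symm
  have e7 : q ≠ x := by rintro rfl; exact h5 hxy
  have e8 : q ≠ y := by rintro rfl; exact h6 hyz
  have e9 : q ≠ z := by rintro rfl; exact h5 hyz.symm
  have hinj : Function.Injective ![p, q, x, y, z] := by
    intro i j hij
    fin_cases i <;> fin_cases j <;> simp_all [eq_comm]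
  refine ⟨⟨![p, q, x, y, z], hinj⟩, ?_⟩
  intro a b
  fin_cases a <;> fin_cases b <;> simp [P2P3, SimpleGraph.fromRel_adj, *, G.adj_comm q p, G.adj_comm y x, G.adj_comm z y, G.adj_comm z x, G.adj_comm x p, G.adj_comm y p, G.adj_comm z p, G.adj_comm x q, G.adj_comm y q, G.adj_comm z q]

lemma insert_cyc [Fintype V] [DecidableEq V] {G : SimpleGraph V} (ht : IsTough 15 G)
    (hn : 16 ≤ Fintype.card V) {A : Finset V} {P : List V} {u w : V} (hA : HasCyc G A)
    (hP : P.IsChain G.Adj) (hPn : P.Nodup) (hd : ∀ x ∈ P, x ∉ A) (hu : u ∈ P.head?)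
    (hw : w ∈ P.getLast?) (C : Finset V) (hC : ∀ v ∈ C, v ∈ A ∧ G.Adj u v ∧ G.Adj w v)
    (h16 : Fintype.card V < 16 * C.card) : HasCyc G (A ∪ P.toFinset) := by
  obtain ⟨l, hl, rfl, hc⟩ := hA
  have hcard : (C.image l.formPerm).card = C.card :=
    Finset.card_image_of_injective _ l.formPerm.injective
  by_cases hi : ∀ a ∈ C.image l.formPerm, ∀ b ∈ C.image l.formPerm, ¬ G.Adj a b
  · have := indep_bound ht _ (by omega) hi
    omega
  · push Not at hi
    obtain ⟨a, ha, b, hb, hab⟩ := hi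
    obtain ⟨v, hv, rfl⟩ := Finset.mem_image.1 ha
    obtain ⟨z, hz, rfl⟩ := Finset.mem_image.1 hb
    have hv' := hC v hv
    have hz' := hC z hz
    refine insert_list hl hc hP hPn (by simpa using hd) hu hw (by simpa using hv'.1)
      (by simpa using hz'.1) ?_ hv'.2.1 hz'.2.2 hab
    rintro rfl
    exact hab.ne rfl

lemma insert_family [Fintype V] [DecidableEq V] {G : SimpleGraph V} (ht : IsTough 15 G)
    (hn : 16 ≤ Fintype.card V) {A : Finset V} (hA : HasCyc G A) {τ : Type*} [DecidableEq τ]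
    (T : Finset τ) (P : τ → List V) (hP : ∀ t ∈ T, (P t).IsChain G.Adj ∧ (P t).Nodup)
    (hd : ∀ t ∈ T, ∀ x ∈ P t, x ∉ A)
    (hdd : ∀ t ∈ T, ∀ t' ∈ T, ∀ x, x ∈ P t → x ∈ P t' → t = t')
    (hC : ∀ t ∈ T, ∃ u ∈ (P t).head?, ∃ w ∈ (P t).getLast?, ∃ C : Finset V,
      (∀ v ∈ C, v ∈ A ∧ G.Adj u v ∧ G.Adj w v) ∧ Fintype.card V < 16 * C.card) :
    HasCyc G (A ∪ T.biUnion (fun t => (P t).toFinset)) := by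
  induction T using Finset.induction_on with
  | empty => simpa using hA
  | insert t T hT ih =>
    have ih' := ih (fun s hs => hP s (Finset.mem_insert_of_mem hs))
      (fun s hs => hd s (Finset.mem_insert_of_mem hs))
      (fun s hs s' hs' => hdd s (Finset.mem_insert_of_mem hs) s' (Finset.mem_insert_of_mem hs'))
      (fun s hs => hC s (Finset.mem_insert_of_mem hs))
    obtain ⟨u, hu, w, hw, C, hC1, hC2⟩ := hC t (Finset.mem_insert_self _ _)
    have hPt := hP t (Finset.mem_insert_self _ _)
    have := insert_cyc ht hn ih' hPt.1 hPt.2 (fun x hx hx' => by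
      rcases Finset.mem_union.1 hx' with h | h
      · exact hd t (Finset.mem_insert_self _ _) x hx h
      · obtain ⟨s, hs, hxs⟩ := Finset.mem_biUnion.1 h
        have := hdd t (Finset.mem_insert_self _ _) s (Finset.mem_insert_of_mem hs) x hx
          (by simpa using hxs)
        subst this
        exact hT hs) hu hw C
      (fun v hv => ⟨Finset.mem_union_left _ (hC1 v hv).1, (hC1 v hv).2⟩) hC2
    rw [Finset.biUnion_insert]
    rw [Finset.union_assoc] at this
    rw [Finset.union_comm (P t).toFinset]
    exact this

lemma tough_map [Fintype V] {G : SimpleGraph V} (ht : IsTough 15 G) {ι : Type*} (f : V → ι)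
    (X : Finset V) (K : Finset ι) (h2 : 2 ≤ K.card)
    (hf : ∀ a b, a ∉ X → b ∉ X → G.Adj a b → f a = f b)
    (hK : ∀ k ∈ K, ∃ v, v ∉ X ∧ f v = k) : 15 * K.card ≤ X.card := by
  classical
  obtain ⟨k0, hk0⟩ : K.Nonempty := Finset.card_pos.1 (by omega)
  have : Nonempty V := ⟨(hK k0 hk0).choose⟩
  choose! r hr using hK
  have hc : (K.image r).card = K.card := by
    apply Finset.card_image_of_injOn
    intro a ha b hb hab
    rw [← (hr a ha).2, ← (hr b hb).2, hab]
  rw [← hc]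
  refine tough_sep ht f X _ ?_ (by omega) hf ?_
  · intro a ha
    obtain ⟨k, hk, rfl⟩ := Finset.mem_image.1 ha
    exact (hr k hk).1
  · intro a ha b hb
    obtain ⟨k, hk, rfl⟩ := Finset.mem_image.1 ha
    obtain ⟨k', hk', rfl⟩ := Finset.mem_image.1 hb
    rw [(hr k hk).2, (hr k' hk').2]
    rintro rfl; rfl

/-- The standing situation: `V ∖ S` is a disjoint union of cliques. -/
structure Setup [Fintype V] (G : SimpleGraph V) (S : Finset V) (𝒞 : Finset (Finset V)) : Prop where
  cover : ∀ v, v ∉ S → ∃ E ∈ 𝒞, v ∈ E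
  out : ∀ E ∈ 𝒞, ∀ v ∈ E, v ∉ S
  ne : ∀ E ∈ 𝒞, E.Nonempty
  clique : ∀ E ∈ 𝒞, ∀ a ∈ E, ∀ b ∈ E, a ≠ b → G.Adj a b
  same : ∀ E ∈ 𝒞, ∀ F ∈ 𝒞, ∀ a ∈ E, ∀ b ∈ F, G.Adj a b → E = F
  disj : ∀ E ∈ 𝒞, ∀ F ∈ 𝒞, ∀ a, a ∈ E → a ∈ F → E = F
  two : ∃ E ∈ 𝒞, ∃ F ∈ 𝒞, E ≠ F ∧ 2 ≤ E.card ∧ 2 ≤ F.card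
  min : ∀ x ∈ S, ∃ a b, a ∉ S ∧ b ∉ S ∧
    ((G.Adj x a ∧ G.Adj x b ∧ a ≠ b ∧ ¬ G.Adj a b) ∨ (G.Adj x a ∧ G.Adj a b ∧ ¬ G.Adj x b))
  tough : IsTough 15 G
  free : P2P3Free G
  card : 4 * S.card ≤ 3 * Fintype.card V

lemma Setup.finish [Fintype V] [DecidableEq V] {G : SimpleGraph V} {S : Finset V}
    {𝒞 : Finset (Finset V)} (st : Setup G S 𝒞) (hn : 16 ≤ Fintype.card V) (A : Finset V)
    (hA : HasCyc G A) (𝓔 : Finset (Finset V)) (h𝓔 : 𝓔 ⊆ 𝒞) (a b : Finset V → V)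
    (hab : ∀ E ∈ 𝓔, ∀ x, x ∈ E ↔ x = a E ∨ x = b E)
    (hcov : ∀ v, v ∉ S → v ∈ A ∨ ∃ E ∈ 𝓔, v ∈ E) (hEA : ∀ E ∈ 𝓔, ∀ v ∈ E, v ∉ A)
    (σ : 𝓔 × Bool → V) (hσ : Function.Injective σ) (hσS : ∀ i, σ i ∈ S) (hσA : ∀ i, σ i ∉ A)
    (hσa : ∀ E, G.Adj (σ (E, true)) (a E)) (hσb : ∀ E, G.Adj (σ (E, false)) (b E))
    (hC1 : ∀ E, ∃ C : Finset V, (∀ v ∈ C, v ∈ A ∧ G.Adj (σ (E, true)) v ∧ G.Adj (σ (E, false)) v) ∧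
      Fintype.card V < 16 * C.card)
    (hC2 : ∀ y ∈ S, y ∉ A → ∃ C : Finset V, (∀ v ∈ C, v ∈ A ∧ G.Adj y v) ∧
      Fintype.card V < 16 * C.card) : G.IsHamiltonian := by
  apply hamiltonian_of_hasCyc (by omega)
  let P : 𝓔 → List V := fun E => σ (E, true) ::
    ((if a E = b E then [a E] else [a E, b E]) ++ [σ (E, false)])
  have hout : ∀ E : 𝓔, a E ∉ S ∧ b E ∉ S := by
    intro E
    have h := hab E E.2
    have h1 := st.out E (h𝓔 E.2)
    exact ⟨h1 _ (by rw [h]; simp), h1 _ (by rw [h]; simp)⟩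
  have hsub : ∀ E : 𝓔, ∀ x ∈ P E, (x ∈ E.1) ∨ x = σ (E, true) ∨ x = σ (E, false) := by
    intro E x hx
    rw [hab E E.2]
    simp only [P] at hx
    split_ifs at hx <;> simp at hx ⊢ <;> tauto
  have hsup : ∀ E : 𝓔, ∀ x ∈ E.1, x ∈ P E := by
    intro E x hx
    rw [hab E E.2] at hx
    simp only [P]
    split_ifs with h <;> simp at hx ⊢
    · rw [← h] at hx; tauto
    · tauto
  have h1 := insert_family st.tough hn hA (Finset.univ : Finset 𝓔) P ?_ ?_ ?_ ?_
  rotate_left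
  · intro E _
    have hE := hab E E.2
    have h1 : σ (E, true) ≠ σ (E, false) := fun h => by simpa using hσ h
    have h2 := hout E
    have h3 := hσS (E, true)
    have h4 := hσS (E, false)
    have g1 : σ (E, true) ≠ a E := fun h => h2.1 (h ▸ h3)
    have g2 : σ (E, true) ≠ b E := fun h => h2.2 (h ▸ h3)
    have g3 : a E ≠ σ (E, false) := fun h => h2.1 (h ▸ h4)
    have g4 : b E ≠ σ (E, false) := fun h => h2.2 (h ▸ h4)
    simp only [P]
    have hb := hσb E
    split_ifs with h
    · rw [← h] at hb
      simp [hσa E, hb.symm, h1, g1, g3]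
    · have : G.Adj (a E) (b E) :=
        st.clique E (h𝓔 E.2) _ (by rw [hE]; simp) _ (by rw [hE]; simp) h
      simp [hσa E, hb.symm, h1, g1, g2, g3, g4, h, this]
  · intro E _ x hx
    rcases hsub E x hx with h | h | h
    · exact hEA E E.2 x h
    · rw [h]; exact hσA _
    · rw [h]; exact hσA _
  · intro E _ F _ x hx hx'
    have key : ∀ E : 𝓔, ∀ i, σ i ∉ E.1 := fun E i h => st.out E (h𝓔 E.2) _ h (hσS _)
    rcases hsub E x hx with h | h | h <;> rcases hsub F x hx' with h' | h' | h'
    · exact Subtype.ext (st.disj _ (h𝓔 E.2) _ (h𝓔 F.2) x h h')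
    · exact absurd (h' ▸ h) (key _ _)
    · exact absurd (h' ▸ h) (key _ _)
    · exact absurd (h ▸ h') (key _ _)
    · have := hσ (h.symm.trans h'); simpa using this
    · have := hσ (h.symm.trans h'); simp at this
    · exact absurd (h ▸ h') (key _ _)
    · have := hσ (h.symm.trans h'); simp at this
    · have := hσ (h.symm.trans h'); simpa using this
  · intro E _
    refine ⟨σ (E, true), rfl, σ (E, false), ?_, hC1 E⟩
    simp only [P]
    rw [← List.cons_append, List.getLast?_append]
    simp
  set A1 := A ∪ Finset.univ.biUnion (fun t => (P t).toFinset) with hA1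
  have hAA1 : A ⊆ A1 := Finset.subset_union_left
  have hcovS : ∀ y, y ∉ A1 → y ∈ S := by
    intro y hy
    by_contra hyS
    rcases hcov y hyS with h | ⟨E, hE, h⟩
    · exact hy (hAA1 h)
    · apply hy
      refine Finset.mem_union_right _ (Finset.mem_biUnion.2 ⟨⟨E, hE⟩, Finset.mem_univ _, ?_⟩)
      simpa using hsup ⟨E, hE⟩ y h
  have h2 := insert_family st.tough hn h1 (A1ᶜ) (fun y => [y]) (by simp) (by simp) (by simp) ?_
  · convert h2 using 1
    ext x
    simp
  · intro y hy
    have hy' : y ∉ A1 := by simpa using hy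
    obtain ⟨C, hC, hc⟩ := hC2 y (hcovS y hy') (fun h => hy' (hAA1 h))
    exact ⟨y, rfl, y, rfl, C, fun v hv => ⟨hAA1 (hC v hv).1, (hC v hv).2, (hC v hv).2⟩, hc⟩

lemma Setup.clsof [Fintype V] {G : SimpleGraph V} {S : Finset V} {𝒞 : Finset (Finset V)}
    (st : Setup G S 𝒞) : ∃ f : V → Finset V, (∀ E ∈ 𝒞, ∀ v ∈ E, f v = E) ∧ ∀ v, v ∉ S → f v ∈ 𝒞 ∧ v ∈ f v := by
  have h : ∀ v, ∃ E, v ∉ S → E ∈ 𝒞 ∧ v ∈ E := by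
    intro v
    by_cases hv : v ∈ S
    · exact ⟨∅, fun h => absurd hv h⟩
    · obtain ⟨E, hE, h⟩ := st.cover v hv
      exact ⟨E, fun _ => ⟨hE, h⟩⟩
  choose f hf using h
  refine ⟨f, ?_, hf⟩
  intro E hE v hv
  have := hf v (st.out E hE v hv)
  exact st.disj _ this.1 _ hE v this.2 hv

lemma Setup.hall [Fintype V] [DecidableEq V] {G : SimpleGraph V} {S : Finset V}
    {𝒞 : Finset (Finset V)} (st : Setup G S 𝒞) (𝓔 : Finset (Finset V)) (h𝓔 : 𝓔 ⊆ 𝒞)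
    (a b : Finset V → V) (hab : ∀ E ∈ 𝓔, ∀ x, x ∈ E ↔ x = a E ∨ x = b E)
    (B : Finset V) (hB : B ∈ 𝒞) (hB' : B ∉ 𝓔) (X0 : Finset V) (hX0 : X0.card ≤ 2) :
    ∃ σ : 𝓔 × Bool → V, Function.Injective σ ∧ (∀ i, σ i ∈ S) ∧ (∀ i, σ i ∉ X0) ∧
      (∀ E, G.Adj (σ (E, true)) (a E)) ∧ (∀ E, G.Adj (σ (E, false)) (b E)) := by
  classical
  obtain ⟨f, hf1, hf2⟩ := st.clsof
  let pt : 𝓔 × Bool → V := fun i => if i.2 then a i.1 else b i.1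
  have hpt : ∀ i, pt i ∈ i.1.1 := by
    intro i
    rw [hab _ i.1.2]
    simp only [pt]
    split_ifs <;> simp
  let N : 𝓔 × Bool → Finset V := fun i => S.filter (fun x => G.Adj x (pt i))
  let t : 𝓔 × Bool → Finset V := fun i => N i \ X0
  have hall : ∀ J : Finset (𝓔 × Bool), J.card ≤ (J.biUnion t).card := by
    intro J
    rcases J.eq_empty_or_nonempty with rfl | hJ
    · simp
    let J' : Finset (Finset V) := J.image (fun i => i.1.1)
    have hJc : J.card ≤ 2 * J'.card := by
      have h1 : J.image (fun i => (i.1.1, i.2)) ⊆ J' ×ˢ (Finset.univ : Finset Bool) := by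
        intro p hp
        obtain ⟨i, hi, rfl⟩ := Finset.mem_image.1 hp
        simp only [Finset.mem_product, Finset.mem_univ, and_true]
        exact Finset.mem_image_of_mem _ hi
      have h2 := Finset.card_le_card h1
      rw [Finset.card_image_of_injective, Finset.card_product] at h2
      · simp at h2; omega
      · rintro ⟨⟨x, hx⟩, y⟩ ⟨⟨x', hx'⟩, y'⟩ h
        simpa using h
    let inv : Finset V := J.image pt
    let U : Finset V := J'.biUnion (fun E => E \ inv)
    have hU : U.card ≤ J'.card * 1 := by
      apply Finset.card_biUnion_le_card_mul
      intro E hE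
      obtain ⟨i, hi, rfl⟩ := Finset.mem_image.1 hE
      have hE2 := hab _ i.1.2
      rw [Finset.card_le_one]
      intro x hx y hy
      rw [Finset.mem_sdiff] at hx hy
      have hi' : pt i ∈ inv := Finset.mem_image_of_mem _ hi
      have hp := (hE2 _).1 (hpt i)
      have hx1 := (hE2 _).1 hx.1
      have hy1 := (hE2 _).1 hy.1
      have hx2 : x ≠ pt i := fun h => hx.2 (h ▸ hi')
      have hy2 : y ≠ pt i := fun h => hy.2 (h ▸ hi')
      grind
    let X : Finset V := J.biUnion N ∪ U
    have hinvX : ∀ v ∈ inv, v ∉ X := by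
      intro v hv hvX
      obtain ⟨i, hi, rfl⟩ := Finset.mem_image.1 hv
      rcases Finset.mem_union.1 hvX with h | h
      · obtain ⟨j, hj, hh⟩ := Finset.mem_biUnion.1 h
        exact st.out _ (h𝓔 i.1.2) _ (hpt i) (Finset.mem_filter.1 hh).1
      · obtain ⟨E, hE, hh⟩ := Finset.mem_biUnion.1 h
        exact (Finset.mem_sdiff.1 hh).2 hv
    -- key: an edge from an involved vertex outside X stays in the involved part of the class
    have key : ∀ v w, v ∈ inv → w ∉ X → G.Adj v w → w ∈ inv ∧ f v = f w := by
      intro v w hv hw hvw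
      obtain ⟨i, hi, rfl⟩ := Finset.mem_image.1 hv
      have hwS : w ∉ S := by
        intro hwS
        apply hw
        refine Finset.mem_union_left _ (Finset.mem_biUnion.2 ⟨i, hi, ?_⟩)
        exact Finset.mem_filter.2 ⟨hwS, hvw.symm⟩
      have h1 := hf2 w hwS
      have h2 := st.same _ (h𝓔 i.1.2) _ h1.1 _ (hpt i) _ h1.2 hvw
      refine ⟨?_, by rw [hf1 _ (h𝓔 i.1.2) _ (hpt i), h2]⟩
      by_contra hwi
      apply hw
      refine Finset.mem_union_right _ (Finset.mem_biUnion.2 ⟨i.1.1, Finset.mem_image_of_mem _ hi, ?_⟩)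
      rw [Finset.mem_sdiff]
      exact ⟨h2 ▸ h1.2, hwi⟩
    have htough := tough_map st.tough (fun v => if v ∈ inv then some (f v) else none) X
      (Finset.insertNone J') ?_ ?_ ?_
    · rw [Finset.card_insertNone] at htough
      have h1 : X.card ≤ (J.biUnion N).card + U.card := Finset.card_union_le _ _
      have h2 : J.biUnion t = J.biUnion N \ X0 := by
        ext x
        simp only [t, Finset.mem_biUnion, Finset.mem_sdiff]
        constructor
        · rintro ⟨i, hi, h, h'⟩
          exact ⟨⟨i, hi, h⟩, h'⟩
        · rintro ⟨⟨i, hi, h⟩, h'⟩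
          exact ⟨i, hi, h, h'⟩
      rw [h2]
      have h3 := Finset.le_card_sdiff X0 (J.biUnion N)
      omega
    · rw [Finset.card_insertNone]
      have : 0 < J'.card := Finset.card_pos.2 (hJ.image _)
      omega
    · intro v w hv hw hvw
      by_cases h1 : v ∈ inv
      · have := key v w h1 hw hvw
        simp [h1, this]
      · by_cases h2 : w ∈ inv
        · exact absurd (key w v h2 hv hvw.symm).1 h1
        · simp [h1, h2]
    · intro k hk
      rcases k with _ | E
      · obtain ⟨v, hv⟩ := st.ne B hB
        have hnot : ∀ E ∈ J', v ∉ E := by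
          intro E hE hvE
          obtain ⟨i, hi, rfl⟩ := Finset.mem_image.1 hE
          have := st.disj _ (h𝓔 i.1.2) _ hB v hvE hv
          exact hB' (this ▸ i.1.2)
        refine ⟨v, ?_, ?_⟩
        · intro hvX
          rcases Finset.mem_union.1 hvX with h | h
          · obtain ⟨j, hj, hh⟩ := Finset.mem_biUnion.1 h
            exact st.out _ hB _ hv (Finset.mem_filter.1 hh).1
          · obtain ⟨E, hE, hh⟩ := Finset.mem_biUnion.1 h
            exact hnot E hE (Finset.mem_sdiff.1 hh).1
        · rw [if_neg]
          intro hvi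
          obtain ⟨i, hi, rfl⟩ := Finset.mem_image.1 hvi
          exact hnot _ (Finset.mem_image_of_mem _ hi) (hpt i)
      · have hE : E ∈ J' := by simpa using hk
        obtain ⟨i, hi, rfl⟩ := Finset.mem_image.1 hE
        have hi' : pt i ∈ inv := Finset.mem_image_of_mem _ hi
        refine ⟨pt i, hinvX _ hi', ?_⟩
        simp only [hi', if_true]
        rw [hf1 _ (h𝓔 i.1.2) _ (hpt i)]
  obtain ⟨σ, hσ, hσt⟩ := (Finset.all_card_le_biUnion_card_iff_exists_injective t).1 hall
  have h1 : ∀ i, σ i ∈ S ∧ σ i ∉ X0 ∧ G.Adj (σ i) (pt i) := by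
    intro i
    have := hσt i
    simp only [t, N, Finset.mem_sdiff, Finset.mem_filter] at this
    tauto
  refine ⟨σ, hσ, fun i => (h1 i).1, fun i => (h1 i).2.1, fun E => ?_, fun E => ?_⟩
  · simpa [pt] using (h1 (E, true)).2.2
  · simpa [pt] using (h1 (E, false)).2.2

lemma Setup.exists_edge [Fintype V] {G : SimpleGraph V} {S : Finset V} {𝒞 : Finset (Finset V)}
    (st : Setup G S 𝒞) {E : Finset V} (hE : E ∈ 𝒞) (h2 : 2 ≤ E.card) :
    ∃ p ∈ E, ∃ q ∈ E, p ≠ q ∧ G.Adj p q := by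
  obtain ⟨p, hp, q, hq, hpq⟩ := Finset.one_lt_card.1 h2
  exact ⟨p, hp, q, hq, hpq, st.clique E hE p hp q hq hpq⟩

/-- Every vertex of `S` has a neighbour in every nontrivial class. -/
lemma Setup.F1 [Fintype V] {G : SimpleGraph V} {S : Finset V} {𝒞 : Finset (Finset V)}
    (st : Setup G S 𝒞) {E : Finset V} (hE : E ∈ 𝒞) (h2 : 2 ≤ E.card) {x : V} (hx : x ∈ S) :
    ∃ v ∈ E, G.Adj x v := by
  by_contra hcon
  push Not at hcon
  obtain ⟨p, hp, q, hq, hpq, hadj⟩ := st.exists_edge hE h2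
  have key : ∀ F ∈ 𝒞, F ≠ E → ∀ v ∈ F, ∀ r ∈ E, ¬ G.Adj r v :=
    fun F hF hFE v hv r hr h => hFE (st.same E hE F hF r hr v hv h).symm
  obtain ⟨a, b, ha, hb, h⟩ := st.min x hx
  obtain ⟨Fa, hFa, haF⟩ := st.cover a ha
  obtain ⟨Fb, hFb, hbF⟩ := st.cover b hb
  have hxa : G.Adj x a := by tauto
  have hFaE : Fa ≠ E := fun h => hcon a (h ▸ haF) hxa
  rcases h with ⟨h1, h3, h4, h5⟩ | ⟨h1, h3, h4⟩
  · have hFbE : Fb ≠ E := fun h => hcon b (h ▸ hbF) h3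
    exact p2p3 st.free hadj h1.symm h3 h4 h5 (key Fa hFa hFaE a haF p hp)
      (fun h => hcon p hp h.symm) (key Fb hFb hFbE b hbF p hp)
      (key Fa hFa hFaE a haF q hq) (fun h => hcon q hq h.symm) (key Fb hFb hFbE b hbF q hq)
  · have hFbE : Fb ≠ E := fun h => hFaE ((st.same Fa hFa Fb hFb a haF b hbF h3).trans h)
    have hne : x ≠ b := fun h => hb (h ▸ hx)
    exact p2p3 st.free hadj h1 h3 hne h4 (fun h => hcon p hp h.symm) (key Fa hFa hFaE a haF p hp)
      (key Fb hFb hFbE b hbF p hp)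
      (fun h => hcon q hq h.symm) (key Fa hFa hFaE a haF q hq)  (key Fb hFb hFbE b hbF q hq)

/-- Structure forced by a vertex of `S` missing an edge of a class. -/
lemma Setup.F2 [Fintype V] {G : SimpleGraph V} {S : Finset V} {𝒞 : Finset (Finset V)}
    (st : Setup G S 𝒞) {E : Finset V} (hE : E ∈ 𝒞) {x y z : V} (hx : x ∈ S) (hy : y ∈ E) (hz : z ∈ E)
    (hyz : y ≠ z) (hxy : ¬ G.Adj x y) (hxz : ¬ G.Adj x z) :
    ∃ E' ∈ 𝒞, E' ≠ E ∧ 2 ≤ E'.card ∧ (∀ v ∈ E', G.Adj x v) ∧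
      ∀ F ∈ 𝒞, F ≠ E → F ≠ E' → F.card ≤ 1 ∧ ∀ v ∈ F, ¬ G.Adj x v := by
  have hadj := st.clique E hE y hy z hz hyz
  have key : ∀ F ∈ 𝒞, F ≠ E → ∀ v ∈ F, ∀ r ∈ E, ¬ G.Adj r v :=
    fun F hF hFE v hv r hr h => hFE (st.same E hE F hF r hr v hv h).symm
  have hyx : ¬ G.Adj y x := fun h => hxy h.symm
  have hzx : ¬ G.Adj z x := fun h => hxz h.symm
  -- neighbours lie in one class
  have one : ∀ F ∈ 𝒞, ∀ F' ∈ 𝒞, F ≠ E → F' ≠ E → ∀ a ∈ F, ∀ b ∈ F', G.Adj x a → G.Adj x b → F = F' := by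
    intro F hF F' hF' h1 h2 a ha b hb hxa hxb
    by_contra hne
    refine p2p3 st.free hadj hxa.symm hxb ?_ (fun h => hne (st.same F hF F' hF' a ha b hb h))
      (key F hF h1 a ha y hy) hyx (key F' hF' h2 b hb y hy)
      (key F hF h1 a ha z hz) hzx (key F' hF' h2 b hb z hz)
    rintro rfl
    exact hne (st.disj F hF F' hF' a ha hb)
  have full : ∀ F ∈ 𝒞, F ≠ E → ∀ a ∈ F, G.Adj x a → ∀ b ∈ F, G.Adj x b := by
    intro F hF h1 a ha hxa b hb
    by_contra hxb
    have hab : a ≠ b := by rintro rfl; exact hxb hxa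
    exact p2p3 st.free hadj hxa (st.clique F hF a ha b hb hab)
      (by rintro rfl; exact st.out F hF x hb hx) hxb hyx (key F hF h1 a ha y hy)
      (key F hF h1 b hb y hy) hzx (key F hF h1 a ha z hz) (key F hF h1 b hb z hz)
  have ⟨E', hE', hEE', h2⟩ : ∃ E' ∈ 𝒞, E' ≠ E ∧ 2 ≤ E'.card := by
    obtain ⟨A, hA, B, hB, hAB, h1, h2⟩ := st.two
    by_cases h : A = E
    · exact ⟨B, hB, fun h' => hAB (h.trans h'.symm), h2⟩
    · exact ⟨A, hA, h, h1⟩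
  obtain ⟨v, hv, hxv⟩ := st.F1 hE' h2 hx
  refine ⟨E', hE', hEE', h2, full E' hE' hEE' v hv hxv, ?_⟩
  intro F hF h3 h4
  constructor
  · by_contra hc
    obtain ⟨v', hv', hxv'⟩ := st.F1 hF (by omega) hx
    exact h4 (one F hF E' hE' h3 hEE' v' hv' v hv hxv' hxv)
  · intro v' hv' hxv'
    exact h4 (one F hF E' hE' h3 hEE' v' hv' v hv hxv' hxv)

/-- `x` misses no edge outside `S`. -/
def NB (G : SimpleGraph V) (𝒞 : Finset (Finset V)) (x : V) : Prop :=
  ∀ E ∈ 𝒞, ∀ y ∈ E, ∀ z ∈ E, y ≠ z → G.Adj x y ∨ G.Adj x z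

lemma Setup.c2 [Fintype V] {G : SimpleGraph V} {S : Finset V} {𝒞 : Finset (Finset V)}
    (st : Setup G S 𝒞) : 2 ≤ 𝒞.card := by
  obtain ⟨A, hA, B, hB, hAB, _, _⟩ := st.two
  exact Finset.one_lt_card.2 ⟨A, hA, B, hB, hAB⟩

lemma Setup.c15 [Fintype V] {G : SimpleGraph V} {S : Finset V} {𝒞 : Finset (Finset V)}
    (st : Setup G S 𝒞) : 15 * 𝒞.card ≤ S.card := by
  obtain ⟨f, hf1, hf2⟩ := st.clsof
  apply tough_map st.tough f S 𝒞 st.c2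
  · intro a b ha hb hab
    have h1 := hf2 a ha
    have h2 := hf2 b hb
    exact st.same _ h1.1 _ h2.1 _ h1.2 _ h2.2 hab
  · intro E hE
    obtain ⟨v, hv⟩ := st.ne E hE
    exact ⟨v, st.out E hE v hv, hf1 E hE v hv⟩

lemma Setup.pd [Fintype V] {G : SimpleGraph V} {S : Finset V} {𝒞 : Finset (Finset V)}
    (st : Setup G S 𝒞) : ((𝒞 : Set (Finset V))).PairwiseDisjoint id := by
  classical
  intro E hE F hF hEF
  rw [Function.onFun, Finset.disjoint_left]
  intro a ha hb
  exact hEF (st.disj E hE F hF a ha hb)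

lemma Setup.sum [Fintype V] {G : SimpleGraph V} {S : Finset V} {𝒞 : Finset (Finset V)}
    (st : Setup G S 𝒞) : (∑ E ∈ 𝒞, E.card) + S.card = Fintype.card V := by
  classical
  have h : 𝒞.biUnion id = Sᶜ := by
    ext v
    simp only [Finset.mem_biUnion, id, Finset.mem_compl]
    exact ⟨fun ⟨E, hE, hv⟩ => st.out E hE v hv, fun hv => st.cover v hv⟩
  have h1 := Finset.card_biUnion (s := 𝒞) (t := id) st.pd
  rw [h, Finset.card_compl] at h1
  have h2 := Finset.card_le_univ S
  simp only [id] at h1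
  omega

lemma Setup.G2 [Fintype V] {G : SimpleGraph V} {S : Finset V} {𝒞 : Finset (Finset V)}
    (st : Setup G S 𝒞) {u w : V} (hu : NB G 𝒞 u) (hw : NB G 𝒞 w) :
    ∃ C : Finset V, (∀ v ∈ C, (∃ E ∈ 𝒞, v ∈ E ∧ 3 ≤ E.card) ∧ G.Adj u v ∧ G.Adj w v) ∧
      Fintype.card V < 16 * C.card := by
  classical
  let g : Finset V → Finset V := fun E =>
    if 3 ≤ E.card then E.filter (fun v => G.Adj u v ∧ G.Adj w v) else ∅
  refine ⟨𝒞.biUnion g, ?_, ?_⟩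
  · intro v hv
    obtain ⟨E, hE, hv⟩ := Finset.mem_biUnion.1 hv
    simp only [g] at hv
    split_ifs at hv with h
    · rw [Finset.mem_filter] at hv
      exact ⟨⟨E, hE, hv.1, h⟩, hv.2⟩
    · simp at hv
  · have hsub : ∀ E, g E ⊆ E := by
      intro E
      simp only [g]
      split_ifs
      · exact Finset.filter_subset _ _
      · simp
    have h1 : (𝒞.biUnion g).card = ∑ E ∈ 𝒞, (g E).card := by
      apply Finset.card_biUnion
      intro E hE F hF hEF
      exact (st.pd hE hF hEF).mono (hsub E) (hsub F)
    have hone : ∀ x, NB G 𝒞 x → ∀ E ∈ 𝒞, (E.filter (fun v => ¬ G.Adj x v)).card ≤ 1 := by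
      intro x hx E hE
      rw [Finset.card_le_one]
      intro a ha b hb
      rw [Finset.mem_filter] at ha hb
      by_contra hab
      rcases hx E hE a ha.1 b hb.1 hab with h | h
      · exact ha.2 h
      · exact hb.2 h
    have h2 : ∀ E ∈ 𝒞, E.card ≤ (g E).card + 2 := by
      intro E hE
      simp only [g]
      split_ifs with h
      · have e1 := hone u hu E hE
        have e2 := hone w hw E hE
        have e3 : E ⊆ (E.filter (fun v => G.Adj u v ∧ G.Adj w v)) ∪
            (E.filter (fun v => ¬ G.Adj u v) ∪ E.filter (fun v => ¬ G.Adj w v)) := by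
          intro v hv
          simp only [Finset.mem_union, Finset.mem_filter]
          tauto
        have e4 := Finset.card_le_card e3
        have e5 := Finset.card_union_le (E.filter (fun v => G.Adj u v ∧ G.Adj w v))
            (E.filter (fun v => ¬ G.Adj u v) ∪ E.filter (fun v => ¬ G.Adj w v))
        have e6 := Finset.card_union_le (E.filter (fun v => ¬ G.Adj u v)) (E.filter (fun v => ¬ G.Adj w v))
        omega
      · omega
    have h3 := Finset.sum_le_sum h2
    rw [Finset.sum_add_distrib, Finset.sum_const, smul_eq_mul, ← h1] at h3
    have := st.c2
    have := st.c15
    have := st.sum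
    have := st.card
    omega

lemma clique_list [DecidableEq V] {G : SimpleGraph V} {B : Finset V}
    (hB : ∀ a ∈ B, ∀ b ∈ B, a ≠ b → G.Adj a b) {a a' : V} (ha : a ∈ B) (ha' : a' ∈ B) (hne : a ≠ a') :
    ∃ l : List V, l.Nodup ∧ l.toFinset = B ∧ l.IsChain G.Adj ∧ l.head? = some a ∧
      l.getLast? = some a' := by
  have hnd : (a :: (((B.erase a).erase a').toList ++ [a'])).Nodup := by
    rw [List.nodup_cons, List.nodup_append]
    refine ⟨by simp [hne], Finset.nodup_toList _, by simp, ?_⟩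
    intro x hx y hy
    simp at hx hy
    rw [hy]; exact hx.1
  have hset : (a :: (((B.erase a).erase a').toList ++ [a'])).toFinset = B := by
    ext x
    simp
    by_cases h1 : x = a
    · simp [h1, ha]
    · by_cases h2 : x = a'
      · simp [h2, ha']
      · simp [h1, h2]
  refine ⟨_, hnd, hset, ?_, rfl, ?_⟩
  · apply List.Pairwise.isChain
    refine List.Pairwise.imp_of_mem ?_ hnd
    intro x y hx hy hxy
    exact hB x (hset ▸ List.mem_toFinset.2 hx) y (hset ▸ List.mem_toFinset.2 hy) hxy
  · rw [← List.cons_append, List.getLast?_append]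
    simp

lemma two_ends {G : SimpleGraph V} {𝒞 : Finset (Finset V)} {u w : V} (hu : NB G 𝒞 u) (hw : NB G 𝒞 w)
    {B : Finset V} (hB : B ∈ 𝒞) (h3 : 3 ≤ B.card) :
    ∃ a ∈ B, ∃ a' ∈ B, a ≠ a' ∧ G.Adj u a ∧ G.Adj w a' := by
  classical
  obtain ⟨p, hp, q, hq, r, hr, h1, h2, h3⟩ := Finset.two_lt_card.1 h3
  have u1 := hu B hB p hp q hq h1
  have u2 := hu B hB p hp r hr h2
  have u3 := hu B hB q hq r hr h3
  have w1 := hw B hB p hp q hq h1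
  have w2 := hw B hB p hp r hr h2
  have w3 := hw B hB q hq r hr h3
  by_cases hp' : G.Adj u p
  · by_cases hwq : G.Adj w q
    · exact ⟨p, hp, q, hq, h1, hp', hwq⟩
    · exact ⟨p, hp, r, hr, h2, hp', by tauto⟩
  · have hq' : G.Adj u q := by tauto
    by_cases hwp : G.Adj w p
    · exact ⟨q, hq, p, hp, h1.symm, hq', hwp⟩
    · exact ⟨q, hq, r, hr, h3, hq', by tauto⟩

lemma Setup.blk [Fintype V] [DecidableEq V] {G : SimpleGraph V} {S : Finset V} {𝒞 : Finset (Finset V)}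
    (st : Setup G S 𝒞) {u w : V} (hu : NB G 𝒞 u) (hw : NB G 𝒞 w)
    {B : Finset V} (hB : B ∈ 𝒞) (h3 : 3 ≤ B.card) :
    ∃ l : List V, l.Nodup ∧ l.toFinset = B ∧ l.IsChain G.Adj ∧ (∀ a ∈ l.head?, G.Adj u a) ∧
      (∀ a ∈ l.getLast?, G.Adj a w) := by
  obtain ⟨a, ha, a', ha', hne, h1, h2⟩ := two_ends hu hw hB h3
  obtain ⟨l, e1, e2, e3, e4, e5⟩ := clique_list (st.clique B hB) ha ha' hne
  refine ⟨l, e1, e2, e3, ?_, ?_⟩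
  · intro b hb
    rw [e4] at hb
    simp at hb
    exact hb ▸ h1
  · intro b hb
    rw [e5] at hb
    simp at hb
    exact hb ▸ h2.symm

lemma Setup.bigpath [Fintype V] [DecidableEq V] {G : SimpleGraph V} {S : Finset V} {𝒞 : Finset (Finset V)}
    (st : Setup G S 𝒞) (hnb : ∀ x ∈ S, NB G 𝒞 x) (x : Finset V → V) (y : V) (hy : y ∈ S)
    (𝓑 : Finset (Finset V)) (h𝓑 : ∀ B ∈ 𝓑, B ∈ 𝒞 ∧ 3 ≤ B.card ∧ x B ∈ S)
    (hinj : ∀ B ∈ 𝓑, ∀ B' ∈ 𝓑, x B = x B' → B = B') :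
    ∃ l : List V, l.Nodup ∧ l.toFinset = 𝓑.biUnion id ∪ 𝓑.image x ∧ (l ++ [y]).IsChain G.Adj ∧
      ∃ h ∈ S, (l ++ [y]).head? = some h := by
  induction 𝓑 using Finset.induction_on with
  | empty => exact ⟨[], by simp, by simp, by simp, y, hy, by simp⟩
  | insert B 𝓑 hB ih =>
    obtain ⟨l, h1, h2, h3, h, hh, h4⟩ := ih (fun C hC => h𝓑 C (Finset.mem_insert_of_mem hC))
      (fun C hC C' hC' => hinj C (Finset.mem_insert_of_mem hC) C' (Finset.mem_insert_of_mem hC'))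
    obtain ⟨hB1, hB2, hB3⟩ := h𝓑 B (Finset.mem_insert_self _ _)
    obtain ⟨b, e1, e2, e3, e4, e5⟩ := st.blk (hnb _ hB3) (hnb _ hh) hB1 hB2
    have hmemb : ∀ v, v ∈ b ↔ v ∈ B := by
      intro v; rw [← e2, List.mem_toFinset]
    have hmeml : ∀ v, v ∈ l ↔ (∃ C ∈ 𝓑, v ∈ C) ∨ ∃ C ∈ 𝓑, x C = v := by
      intro v; rw [← List.mem_toFinset, h2]; simp
    have hout : ∀ C ∈ insert B 𝓑, ∀ C' ∈ insert B 𝓑, x C ∉ C' := by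
      intro C hC C' hC' hx
      exact st.out C' (h𝓑 C' hC').1 _ hx (h𝓑 C hC).2.2
    refine ⟨x B :: (b ++ l), ?_, ?_, ?_, x B, hB3, by simp⟩
    · rw [List.nodup_cons, List.nodup_append]
      refine ⟨?_, e1, h1, ?_⟩
      · rw [List.mem_append, hmemb, hmeml]
        rintro (hx | ⟨C, hC, hx⟩ | ⟨C, hC, hx⟩)
        · exact hout _ (Finset.mem_insert_self _ _) _ (Finset.mem_insert_self _ _) hx
        · exact hout _ (Finset.mem_insert_self _ _) _ (Finset.mem_insert_of_mem hC) hx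
        · have := hinj _ (Finset.mem_insert_of_mem hC) _ (Finset.mem_insert_self _ _) hx
          exact hB (this ▸ hC)
      · intro v hv w hw hvw
        subst hvw
        rw [hmemb] at hv
        rw [hmeml] at hw
        rcases hw with ⟨C, hC, hx⟩ | ⟨C, hC, hx⟩
        · have := st.disj _ hB1 _ (h𝓑 C (Finset.mem_insert_of_mem hC)).1 v hv hx
          exact hB (this ▸ hC)
        · exact hout _ (Finset.mem_insert_of_mem hC) _ (Finset.mem_insert_self _ _) (hx ▸ hv)
    · ext v
      simp only [List.mem_toFinset, List.mem_cons, List.mem_append, hmemb, hmeml, Finset.mem_union,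
        Finset.mem_biUnion, Finset.mem_image, Finset.mem_insert, id, exists_eq_or_imp]
      rw [eq_comm]
      generalize (x B = v) = p1
      generalize (∃ C ∈ 𝓑, v ∈ C) = p2
      generalize (∃ C ∈ 𝓑, x C = v) = p3
      generalize (v ∈ B) = p4
      clear * -
      tauto
    · rw [List.cons_append, List.append_assoc, List.isChain_cons, List.isChain_append]
      refine ⟨?_, e3, h3, ?_⟩
      · intro v hv
        apply e4
        have : b ≠ [] := by
          rintro rfl
          simp at e2
          rw [← e2] at hB2
          simp at hB2
        cases b with
        | nil => exact absurd rfl this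
        | cons c b => simpa using hv
      · intro v hv w hw
        rw [h4] at hw
        simp at hw
        exact hw ▸ e5 v hv

lemma ends_of_small [DecidableEq V] {E : Finset V} (h1 : E.Nonempty) (h2 : E.card ≤ 2) :
    ∃ a b, ∀ x, x ∈ E ↔ x = a ∨ x = b := by
  have h3 := Finset.card_pos.2 h1
  rcases (show E.card = 1 ∨ E.card = 2 by omega) with h | h
  · obtain ⟨a, rfl⟩ := Finset.card_eq_one.1 h
    exact ⟨a, a, by simp⟩
  · obtain ⟨a, b, _, rfl⟩ := Finset.card_eq_two.1 h
    exact ⟨a, b, by simp⟩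

lemma Setup.ends [Fintype V] [DecidableEq V] {G : SimpleGraph V} {S : Finset V} {𝒞 : Finset (Finset V)}
    (st : Setup G S 𝒞) : ∃ a b : Finset V → V, ∀ E ∈ 𝒞, E.card ≤ 2 → ∀ x, x ∈ E ↔ x = a E ∨ x = b E := by
  obtain ⟨E0, hE0, _⟩ := st.two
  have : Nonempty V := ⟨(st.ne E0 hE0).choose⟩
  have h : ∀ E, ∃ p : V × V, E ∈ 𝒞 → E.card ≤ 2 → ∀ x, x ∈ E ↔ x = p.1 ∨ x = p.2 := by
    intro E
    by_cases h1 : E ∈ 𝒞 ∧ E.card ≤ 2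
    · obtain ⟨a, b, h⟩ := ends_of_small (st.ne E h1.1) h1.2
      exact ⟨(a, b), fun _ _ => h⟩
    · exact ⟨Classical.arbitrary _, fun h2 h3 => absurd ⟨h2, h3⟩ h1⟩
  choose p hp using h
  exact ⟨fun E => (p E).1, fun E => (p E).2, hp⟩

theorem Setup.caseNB [Fintype V] [DecidableEq V] {G : SimpleGraph V} {S : Finset V}
    {𝒞 : Finset (Finset V)} (st : Setup G S 𝒞) (hnb : ∀ x ∈ S, NB G 𝒞 x) : G.IsHamiltonian := by
  have c2 := st.c2
  have c15 := st.c15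
  have csum := st.sum
  have ccard := st.card
  obtain ⟨a, b, hab⟩ := st.ends
  let 𝓔 := 𝒞.filter (fun E => E.card ≤ 2)
  let 𝓑 := 𝒞.filter (fun E => ¬ E.card ≤ 2)
  have hEB : 𝓔.card + 𝓑.card = 𝒞.card := Finset.card_filter_add_card_filter_not _
  obtain ⟨B, hB⟩ : 𝓑.Nonempty := by
    by_contra h
    rw [Finset.not_nonempty_iff_eq_empty, Finset.filter_eq_empty_iff] at h
    have := Finset.sum_le_card_nsmul 𝒞 (fun E => E.card) 2 (fun E hE => not_not.1 (h hE))
    rw [smul_eq_mul] at this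
    omega
  have hB' := Finset.mem_filter.1 hB
  obtain ⟨σ, hσ, hσS, _, hσa, hσb⟩ := st.hall 𝓔 (Finset.filter_subset _ _) a b
    (fun E hE => hab E (Finset.mem_filter.1 hE).1 (Finset.mem_filter.1 hE).2) B hB'.1
    (fun h => hB'.2 (Finset.mem_filter.1 h).2) ∅ (by simp)
  let U := S \ Finset.univ.image σ
  have hU : 𝓑.card ≤ U.card := by
    have h1 := Finset.le_card_sdiff (Finset.univ.image σ) S
    have h2 : (Finset.univ.image σ).card ≤ 2 * 𝓔.card := by
      refine Finset.card_image_le.trans ?_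
      simp [Fintype.card_prod]
      omega
    show 𝓑.card ≤ (S \ Finset.univ.image σ).card
    omega
  obtain ⟨e⟩ := Function.Embedding.nonempty_of_card_le (α := 𝓑) (β := U) (by simpa using hU)
  let x : Finset V → V := fun E => if h : E ∈ 𝓑 then e ⟨E, h⟩ else a E
  have hxU : ∀ E ∈ 𝓑, x E ∈ U := by
    intro E hE
    simp only [x, hE, dif_pos]
    exact (e ⟨E, hE⟩).2
  have hxi : ∀ E ∈ 𝓑, ∀ F ∈ 𝓑, x E = x F → E = F := by
    intro E hE F hF h
    simp only [x, hE, hF, dif_pos] at h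
    simpa using e.injective (Subtype.ext h)
  have hxS : ∀ E ∈ 𝓑, x E ∈ S := fun E hE => (Finset.mem_sdiff.1 (hxU E hE)).1
  have h𝓑 : ∀ E ∈ 𝓑, E ∈ 𝒞 ∧ 3 ≤ E.card := by
    intro E hE
    have := Finset.mem_filter.1 hE
    exact ⟨this.1, by omega⟩
  obtain ⟨l, h1, h2, h3, h, hh, h4⟩ := st.bigpath hnb x (x B) (hxS B hB) (𝓑.erase B)
    (fun E hE => ⟨(h𝓑 E (Finset.mem_of_mem_erase hE)).1, (h𝓑 E (Finset.mem_of_mem_erase hE)).2,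
      hxS E (Finset.mem_of_mem_erase hE)⟩)
    (fun E hE F hF => hxi E (Finset.mem_of_mem_erase hE) F (Finset.mem_of_mem_erase hF))
  obtain ⟨bl, e1, e2, e3, e4, e5⟩ := st.blk (hnb _ (hxS B hB)) (hnb _ hh) hB'.1 (h𝓑 B hB).2
  have hmemb : ∀ v, v ∈ bl ↔ v ∈ B := by
    intro v; rw [← e2, List.mem_toFinset]
  have hmeml : ∀ v, v ∈ l ↔ (∃ C ∈ 𝓑.erase B, v ∈ C) ∨ ∃ C ∈ 𝓑.erase B, x C = v := by
    intro v; rw [← List.mem_toFinset, h2]; simp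
  have hout : ∀ C ∈ 𝓑, ∀ C' ∈ 𝓑, x C ∉ C' := by
    intro C hC C' hC' hx
    exact st.out C' (h𝓑 C' hC').1 _ hx (hxS C hC)
  have hblne : bl ≠ [] := by
    rintro rfl
    simp at e2
    rw [← e2] at hB'
    simp at hB'
  have hcyc : HasCyc G (𝓑.biUnion id ∪ 𝓑.image x) := by
    refine ⟨l ++ [x B] ++ bl, ?_, ?_, ?_, ?_⟩
    · rw [List.append_assoc, List.nodup_append, List.singleton_append, List.nodup_cons]
      refine ⟨h1, ⟨?_, e1⟩, ?_⟩
      · rw [hmemb]; exact hout _ hB _ hB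
      · intro v hv w hw hvw
        subst hvw
        rw [hmeml] at hv
        rw [List.mem_cons, hmemb] at hw
        rcases hv with ⟨C, hC, hv⟩ | ⟨C, hC, hv⟩ <;> rcases hw with hw | hw
        · exact hout _ hB _ (Finset.mem_of_mem_erase hC) (hw ▸ hv)
        · have := st.disj _ (h𝓑 C (Finset.mem_of_mem_erase hC)).1 _ hB'.1 v hv hw
          exact Finset.ne_of_mem_erase hC this
        · exact Finset.ne_of_mem_erase hC (hxi _ (Finset.mem_of_mem_erase hC) _ hB (hv.trans hw))
        · exact hout _ (Finset.mem_of_mem_erase hC) _ hB (hv ▸ hw)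
    · ext v
      simp only [List.mem_toFinset, List.mem_cons, List.mem_append, hmemb, hmeml, Finset.mem_union,
        Finset.mem_biUnion, Finset.mem_image, Finset.mem_erase, id, List.not_mem_nil, or_false]
      constructor
      · rintro (((⟨C, hC, hv⟩ | ⟨C, hC, hv⟩) | hv) | hv)
        · exact Or.inl ⟨C, hC.2, hv⟩
        · exact Or.inr ⟨C, hC.2, hv⟩
        · exact Or.inr ⟨B, hB, hv.symm⟩
        · exact Or.inl ⟨B, hB, hv⟩
      · rintro (⟨C, hC, hv⟩ | ⟨C, hC, hv⟩)
        · by_cases hCB : C = B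
          · exact Or.inr (hCB ▸ hv)
          · exact Or.inl (Or.inl (Or.inl ⟨C, ⟨hCB, hC⟩, hv⟩))
        · by_cases hCB : C = B
          · exact Or.inl (Or.inr (hCB ▸ hv.symm))
          · exact Or.inl (Or.inl (Or.inr ⟨C, ⟨hCB, hC⟩, hv⟩))
    · rw [List.isChain_append]
      refine ⟨h3, e3, ?_⟩
      intro v hv w hw
      simp at hv
      exact hv ▸ e4 w hw
    · intro v hv w hw
      have h5 : w = h := by
        rw [List.head?_append, h4] at hw
        simpa using hw.symm
      rw [h5]
      apply e5
      rw [List.getLast?_append] at hv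
      rw [List.getLast?_eq_getLast_of_ne_nil hblne] at hv ⊢
      simpa using hv
  have hn : 16 ≤ Fintype.card V := by omega
  have hAmem : ∀ v, v ∈ 𝓑.biUnion id ∪ 𝓑.image x ↔ (∃ C ∈ 𝓑, v ∈ C) ∨ ∃ C ∈ 𝓑, x C = v := by
    intro v; simp
  refine st.finish hn _ hcyc 𝓔 (Finset.filter_subset _ _) a b
    (fun E hE => hab E (Finset.mem_filter.1 hE).1 (Finset.mem_filter.1 hE).2) ?_ ?_ σ hσ hσS ?_ hσa hσb ?_ ?_
  · intro v hv
    obtain ⟨E, hE, hvE⟩ := st.cover v hv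
    by_cases h : E.card ≤ 2
    · exact Or.inr ⟨E, Finset.mem_filter.2 ⟨hE, h⟩, hvE⟩
    · exact Or.inl ((hAmem v).2 (Or.inl ⟨E, Finset.mem_filter.2 ⟨hE, h⟩, hvE⟩))
  · intro E hE v hv hvA
    have hE' := Finset.mem_filter.1 hE
    rcases (hAmem v).1 hvA with ⟨C, hC, h⟩ | ⟨C, hC, h⟩
    · have := st.disj _ hE'.1 _ (h𝓑 C hC).1 v hv h
      rw [this] at hE'
      have := (h𝓑 C hC).2
      omega
    · exact st.out E hE'.1 v hv (h ▸ hxS C hC)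
  · intro i hi
    rcases (hAmem _).1 hi with ⟨C, hC, h⟩ | ⟨C, hC, h⟩
    · exact st.out C (h𝓑 C hC).1 _ h (hσS i)
    · have := (Finset.mem_sdiff.1 (hxU C hC)).2
      rw [h] at this
      exact this (Finset.mem_image_of_mem _ (Finset.mem_univ _))
  · intro E
    obtain ⟨C, hC, hc⟩ := st.G2 (hnb _ (hσS (E, true))) (hnb _ (hσS (E, false)))
    refine ⟨C, fun v hv => ⟨?_, (hC v hv).2⟩, hc⟩
    obtain ⟨F, hF, hvF, h3⟩ := (hC v hv).1
    exact (hAmem v).2 (Or.inl ⟨F, Finset.mem_filter.2 ⟨hF, by omega⟩, hvF⟩)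
  · intro y hy _
    obtain ⟨C, hC, hc⟩ := st.G2 (hnb _ hy) (hnb _ hy)
    refine ⟨C, fun v hv => ⟨?_, (hC v hv).2.1⟩, hc⟩
    obtain ⟨F, hF, hvF, h3⟩ := (hC v hv).1
    exact (hAmem v).2 (Or.inl ⟨F, Finset.mem_filter.2 ⟨hF, by omega⟩, hvF⟩)

lemma two_equiv {S : Finset V} (R₁ R₂ : V → V → Prop)
    (s₁ : ∀ p q, R₁ p q → R₁ q p) (s₂ : ∀ p q, R₂ p q → R₂ q p)
    (t₁ : ∀ p ∈ S, ∀ q ∈ S, ∀ r ∈ S, R₁ p q → R₁ q r → R₁ p r)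
    (t₂ : ∀ p ∈ S, ∀ q ∈ S, ∀ r ∈ S, R₂ p q → R₂ q r → R₂ p r)
    (tot : ∀ p ∈ S, ∀ q ∈ S, R₁ p q ∨ R₂ p q)
    {x x' y y' : V} (hx : x ∈ S) (hx' : x' ∈ S) (hy : y ∈ S) (hy' : y' ∈ S)
    (h₁ : ¬ R₁ x x') (h₂ : ¬ R₂ y y') : False := by
  have key : ∀ z ∈ S, ¬ R₁ z y → False := by
    intro z hz hzy
    have e1 : R₂ z y := (tot z hz y hy).resolve_left hzy
    have e2 : ¬ R₂ z y' := fun h => h₂ (t₂ y hy z hz y' hy' (s₂ _ _ e1) h)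
    have e3 : R₁ z y' := (tot z hz y' hy').resolve_right e2
    have e4 : R₁ y y' := (tot y hy y' hy').resolve_right h₂
    exact hzy (t₁ z hz y' hy' y hy e3 (s₁ _ _ e4))
  by_cases h : R₁ x y
  · apply key x' hx'
    intro h'
    exact h₁ (t₁ x hx y hy x' hx' h (s₁ _ _ h'))
  · exact key x hx h

/-- All neighbours of `x` and `x'` in `D` coincide (or `x = x'`). -/
def Stuck (G : SimpleGraph V) (D : Finset V) (x x' : V) : Prop :=
  x = x' ∨ ∀ a ∈ D, ∀ a' ∈ D, G.Adj x a → G.Adj x' a' → a = a'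

lemma Stuck.symm {G : SimpleGraph V} {D : Finset V} {x x' : V} (h : Stuck G D x x') : Stuck G D x' x := by
  rcases h with rfl | h
  · exact Or.inl rfl
  · exact Or.inr fun a ha a' ha' h1 h2 => (h a' ha' a ha h2 h1).symm

lemma Setup.stuck_trans [Fintype V] {G : SimpleGraph V} {S : Finset V} {𝒞 : Finset (Finset V)}
    (st : Setup G S 𝒞) {D : Finset V} (hD : D ∈ 𝒞) (h2 : 2 ≤ D.card) :
    ∀ p ∈ S, ∀ q ∈ S, ∀ r ∈ S, Stuck G D p q → Stuck G D q r → Stuck G D p r := by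
  rintro p hp q hq r hr (rfl | h1) (rfl | h2')
  · exact Or.inl rfl
  · exact Or.inr h2'
  · exact Or.inr h1
  · refine Or.inr fun a ha a' ha' e1 e2 => ?_
    obtain ⟨b, hb, hqb⟩ := st.F1 hD h2 hq
    exact (h1 a ha b hb e1 hqb).trans (h2' b hb a' ha' hqb e2)

lemma Setup.not_stuck [Fintype V] [DecidableEq V] {G : SimpleGraph V} {S : Finset V} {𝒞 : Finset (Finset V)}
    (st : Setup G S 𝒞) {D : Finset V} (hD : D ∈ 𝒞) (h2 : 2 ≤ D.card) :
    ∃ x ∈ S, ∃ x' ∈ S, ¬ Stuck G D x x' := by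
  by_contra hcon
  push Not at hcon
  have c2 := st.c2
  have c15 := st.c15
  obtain ⟨x, hx, x', hx', hne⟩ := Finset.one_lt_card.1 (show 1 < S.card by omega)
  obtain ⟨a, ha, hxa⟩ := st.F1 hD h2 hx
  have hall : ∀ y ∈ S, ∀ v ∈ D, G.Adj y v → v = a := by
    intro y hy v hv hyv
    by_cases hyx : y = x
    · subst hyx
      obtain ⟨b, hb, hxb⟩ := st.F1 hD h2 hx'
      rcases hcon y hy x' hx' with h | h
      · exact absurd h hne
      · rw [h v hv b hb hyv hxb, h a ha b hb hxa hxb]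
    · rcases hcon y hy x hx with h | h
      · exact absurd h hyx
      · exact h v hv a ha hyv hxa
  have hcl : ∀ p q, p ∉ ({a} : Finset V) → p ∈ D → q ∉ ({a} : Finset V) → G.Adj p q → q ∈ D := by
    intro p q hp hpD hq hpq
    rw [Finset.mem_singleton] at hp hq
    by_cases hqS : q ∈ S
    · exact absurd (hall q hqS p hpD hpq.symm) hp
    · obtain ⟨F, hF, hqF⟩ := st.cover q hqS
      have := st.same D hD F hF p hpD q hqF hpq
      exact this ▸ hqF
  have := tough_map st.tough (fun v => decide (v ∈ D)) {a} Finset.univ (by simp) ?_ ?_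
  · simp at this
  · intro p q hp hq hpq
    have h1 := hcl p q hp
    have h2 := hcl q p hq
    by_cases h3 : p ∈ D
    · simp [h3, h1 h3 hq hpq]
    · by_cases h4 : q ∈ D
      · exact absurd (h2 h4 hp hpq.symm) h3
      · simp [h3, h4]
  · intro k _
    cases k
    · refine ⟨x, ?_, ?_⟩
      · rw [Finset.mem_singleton]
        rintro rfl
        exact st.out D hD x ha hx
      · simp only [decide_eq_false_iff_not]
        exact fun h => st.out D hD x h hx
    · obtain ⟨v, hv, hva⟩ := Finset.exists_mem_ne h2 a
      exact ⟨v, by simpa using hva, by simpa using hv⟩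

lemma Setup.links [Fintype V] [DecidableEq V] {G : SimpleGraph V} {S : Finset V} {𝒞 : Finset (Finset V)}
    (st : Setup G S 𝒞) {D₁ D₂ : Finset V} (hD₁ : D₁ ∈ 𝒞) (h₁ : 2 ≤ D₁.card)
    (hD₂ : D₂ ∈ 𝒞) (h₂ : 2 ≤ D₂.card) :
    ∃ x ∈ S, ∃ x' ∈ S, x ≠ x' ∧ (∃ a ∈ D₁, ∃ a' ∈ D₁, a ≠ a' ∧ G.Adj x a ∧ G.Adj x' a') ∧
      (∃ b ∈ D₂, ∃ b' ∈ D₂, b ≠ b' ∧ G.Adj x b ∧ G.Adj x' b') := by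
  obtain ⟨x, hx, x', hx', e1⟩ := st.not_stuck hD₁ h₁
  obtain ⟨y, hy, y', hy', e2⟩ := st.not_stuck hD₂ h₂
  by_contra hcon
  refine two_equiv (S := S) (Stuck G D₁) (Stuck G D₂) (fun _ _ => Stuck.symm) (fun _ _ => Stuck.symm)
    (st.stuck_trans hD₁ h₁) (st.stuck_trans hD₂ h₂) ?_ hx hx' hy hy' e1 e2
  intro p hp q hq
  by_contra hn
  rw [not_or] at hn
  obtain ⟨n1, n2⟩ := hn
  apply hcon
  simp only [Stuck, not_or] at n1 n2
  obtain ⟨hpq, n1⟩ := n1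
  obtain ⟨_, n2⟩ := n2
  push Not at n1 n2
  obtain ⟨a, ha, a', ha', g1, g2, g3⟩ := n1
  obtain ⟨b, hb, b', hb', g4, g5, g6⟩ := n2
  exact ⟨p, hp, q, hq, hpq, ⟨a, ha, a', ha', g3, g1, g2⟩, ⟨b, hb, b', hb', g6, g4, g5⟩⟩

theorem Setup.caseBad [Fintype V] [DecidableEq V] {G : SimpleGraph V} {S : Finset V}
    {𝒞 : Finset (Finset V)} (st : Setup G S 𝒞) {D₁ D₂ : Finset V} (hD₁ : D₁ ∈ 𝒞) (hD₂ : D₂ ∈ 𝒞)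
    (hne : D₁ ≠ D₂) (h₁ : 2 ≤ D₁.card) (h₂ : 2 ≤ D₂.card) (hle : D₂.card ≤ D₁.card)
    (hrest : ∀ F ∈ 𝒞, F ≠ D₁ → F ≠ D₂ → F.card ≤ 1) : G.IsHamiltonian := by
  classical
  have c2 := st.c2
  have c15 := st.c15
  have csum := st.sum
  have ccard := st.card
  have hn : 16 ≤ Fintype.card V := by omega
  let 𝓔 := (𝒞.erase D₁).erase D₂
  have hD₂' : D₂ ∈ 𝒞.erase D₁ := Finset.mem_erase.2 ⟨hne.symm, hD₂⟩
  have h𝓔c : 𝓔.card + 2 = 𝒞.card := by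
    have e1 := Finset.card_erase_add_one hD₁
    have e2 := Finset.card_erase_add_one hD₂'
    show ((𝒞.erase D₁).erase D₂).card + 2 = _
    omega
  have h𝓔mem : ∀ F, F ∈ 𝓔 ↔ F ≠ D₂ ∧ F ≠ D₁ ∧ F ∈ 𝒞 := by
    intro F; simp [𝓔]
  have h𝓔 : 𝓔 ⊆ 𝒞 := fun F hF => ((h𝓔mem F).1 hF).2.2
  have hsum : (∑ E ∈ 𝒞, E.card) + 2 ≤ D₁.card + D₂.card + 𝒞.card := by
    have e1 := Finset.add_sum_erase 𝒞 (fun E => E.card) hD₁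
    have e2 := Finset.add_sum_erase (𝒞.erase D₁) (fun E => E.card) hD₂'
    have e3 := Finset.sum_le_card_nsmul 𝓔 (fun E => E.card) 1
      (fun E hE => by
        have := (h𝓔mem E).1 hE
        exact hrest E this.2.2 this.2.1 this.1)
    rw [smul_eq_mul] at e3
    simp only [𝓔] at e3 h𝓔c
    omega
  have hdis : ∀ v, v ∈ D₁ → v ∈ D₂ → False := fun v e1 e2 => hne (st.disj _ hD₁ _ hD₂ v e1 e2)
  -- badness analysis
  have hbad : ∀ x ∈ S, ¬ NB G 𝒞 x → (∀ F ∈ 𝓔, ∀ v ∈ F, ¬ G.Adj x v) ∧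
      ((∀ v ∈ D₂, G.Adj x v) ∨ (∀ v ∈ D₁, G.Adj x v)) := by
    intro x hx hnb
    simp only [NB] at hnb
    push Not at hnb
    obtain ⟨E, hE, y, hy, z, hz, hyz, hxy, hxz⟩ := hnb
    obtain ⟨E', hE', hEE', hc', hfull, hoth⟩ := st.F2 hE hx hy hz hyz hxy hxz
    have hEc : 2 ≤ E.card := Finset.one_lt_card.2 ⟨y, hy, z, hz, hyz⟩
    have hE12 : E = D₁ ∨ E = D₂ := by
      by_contra h
      rw [not_or] at h
      have := hrest E hE h.1 h.2
      omega
    have hE12' : E' = D₁ ∨ E' = D₂ := by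
      by_contra h
      rw [not_or] at h
      have := hrest E' hE' h.1 h.2
      omega
    refine ⟨?_, ?_⟩
    · intro F hF v hv
      have hF' := (h𝓔mem F).1 hF
      refine (hoth F hF'.2.2 ?_ ?_).2 v hv
      · rcases hE12 with h | h <;> rw [h]
        exacts [hF'.2.1, hF'.1]
      · rcases hE12' with h | h <;> rw [h]
        exacts [hF'.2.1, hF'.1]
    · rcases hE12' with h | h
      · right; exact h ▸ hfull
      · left; exact h ▸ hfull
  let ND : V → Finset V := fun y => (D₁ ∪ D₂).filter (fun v => G.Adj y v)
  let K := S.filter (fun y => 16 * (ND y).card ≤ Fintype.card V)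
  have hbigD : ∀ E ∈ 𝒞, 3 ≤ E.card → E = D₁ ∨ E = D₂ := by
    intro E hE h3
    by_contra h
    rw [not_or] at h
    have := hrest E hE h.1 h.2
    omega
  have hK : ∀ y ∈ K, y ∈ S ∧ (∀ F ∈ 𝓔, ∀ v ∈ F, ¬ G.Adj y v) ∧ (∀ v ∈ D₂, G.Adj y v) ∧
      16 * (ND y).card ≤ Fintype.card V := by
    intro y hy
    obtain ⟨hyS, hy16⟩ := Finset.mem_filter.1 hy
    have hnb : ¬ NB G 𝒞 y := by
      intro hnb
      obtain ⟨C, hC, hc⟩ := st.G2 hnb hnb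
      have : C ⊆ ND y := by
        intro v hv
        obtain ⟨⟨E, hE, hvE, h3⟩, hyv, _⟩ := hC v hv
        refine Finset.mem_filter.2 ⟨?_, hyv⟩
        rcases hbigD E hE h3 with rfl | rfl
        · exact Finset.mem_union_left _ hvE
        · exact Finset.mem_union_right _ hvE
      have := Finset.card_le_card this
      omega
    obtain ⟨b1, b2⟩ := hbad y hyS hnb
    refine ⟨hyS, b1, ?_, hy16⟩
    rcases b2 with h | h
    · exact h
    · have : D₁ ⊆ ND y := fun v hv => Finset.mem_filter.2 ⟨Finset.mem_union_left _ hv, h v hv⟩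
      have := Finset.card_le_card this
      omega
  have hKclique : ∀ y ∈ K, ∀ y' ∈ K, y ≠ y' → G.Adj y y' := by
    intro y hy y' hy' hyy'
    by_contra hnadj
    obtain ⟨hyS, -, hy2, hyc⟩ := hK y hy
    obtain ⟨hyS', -, hy2', hyc'⟩ := hK y' hy'
    obtain ⟨b, hb⟩ := st.ne D₂ hD₂
    have e1 : (D₁.filter (fun v => ¬ G.Adj y v ∧ ¬ G.Adj y' v)).card ≤ 1 := by
      rw [Finset.card_le_one]
      intro p hp q hq
      rw [Finset.mem_filter] at hp hq
      by_contra hpq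
      have hadj := st.clique D₁ hD₁ p hp.1 q hq.1 hpq
      exact p2p3 st.free hadj (hy2 b hb) (hy2' b hb).symm hyy' hnadj
        (fun h => hp.2.1 h.symm) (fun h => hne (st.same _ hD₁ _ hD₂ p hp.1 b hb h))
        (fun h => hp.2.2 h.symm)
        (fun h => hq.2.1 h.symm) (fun h => hne (st.same _ hD₁ _ hD₂ q hq.1 b hb h))
        (fun h => hq.2.2 h.symm)
    have e2 : ∀ w, (∀ v ∈ D₂, G.Adj w v) →
        (D₁.filter (fun v => G.Adj w v)).card + D₂.card ≤ (ND w).card := by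
      intro w hw
      rw [← Finset.card_union_of_disjoint]
      · apply Finset.card_le_card
        intro v hv
        simp only [ND, Finset.mem_filter, Finset.mem_union] at hv ⊢
        rcases hv with hv | hv
        · exact ⟨Or.inl hv.1, hv.2⟩
        · exact ⟨Or.inr hv, hw v hv⟩
      · rw [Finset.disjoint_left]
        intro v hv hv'
        exact hdis v (Finset.mem_filter.1 hv).1 hv'
    have f1 := e2 y hy2
    have f2 := e2 y' hy2'
    have e3 : D₁ ⊆ (D₁.filter (fun v => ¬ G.Adj y v ∧ ¬ G.Adj y' v)) ∪
        (D₁.filter (fun v => G.Adj y v) ∪ D₁.filter (fun v => G.Adj y' v)) := by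
      intro v hv
      simp only [Finset.mem_union, Finset.mem_filter]
      tauto
    have e4 := Finset.card_le_card e3
    have e5 := Finset.card_union_le (D₁.filter (fun v => ¬ G.Adj y v ∧ ¬ G.Adj y' v))
        (D₁.filter (fun v => G.Adj y v) ∪ D₁.filter (fun v => G.Adj y' v))
    have e6 := Finset.card_union_le (D₁.filter (fun v => G.Adj y v)) (D₁.filter (fun v => G.Adj y' v))
    omega
  obtain ⟨x, hx, x', hx', hxx', ⟨a, ha, a', ha', haa', hxa, hxa'⟩, ⟨b, hb, b', hb', hbb', hxb, hxb'⟩⟩ :=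
    st.links hD₁ h₁ hD₂ h₂
  let W := D₂ ∪ (K \ {x, x'})
  have hWmem : ∀ v, v ∈ W ↔ v ∈ D₂ ∨ (v ∈ K ∧ v ≠ x ∧ v ≠ x') := by
    intro v; simp [W]
  have hWc : ∀ p ∈ W, ∀ q ∈ W, p ≠ q → G.Adj p q := by
    intro p hp q hq hpq
    rw [hWmem] at hp hq
    rcases hp with hp | hp <;> rcases hq with hq | hq
    · exact st.clique D₂ hD₂ p hp q hq hpq
    · exact ((hK q hq.1).2.2.1 p hp).symm
    · exact (hK p hp.1).2.2.1 q hq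
    · exact hKclique p hp.1 q hq.1 hpq
  obtain ⟨l₁, p1, p2, p3, p4, p5⟩ := clique_list (st.clique D₁ hD₁) ha ha' haa'
  obtain ⟨l₂, q1, q2, q3, q4, q5⟩ := clique_list hWc ((hWmem b').2 (Or.inl hb'))
    ((hWmem b).2 (Or.inl hb)) hbb'.symm
  have hm1 : ∀ v, v ∈ l₁ ↔ v ∈ D₁ := by intro v; rw [← p2, List.mem_toFinset]
  have hm2 : ∀ v, v ∈ l₂ ↔ v ∈ W := by intro v; rw [← q2, List.mem_toFinset]
  have hSD : ∀ y ∈ S, y ∉ D₁ ∧ y ∉ D₂ := fun y hy =>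
    ⟨fun h => st.out _ hD₁ y h hy, fun h => st.out _ hD₂ y h hy⟩
  let A : Finset V := {x, x'} ∪ (D₁ ∪ W)
  have hAmem : ∀ v, v ∈ A ↔ (v = x ∨ v = x') ∨ v ∈ D₁ ∨ v ∈ W := by
    intro v; simp [A, or_assoc]
  have hcyc : HasCyc G A := by
    refine ⟨([x] ++ l₁) ++ ([x'] ++ l₂), ?_, ?_, ?_, ?_⟩
    · rw [List.nodup_append, List.singleton_append, List.singleton_append, List.nodup_cons,
        List.nodup_cons, hm1, hm2, hWmem]
      refine ⟨⟨(hSD x hx).1, p1⟩, ⟨?_, q1⟩, ?_⟩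
      · have := (hSD x' hx').2
        tauto
      · intro v hv w hw hvw
        subst hvw
        rw [List.mem_cons, hm1] at hv
        rw [List.mem_cons, hm2, hWmem] at hw
        rcases hv with rfl | hv
        · rcases hw with h | h | h
          · exact hxx' h
          · exact (hSD v hx).2 h
          · exact h.2.1 rfl
        · rcases hw with h | h | h
          · exact (hSD x' hx').1 (h ▸ hv)
          · exact hdis v hv h
          · exact (hSD v (hK v h.1).1).1 hv
    · ext v
      rw [hAmem]
      simp only [List.mem_toFinset, List.mem_append, List.mem_singleton, hm1, hm2]
      clear * -
      tauto
    · rw [List.isChain_append, List.isChain_append, List.isChain_append]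
      refine ⟨⟨by simp, p3, ?_⟩, ⟨by simp, q3, ?_⟩, ?_⟩
      · intro v hv w hw
        rw [p4] at hw
        simp at hv hw
        rw [← hv, ← hw]; exact hxa
      · intro v hv w hw
        rw [q4] at hw
        simp at hv hw
        rw [← hv, ← hw]; exact hxb'
      · intro v hv w hw
        rw [List.getLast?_append, p5] at hv
        simp at hv hw
        rw [← hv, ← hw]; exact hxa'.symm
    · intro v hv w hw
      rw [List.getLast?_append, List.getLast?_append, q5] at hv
      simp at hv hw
      rw [← hv, ← hw]; exact hxb.symm
  obtain ⟨ea, eb, hab⟩ := st.ends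
  have hab' : ∀ E ∈ 𝓔, ∀ x, x ∈ E ↔ x = ea E ∨ x = eb E := by
    intro E hE
    have hE' := (h𝓔mem E).1 hE
    have := hrest E hE'.2.2 hE'.2.1 hE'.1
    exact hab E hE'.2.2 (by omega)
  obtain ⟨σ, hσ, hσS, hσX, hσa, hσb⟩ := st.hall 𝓔 h𝓔 ea eb hab' D₁ hD₁
    (fun h => ((h𝓔mem _).1 h).2.1 rfl) {x, x'} Finset.card_le_two
  have hσadj : ∀ i, ∃ F ∈ 𝓔, ∃ v ∈ F, G.Adj (σ i) v := by
    rintro ⟨E, i⟩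
    cases i
    · exact ⟨E.1, E.2, eb E, (hab' E E.2 _).2 (Or.inr rfl), hσb E⟩
    · exact ⟨E.1, E.2, ea E, (hab' E E.2 _).2 (Or.inl rfl), hσa E⟩
  have hσnb : ∀ i, NB G 𝒞 (σ i) := by
    intro i
    by_contra h
    obtain ⟨F, hF, v, hv, hadj⟩ := hσadj i
    exact (hbad _ (hσS i) h).1 F hF v hv hadj
  refine st.finish hn A hcyc 𝓔 h𝓔 ea eb hab' ?_ ?_ σ hσ hσS ?_ hσa hσb ?_ ?_
  · intro v hv
    obtain ⟨E, hE, hvE⟩ := st.cover v hv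
    by_cases e1 : E = D₁
    · exact Or.inl ((hAmem v).2 (Or.inr (Or.inl (e1 ▸ hvE))))
    · by_cases e2 : E = D₂
      · exact Or.inl ((hAmem v).2 (Or.inr (Or.inr ((hWmem v).2 (Or.inl (e2 ▸ hvE))))))
      · exact Or.inr ⟨E, (h𝓔mem E).2 ⟨e2, e1, hE⟩, hvE⟩
  · intro E hE v hv hvA
    have hE' := (h𝓔mem E).1 hE
    have hvS := st.out E hE'.2.2 v hv
    rw [hAmem, hWmem] at hvA
    rcases hvA with (h | h) | h | h | h
    · exact hvS (h ▸ hx)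
    · exact hvS (h ▸ hx')
    · exact hE'.2.1 (st.disj _ hE'.2.2 _ hD₁ v hv h)
    · exact hE'.1 (st.disj _ hE'.2.2 _ hD₂ v hv h)
    · exact hvS (hK v h.1).1
  · intro i hi
    have hiX := hσX i
    rw [Finset.mem_insert, Finset.mem_singleton] at hiX
    have := hSD _ (hσS i)
    obtain ⟨F, hF, v, hv, hadj⟩ := hσadj i
    rw [hAmem, hWmem] at hi
    rcases hi with h | h | h | h
    · exact hiX h
    · exact this.1 h
    · exact this.2 h
    · exact (hK _ h.1).2.1 F hF v hv hadj
  · intro E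
    obtain ⟨C, hC, hc⟩ := st.G2 (hσnb (E, true)) (hσnb (E, false))
    refine ⟨C, fun v hv => ⟨?_, (hC v hv).2⟩, hc⟩
    obtain ⟨F, hF, hvF, h3⟩ := (hC v hv).1
    rw [hAmem, hWmem]
    rcases hbigD F hF h3 with rfl | rfl
    · exact Or.inr (Or.inl hvF)
    · exact Or.inr (Or.inr (Or.inl hvF))
  · intro y hy hyA
    refine ⟨ND y, ?_, ?_⟩
    · intro v hv
      simp only [ND, Finset.mem_filter, Finset.mem_union] at hv
      rw [hAmem, hWmem]
      refine ⟨?_, hv.2⟩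
      rcases hv.1 with h | h
      · exact Or.inr (Or.inl h)
      · exact Or.inr (Or.inr (Or.inl h))
    · by_contra hlt
      have hyK : y ∈ K := Finset.mem_filter.2 ⟨hy, by omega⟩
      rw [hAmem, hWmem] at hyA
      tauto

/-! ### Reduction to the standing situation -/

theorem Setup.main [Fintype V] [DecidableEq V] {G : SimpleGraph V} {S : Finset V}
    {𝒞 : Finset (Finset V)} (st : Setup G S 𝒞) : G.IsHamiltonian := by
  by_cases hnb : ∀ x ∈ S, NB G 𝒞 x
  · exact st.caseNB hnb
  · simp only [NB] at hnb
    push Not at hnb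
    obtain ⟨x, hx, E, hE, y, hy, z, hz, hyz, hxy, hxz⟩ := hnb
    obtain ⟨E', hE', hne, h2, -, hrest⟩ := st.F2 hE hx hy hz hyz hxy hxz
    have hE2 : 2 ≤ E.card := Finset.one_lt_card.2 ⟨y, hy, z, hz, hyz⟩
    rcases le_total E.card E'.card with h | h
    · exact st.caseBad hE' hE hne h2 hE2 h (fun F hF h1 h3 => (hrest F hF h3 h1).1)
    · exact st.caseBad hE hE' hne.symm hE2 h2 h (fun F hF h1 h3 => (hrest F hF h1 h3).1)

/-- `V ∖ S` induces a disjoint union of cliques, two of which have an edge. -/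
def Good (G : SimpleGraph V) (S : Finset V) : Prop :=
  (∀ a b c, a ∉ S → b ∉ S → c ∉ S → G.Adj a b → G.Adj b c → a ≠ c → G.Adj a c) ∧
  ∃ p q p' q', p ∉ S ∧ q ∉ S ∧ p' ∉ S ∧ q' ∉ S ∧ G.Adj p q ∧ G.Adj p' q' ∧ p ≠ p' ∧ ¬ G.Adj p p'

lemma edge_of_comp [Fintype V] {G : SimpleGraph V} {S : Finset V}
    (D : (G.induce ((↑S : Set V)ᶜ)).ConnectedComponent)
    (hD : G.IsClique (Subtype.val '' D.supp)) (h2 : 2 ≤ (Subtype.val '' D.supp).ncard) :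
    ∃ p q : ((↑S : Set V)ᶜ : Set V), G.Adj p q ∧
      (G.induce ((↑S : Set V)ᶜ)).connectedComponentMk p = D ∧
      (G.induce ((↑S : Set V)ᶜ)).connectedComponentMk q = D := by
  obtain ⟨p, hp, q, hq, hpq⟩ := (Set.one_lt_ncard (Set.toFinite _)).1 h2
  have hadj := hD hp hq hpq
  obtain ⟨p, hp, rfl⟩ := hp
  obtain ⟨q, hq, rfl⟩ := hq
  exact ⟨p, q, hadj, hp, hq⟩

lemma comp_eq {G : SimpleGraph V} {S : Finset V} {p q : ((↑S : Set V)ᶜ : Set V)}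
    (h : G.Adj p q) : (G.induce ((↑S : Set V)ᶜ)).connectedComponentMk p =
      (G.induce ((↑S : Set V)ᶜ)).connectedComponentMk q := by
  apply SimpleGraph.ConnectedComponent.sound
  exact SimpleGraph.Adj.reachable (by simpa using h)

lemma good_of_cliques [Fintype V] {G : SimpleGraph V} (hfree : P2P3Free G) {S : Finset V}
    (hcliques : ∃ D1 D2 : (G.induce ((↑S : Set V)ᶜ)).ConnectedComponent, D1 ≠ D2 ∧
      G.IsClique (Subtype.val '' D1.supp) ∧ G.IsClique (Subtype.val '' D2.supp) ∧
      2 ≤ (Subtype.val '' D1.supp).ncard ∧ 2 ≤ (Subtype.val '' D2.supp).ncard) : Good G S := by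
  obtain ⟨D1, D2, hne, hc1, hc2, h1, h2⟩ := hcliques
  obtain ⟨p, q, hpq, hp, hq⟩ := edge_of_comp D1 hc1 h1
  obtain ⟨p', q', hpq', hp', hq'⟩ := edge_of_comp D2 hc2 h2
  constructor
  · intro a b c ha hb hc hab hbc hac
    by_contra hcon
    let a' : ((↑S : Set V)ᶜ : Set V) := ⟨a, by simpa using ha⟩
    let b' : ((↑S : Set V)ᶜ : Set V) := ⟨b, by simpa using hb⟩
    let c' : ((↑S : Set V)ᶜ : Set V) := ⟨c, by simpa using hc⟩
    have e1 := comp_eq (p := a') (q := b') hab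
    have e2 := comp_eq (p := b') (q := c') hbc
    by_cases hD : (G.induce ((↑S : Set V)ᶜ)).connectedComponentMk b' = D1
    · have key : ∀ r s : ((↑S : Set V)ᶜ : Set V),
          (G.induce ((↑S : Set V)ᶜ)).connectedComponentMk r = D2 →
          (G.induce ((↑S : Set V)ᶜ)).connectedComponentMk s = D1 → ¬ G.Adj r s := by
        intro r s hr hs h
        exact hne (hs.symm.trans ((comp_eq h).symm.trans hr))
      exact p2p3 hfree hpq' hab hbc hac hcon (key p' a' hp' (e1.trans hD)) (key p' b' hp' hD)
        (key p' c' hp' (e2.symm.trans hD)) (key q' a' hq' (e1.trans hD)) (key q' b' hq' hD)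
        (key q' c' hq' (e2.symm.trans hD))
    · have key : ∀ r s : ((↑S : Set V)ᶜ : Set V),
          (G.induce ((↑S : Set V)ᶜ)).connectedComponentMk r = D1 →
          (G.induce ((↑S : Set V)ᶜ)).connectedComponentMk s =
            (G.induce ((↑S : Set V)ᶜ)).connectedComponentMk b' → ¬ G.Adj r s := by
        intro r s hr hs h
        exact hD (hs.symm.trans ((comp_eq h).symm.trans hr))
      exact p2p3 hfree hpq hab hbc hac hcon (key p a' hp e1) (key p b' hp rfl)
        (key p c' hp e2.symm) (key q a' hq e1) (key q b' hq rfl) (key q c' hq e2.symm)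
  · refine ⟨p, q, p', q', fun h => p.2 h, fun h => q.2 h, fun h => p'.2 h,
      fun h => q'.2 h, hpq, hpq', ?_, ?_⟩
    · intro h
      have : p = p' := Subtype.ext h
      subst this
      exact hne (hp.symm.trans hp')
    · intro h
      exact hne (hp.symm.trans ((comp_eq h).trans hp'))

lemma setup_of_good [Fintype V] {G : SimpleGraph V} (htough : IsTough 15 G) (hfree : P2P3Free G)
    {S₀ : Finset V} (hgood : Good G S₀) (hcard : 4 * S₀.card ≤ 3 * Fintype.card V) :
    ∃ (S : Finset V) (𝒞 : Finset (Finset V)), Setup G S 𝒞 := by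
  classical
  obtain ⟨S, hS, hmin⟩ := Finset.exists_min_image (Finset.univ.filter (fun S => Good G S))
    Finset.card ⟨S₀, by simpa using hgood⟩
  have hle := hmin S₀ (by simpa using hgood)
  have hG : Good G S := by simpa using hS
  obtain ⟨htr, p, q, p', q', hp, hq, hp', hq', hpq, hpq', hne, hna⟩ := hG
  let cls : V → Finset V := fun a => Finset.univ.filter (fun b => b ∉ S ∧ (b = a ∨ G.Adj a b))
  have hcls : ∀ a b, b ∈ cls a ↔ b ∉ S ∧ (b = a ∨ G.Adj a b) := by
    intro a b; simp [cls]
  have heq : ∀ a b, a ∉ S → b ∉ S → G.Adj a b → cls a = cls b := by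
    have key : ∀ a b, a ∉ S → b ∉ S → G.Adj a b → cls a ⊆ cls b := by
      intro a b ha hb hab v hv
      rw [hcls] at hv ⊢
      refine ⟨hv.1, ?_⟩
      by_cases hvb : v = b
      · exact Or.inl hvb
      · right
        rcases hv.2 with rfl | h
        · exact hab.symm
        · exact htr b a v hb ha hv.1 hab.symm h (Ne.symm hvb)
    intro a b ha hb hab
    exact Finset.Subset.antisymm (key a b ha hb hab) (key b a hb ha hab.symm)
  have hmem : ∀ a b, a ∉ S → b ∈ cls a → cls b = cls a := by
    intro a b ha hb
    rw [hcls] at hb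
    rcases hb.2 with rfl | h
    · rfl
    · exact (heq a b ha hb.1 h).symm
  have himg : ∀ E ∈ Sᶜ.image cls, ∃ a, a ∉ S ∧ cls a = E := by
    intro E hE
    obtain ⟨a, ha, rfl⟩ := Finset.mem_image.1 hE
    exact ⟨a, by simpa using ha, rfl⟩
  have hin : ∀ a, a ∉ S → cls a ∈ Sᶜ.image cls := fun a ha =>
    Finset.mem_image_of_mem _ (by simpa using ha)
  have hself : ∀ a, a ∉ S → a ∈ cls a := fun a ha => (hcls a a).2 ⟨ha, Or.inl rfl⟩
  refine ⟨S, Sᶜ.image cls, ?_, ?_, ?_, ?_, ?_, ?_, ?_, ?_, htough, hfree, by omega⟩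
  · exact fun v hv => ⟨cls v, hin v hv, hself v hv⟩
  · intro E hE v hv
    obtain ⟨a, ha, rfl⟩ := himg E hE
    exact ((hcls a v).1 hv).1
  · intro E hE
    obtain ⟨a, ha, rfl⟩ := himg E hE
    exact ⟨a, hself a ha⟩
  · intro E hE b hb c hc hbc
    obtain ⟨a, ha, rfl⟩ := himg E hE
    rw [← hmem a b ha hb, hcls] at hc
    rcases hc.2 with h | h
    · exact absurd h.symm hbc
    · exact h
  · intro E hE F hF b hb c hc hbc
    obtain ⟨a, ha, rfl⟩ := himg E hE
    obtain ⟨a', ha', rfl⟩ := himg F hF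
    rw [← hmem a b ha hb, ← hmem a' c ha' hc]
    exact heq b c ((hcls _ _).1 hb).1 ((hcls _ _).1 hc).1 hbc
  · intro E hE F hF b hb hc
    obtain ⟨a, ha, rfl⟩ := himg E hE
    obtain ⟨a', ha', rfl⟩ := himg F hF
    rw [← hmem a b ha hb, ← hmem a' b ha' hc]
  · refine ⟨cls p, hin p hp, cls p', hin p' hp', ?_, ?_, ?_⟩
    · intro h
      have := hself p' hp'
      rw [← h, hcls] at this
      rcases this.2 with h | h
      · exact hne h.symm
      · exact hna h
    · exact Finset.one_lt_card.2 ⟨p, hself p hp, q, (hcls _ _).2 ⟨hq, Or.inr hpq⟩, hpq.ne⟩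
    · exact Finset.one_lt_card.2 ⟨p', hself p' hp', q', (hcls _ _).2 ⟨hq', Or.inr hpq'⟩, hpq'.ne⟩
  · intro x hx
    have hnot : ¬ Good G (S.erase x) := by
      intro h
      have h1 := hmin (S.erase x) (by simpa using h)
      have h2 := Finset.card_erase_lt_of_mem hx
      omega
    have hex : ∀ v, v ∉ S → v ∉ S.erase x := fun v hv h => hv (Finset.mem_of_mem_erase h)
    have hex' : ∀ v, v ∉ S.erase x → v = x ∨ v ∉ S := by
      intro v hv
      by_cases h : v = x
      · exact Or.inl h
      · exact Or.inr (fun h' => hv (Finset.mem_erase.2 ⟨h, h'⟩))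
    have hnot1 : ¬ ∀ a b c, a ∉ S.erase x → b ∉ S.erase x → c ∉ S.erase x → G.Adj a b →
        G.Adj b c → a ≠ c → G.Adj a c := fun h =>
      hnot ⟨h, p, q, p', q', hex _ hp, hex _ hq, hex _ hp', hex _ hq', hpq, hpq', hne, hna⟩
    push Not at hnot1
    obtain ⟨a, b, c, ha, hb, hc, hab, hbc, hac, hn⟩ := hnot1
    rcases hex' b hb with rfl | kb
    · rcases hex' a ha with rfl | ka
      · exact absurd hab (G.loopless.irrefl _)
      rcases hex' c hc with rfl | kc
      · exact absurd hbc (G.loopless.irrefl _)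
      exact ⟨a, c, ka, kc, Or.inl ⟨hab.symm, hbc, hac, hn⟩⟩
    · rcases hex' a ha with rfl | ka
      · rcases hex' c hc with rfl | kc
        · exact absurd rfl hac
        exact ⟨b, c, kb, kc, Or.inr ⟨hab, hbc, hn⟩⟩
      · rcases hex' c hc with rfl | kc
        · exact ⟨b, a, kb, ka, Or.inr ⟨hbc.symm, hab.symm, fun h => hn h.symm⟩⟩
        · exact absurd (htr a b c ka kb kc hab hbc hac) hn

theorem stmt10 [Fintype V] [DecidableEq V] (G : SimpleGraph V) [DecidableRel G.Adj]
    (hn : 31 ≤ Fintype.card V) (htough : IsTough 15 G) (hfree : P2P3Free G)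
    (S : Finset V) (hcut : 2 ≤ numComponents G S)
    (hS : (S.card : ℝ) ≤ 3 * (Fintype.card V : ℝ) / 4)
    (hcliques : ∃ D1 D2 : (G.induce ((↑S : Set V)ᶜ)).ConnectedComponent, D1 ≠ D2 ∧
      G.IsClique (Subtype.val '' D1.supp) ∧ G.IsClique (Subtype.val '' D2.supp) ∧
      2 ≤ (Subtype.val '' D1.supp).ncard ∧ 2 ≤ (Subtype.val '' D2.supp).ncard)
    (hdeg : ∀ u w, G.Adj u w → S.card ≤ G.degree u + G.degree w) :
    G.IsHamiltonian := by
  have hcard : 4 * S.card ≤ 3 * Fintype.card V := by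
    have h : (4 : ℝ) * S.card ≤ 3 * (Fintype.card V : ℝ) := by linarith
    exact_mod_cast h
  obtain ⟨T, 𝒞, st⟩ := setup_of_good htough hfree (good_of_cliques hfree hcliques) hcard
  exact st.main
end

section
/- Every 15-tough (P2 ∪ P3)-free graph on at least three vertices has a Hamiltonian cycle. -/
open SimpleGraph

variable {V : Type*}

/-! ### Basic definitions -/

/-- A cyclic list of distinct vertices in which consecutive vertices are adjacent. -/
def IsCyc (G : SimpleGraph V) (l : List V) : Prop :=
  l.Nodup ∧ 3 ≤ l.length ∧ l.IsChain G.Adj ∧ ∀ a ∈ l.getLast?, ∀ b ∈ l.head?, G.Adj a b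

/-- A list of distinct vertices forming a path from `u` to `v`. -/
def PL (G : SimpleGraph V) (u v : V) (l : List V) : Prop :=
  l.IsChain G.Adj ∧ l.Nodup ∧ l.head? = some u ∧ l.getLast? = some v

/-- The graph induced on `R` is a disjoint union of cliques. -/
def Clus (G : SimpleGraph V) (R : Finset V) : Prop :=
  ∀ a ∈ R, ∀ b ∈ R, ∀ c ∈ R, G.Adj a b → G.Adj b c → a ≠ c → G.Adj a c

/-- `Q` lists the cliques of the cluster graph induced on `R`. -/
structure Fam (G : SimpleGraph V) (R : Finset V) (k : ℕ) (Q : Fin (k + 1) → Finset V) : Prop where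
  nonempty : ∀ i, (Q i).Nonempty
  sub : ∀ i, Q i ⊆ R
  cover : ∀ v ∈ R, ∃ i, v ∈ Q i
  clique : ∀ i, ∀ u ∈ Q i, ∀ v ∈ Q i, u ≠ v → G.Adj u v
  anti : ∀ i j, i ≠ j → ∀ u ∈ Q i, ∀ v ∈ Q j, u ≠ v ∧ ¬ G.Adj u v

theorem p2p3_s11 {G : SimpleGraph V} (hfree : P2P3Free G) {u v a b c : V} (huv : G.Adj u v)
    (hab : G.Adj a b) (hbc : G.Adj b c) (hne : a ≠ c) (hac : ¬ G.Adj a c)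
    (hua : ¬ G.Adj u a) (hub : ¬ G.Adj u b) (huc : ¬ G.Adj u c)
    (hva : ¬ G.Adj v a) (hvb : ¬ G.Adj v b) (hvc : ¬ G.Adj v c) : False := by
  apply hfree
  have e1 : u ≠ v := huv.ne
  have e2 : u ≠ a := by rintro rfl; exact hub hab
  have e3 : u ≠ b := by rintro rfl; exact huc hbc
  have e4 : u ≠ c := by rintro rfl; exact hub hbc.symm
  have e5 : v ≠ a := by rintro rfl; exact hvb hab
  have e6 : v ≠ b := by rintro rfl; exact hvc hbc
  have e7 : v ≠ c := by rintro rfl; exact hvb hbc.symm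
  have e8 : a ≠ b := hab.ne
  have e9 : b ≠ c := hbc.ne
  refine ⟨⟨![u, v, a, b, c], ?_⟩, ?_⟩
  · intro i j hij
    fin_cases i <;> fin_cases j <;> simp_all
  · intro i j
    have s1 := huv.symm
    have s2 := hab.symm
    have s3 := hbc.symm
    have t1 := fun h => hac (G.adj_symm h)
    have t2 := fun h => hua (G.adj_symm h)
    have t3 := fun h => hub (G.adj_symm h)
    have t4 := fun h => huc (G.adj_symm h)
    have t5 := fun h => hva (G.adj_symm h)
    have t6 := fun h => hvb (G.adj_symm h)
    have t7 := fun h => hvc (G.adj_symm h)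
    fin_cases i <;> fin_cases j <;> simp [P2P3, SimpleGraph.fromRel_adj] <;> assumption

theorem tough_rep [Fintype V] {G : SimpleGraph V} (ht : IsTough 15 G) {ι : Type*} (S : Finset V)
    (f : V → ι) (T : Finset V) (hf : ∀ u v, u ∉ S → v ∉ S → G.Adj u v → f u = f v)
    (hT : ∀ t ∈ T, t ∉ S) (hinj : Set.InjOn f T) (h2 : 2 ≤ T.card) : 15 * T.card ≤ S.card := by
  classical
  let H := G.induce ((↑S : Set V)ᶜ)
  have hreach : ∀ v w : ((↑S : Set V)ᶜ : Set V), H.Reachable v w → f v.1 = f w.1 := by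
    rintro v w ⟨p⟩
    induction p with
    | nil => rfl
    | @cons a b c h p ih =>
      rw [← ih]
      exact hf _ _ (fun h' => a.2 (Finset.mem_coe.2 h')) (fun h' => b.2 (Finset.mem_coe.2 h')) h
  have key : T.card ≤ numComponents G S := by
    unfold numComponents
    let g : T → H.ConnectedComponent := fun t => H.connectedComponentMk ⟨t.1, by simpa using hT t.1 t.2⟩
    have hg : Function.Injective g := by
      intro a b hab
      have := hreach _ _ (ConnectedComponent.exact hab)
      exact Subtype.ext (hinj a.2 b.2 this)
    have := Nat.card_le_card_of_injective g hg
    simpa using this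
  have := ht S (h2.trans key)
  have h3 : (15 : ℝ) * T.card ≤ S.card := by
    refine le_trans ?_ this
    have : (T.card : ℝ) ≤ numComponents G S := by exact_mod_cast key
    linarith
  exact_mod_cast h3

theorem ham_of_cyc [Fintype V] [DecidableEq V] {G : SimpleGraph V} {l : List V} (h : IsCyc G l)
    (hl : ∀ v, v ∈ l) : G.IsHamiltonian := by
  intro _
  obtain ⟨hn, h3, hc, hw⟩ := h
  match l, hn, h3, hc, hw, hl with
  | a :: b :: c :: r, hn, h3, hc, hw, hl =>
    have hne : b :: c :: r ≠ [] := by simp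
    have hc' : (b :: c :: r).IsChain G.Adj := (List.isChain_cons_cons.1 hc).2
    have hab : G.Adj a b := (List.isChain_cons_cons.1 hc).1
    let p : G.Walk b ((b :: c :: r).getLast hne) := Walk.ofSupport (b :: c :: r) hne hc'
    have hs : p.support = b :: c :: r := Walk.support_ofSupport hne hc'
    have hadj : G.Adj ((b :: c :: r).getLast hne) a := by
      apply hw
      · simp [List.getLast?_eq_some_getLast]
      · simp
    let q := Walk.cons hab p
    have hq : q.support = a :: b :: c :: r := (Walk.support_cons hab p).trans (congrArg _ hs)
    have hqp : q.IsPath := by rw [Walk.isPath_def, hq]; exact hn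
    have ha : a ∉ p.support := by rw [hs]; exact (List.nodup_cons.1 hn).1
    refine ⟨_, Walk.cons hadj q, ?_⟩
    rw [Walk.isHamiltonianCycle_iff_isCycle_and_support_count_tail_eq_one]
    refine ⟨?_, ?_⟩
    · rw [Walk.cons_isCycle_iff]
      refine ⟨hqp, ?_⟩
      intro hmem
      simp only [q, Walk.edges_cons, List.mem_cons] at hmem
      rcases hmem with hmem | hmem
      · have hb : (b :: c :: r).getLast hne = b := by
          rcases Sym2.eq_iff.1 hmem with ⟨h1, h2⟩ | ⟨h1, h2⟩
          · exact absurd h1 hadj.ne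
          · exact h1
        have : b ∉ c :: r := (List.nodup_cons.1 (List.nodup_cons.1 hn).2).1
        apply this
        have h4 : (b :: c :: r).getLast hne = (c :: r).getLast (by simp) := by simp
        rw [← hb, h4]
        exact List.getLast_mem _
      · exact ha (Walk.snd_mem_support_of_mem_edges _ hmem)
    · intro v
      rw [Walk.support_cons, List.tail_cons, hq]
      exact List.count_eq_one_of_mem hn (hl v)

/-! ### Connections avoiding a set -/

/-- `u` and `v` lie in the same component of `G - S`. -/
def Rch (G : SimpleGraph V) (S : Finset V) (u v : V) : Prop :=
  ∃ (hu : u ∉ S) (hv : v ∉ S), (G.induce ((↑S : Set V)ᶜ)).Reachable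
    ⟨u, fun h => hu (Finset.mem_coe.1 h)⟩ ⟨v, fun h => hv (Finset.mem_coe.1 h)⟩

theorem Rch.refl {G : SimpleGraph V} {S : Finset V} {u : V} (hu : u ∉ S) : Rch G S u u :=
  ⟨hu, hu, Reachable.refl _⟩

theorem Rch.symm {G : SimpleGraph V} {S : Finset V} {u v : V} (h : Rch G S u v) : Rch G S v u := by
  obtain ⟨hu, hv, h⟩ := h
  exact ⟨hv, hu, h.symm⟩

theorem Rch.trans {G : SimpleGraph V} {S : Finset V} {u v w : V} (h : Rch G S u v)
    (h' : Rch G S v w) : Rch G S u w := by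
  obtain ⟨hu, hv, h⟩ := h
  obtain ⟨hv', hw, h'⟩ := h'
  exact ⟨hu, hw, Reachable.trans h h'⟩

theorem Rch.of_adj {G : SimpleGraph V} {S : Finset V} {u v : V} (hu : u ∉ S) (hv : v ∉ S)
    (h : G.Adj u v) : Rch G S u v := by
  refine ⟨hu, hv, Adj.reachable ?_⟩
  exact h

theorem Rch.exists_PL {G : SimpleGraph V} {S : Finset V} {u v : V} (h : Rch G S u v) :
    ∃ l, PL G u v l ∧ ∀ x ∈ l, x ∉ S := by
  classical
  obtain ⟨hu, hv, ⟨p⟩⟩ := h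
  let q := p.toPath.1
  have hq : q.IsPath := p.toPath.2
  refine ⟨q.support.map Subtype.val, ⟨?_, ?_, ?_, ?_⟩, ?_⟩
  · rw [List.isChain_map]
    exact q.isChain_adj_support
  · exact ((Walk.isPath_def _).1 hq).map Subtype.val_injective
  · rw [List.head?_map, List.head?_eq_some_head (Walk.support_ne_nil _)]
    simp
  · rw [List.getLast?_map, List.getLast?_eq_some_getLast (Walk.support_ne_nil _)]
    simp
  · intro x hx
    obtain ⟨y, -, rfl⟩ := List.mem_map.1 hx
    exact fun h' => y.2 (Finset.mem_coe.2 h')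

/-- A shortest connection in a `P2 ∪ P3`-free graph has at most five vertices. -/
theorem Rch.exists_short {G : SimpleGraph V} (hfree : P2P3Free G) {S : Finset V} {u v : V}
    (h : Rch G S u v) : ∃ l, PL G u v l ∧ (∀ x ∈ l, x ∉ S) ∧ l.length ≤ 5 := by
  classical
  have hex : ∃ n, ∃ l, PL G u v l ∧ (∀ x ∈ l, x ∉ S) ∧ l.length = n := by
    obtain ⟨l, h1, h2⟩ := h.exists_PL
    exact ⟨_, l, h1, h2, rfl⟩
  obtain ⟨l, h1, h2, h3⟩ := Nat.find_spec hex
  have hmin : ∀ l', PL G u v l' → (∀ x ∈ l', x ∉ S) → l.length ≤ l'.length := by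
    intro l' a b
    rw [h3]
    exact Nat.find_min' hex ⟨l', a, b, rfl⟩
  refine ⟨l, h1, h2, ?_⟩
  by_contra hlen
  match l, h1, h2, hmin, hlen with
  | [], _, _, _, hlen => simp at hlen
  | [_], _, _, _, hlen => simp at hlen
  | [_, _], _, _, _, hlen => simp at hlen
  | [_, _, _], _, _, _, hlen => simp at hlen
  | [_, _, _, _], _, _, _, hlen => simp at hlen
  | [_, _, _, _, _], _, _, _, hlen => simp at hlen
  | a :: b :: c :: d :: e :: f :: r, h1, h2, hmin, hlen =>
    obtain ⟨hch, hnd, hh, hl⟩ := h1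
    simp only [List.isChain_cons_cons] at hch
    obtain ⟨hab, hbc, hcd, hde, hef, hr⟩ := hch
    have key : ∀ l' : List V, l'.IsChain G.Adj → l'.Sublist (a :: b :: c :: d :: e :: f :: r) →
        l'.head? = some a → l'.getLast? = (f :: r).getLast? → l'.length < r.length + 6 → False := by
      intro l' k1 k2 k3 k4 k5
      have := hmin l' ⟨k1, hnd.sublist k2, ?_, ?_⟩ (fun x hx => h2 x (k2.subset hx))
      · simp at this; omega
      · rw [k3, ← hh]; rfl
      · rw [k4, ← hl]; simp
    have n1 : ¬ G.Adj a d := fun hh => key (a :: d :: e :: f :: r)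
      (by simp [List.isChain_cons_cons, *]) (by repeat (first | exact List.Sublist.refl _ | apply List.Sublist.cons_cons | apply List.Sublist.cons))
      (by simp) (by simp) (by simp)
    have n2 : ¬ G.Adj a e := fun hh => key (a :: e :: f :: r)
      (by simp [List.isChain_cons_cons, *]) (by repeat (first | exact List.Sublist.refl _ | apply List.Sublist.cons_cons | apply List.Sublist.cons))
      (by simp) (by simp) (by simp)
    have n3 : ¬ G.Adj a f := fun hh => key (a :: f :: r)
      (by simp [List.isChain_cons_cons, *]) (by repeat (first | exact List.Sublist.refl _ | apply List.Sublist.cons_cons | apply List.Sublist.cons))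
      (by simp) (by simp) (by simp)
    have n4 : ¬ G.Adj b d := fun hh => key (a :: b :: d :: e :: f :: r)
      (by simp [List.isChain_cons_cons, *]) (by repeat (first | exact List.Sublist.refl _ | apply List.Sublist.cons_cons | apply List.Sublist.cons))
      (by simp) (by simp) (by simp)
    have n5 : ¬ G.Adj b e := fun hh => key (a :: b :: e :: f :: r)
      (by simp [List.isChain_cons_cons, *]) (by repeat (first | exact List.Sublist.refl _ | apply List.Sublist.cons_cons | apply List.Sublist.cons))
      (by simp) (by simp) (by simp)
    have n6 : ¬ G.Adj b f := fun hh => key (a :: b :: f :: r)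
      (by simp [List.isChain_cons_cons, *]) (by repeat (first | exact List.Sublist.refl _ | apply List.Sublist.cons_cons | apply List.Sublist.cons))
      (by simp) (by simp) (by simp)
    have n7 : ¬ G.Adj d f := fun hh => key (a :: b :: c :: d :: f :: r)
      (by simp [List.isChain_cons_cons, *]) (by repeat (first | exact List.Sublist.refl _ | apply List.Sublist.cons_cons | apply List.Sublist.cons))
      (by simp) (by simp) (by simp)
    have hdf : d ≠ f := by
      rintro rfl
      simp at hnd
    exact p2p3_s11 hfree hab hde hef hdf n7 n1 n2 n3 n4 n5 n6

theorem PL.ne_nil {G : SimpleGraph V} {u v : V} {l : List V} (h : PL G u v l) : l ≠ [] := by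
  rintro rfl
  simpa using h.2.2.1

theorem PL.left_mem {G : SimpleGraph V} {u v : V} {l : List V} (h : PL G u v l) : u ∈ l :=
  List.mem_of_mem_head? h.2.2.1

theorem PL.right_mem {G : SimpleGraph V} {u v : V} {l : List V} (h : PL G u v l) : v ∈ l :=
  List.mem_of_getLast? h.2.2.2

theorem PL.append {G : SimpleGraph V} {u v u' v' : V} {l l' : List V} (h : PL G u v l)
    (h' : PL G u' v' l') (hadj : G.Adj v u') (hd : ∀ x ∈ l, x ∉ l') : PL G u v' (l ++ l') := by
  refine ⟨?_, ?_, ?_, ?_⟩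
  · rw [List.isChain_append]
    refine ⟨h.1, h'.1, ?_⟩
    rw [h.2.2.2, h'.2.2.1]
    simpa using hadj
  · rw [List.nodup_append']
    exact ⟨h.2.1, h'.2.1, fun x hx hx' => hd x hx hx'⟩
  · rw [List.head?_append_of_ne_nil _ h.ne_nil]; exact h.2.2.1
  · rw [List.getLast?_append_of_ne_nil _ h'.ne_nil]; exact h'.2.2.2

theorem PL.single {G : SimpleGraph V} (u : V) : PL G u u [u] := by
  simp [PL]

theorem PL.reverse {G : SimpleGraph V} {u v : V} {l : List V} (h : PL G u v l) :
    PL G v u l.reverse := by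
  refine ⟨?_, ?_, ?_, ?_⟩
  · rw [List.isChain_reverse]
    exact h.1.imp (fun _ _ h => h.symm)
  · simpa using h.2.1
  · simpa using h.2.2.2
  · simpa using h.2.2.1

theorem PL.isCyc {G : SimpleGraph V} {u v : V} {l : List V} (h : PL G u v l) (hadj : G.Adj v u)
    (h3 : 3 ≤ l.length) : IsCyc G l := by
  refine ⟨h.2.1, h3, h.1, ?_⟩
  rw [h.2.2.1, h.2.2.2]
  simpa using hadj

theorem IsCyc.exists_PL {G : SimpleGraph V} {l : List V} (h : IsCyc G l) :
    ∃ u v, PL G u v l ∧ G.Adj v u := by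
  have hne : l ≠ [] := by rintro rfl; simpa using h.2.1
  refine ⟨l.head hne, l.getLast hne, ⟨h.2.2.1, h.1, List.head?_eq_some_head _,
    List.getLast?_eq_some_getLast _⟩, ?_⟩
  exact h.2.2.2 _ (List.getLast?_eq_some_getLast _) _ (List.head?_eq_some_head _)

theorem IsCyc.rot {G : SimpleGraph V} {a b : List V} (h : IsCyc G (a ++ b)) : IsCyc G (b ++ a) := by
  by_cases ha : a = []
  · subst ha; simpa using h
  by_cases hb : b = []
  · subst hb; simpa using h
  obtain ⟨h1, h2, h3, h4⟩ := h
  rw [List.isChain_append] at h3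
  rw [List.head?_append_of_ne_nil _ ha, List.getLast?_append_of_ne_nil _ hb] at h4
  refine ⟨(List.perm_append_comm.nodup_iff).1 h1, ?_, ?_, ?_⟩
  · simp at h2 ⊢; omega
  · rw [List.isChain_append]
    exact ⟨h3.2.1, h3.1, h4⟩
  · rw [List.head?_append_of_ne_nil _ hb, List.getLast?_append_of_ne_nil _ ha]
    exact h3.2.2

/-! ### Inclusion-maximal cycles -/

theorem IsCyc.rot_to {G : SimpleGraph V} {C : List V} (h : IsCyc G C) {w : V} (hw : w ∈ C) :
    ∃ r, IsCyc G (w :: r) ∧ C ~r (w :: r) := by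
  obtain ⟨a, b, rfl⟩ := List.append_of_mem hw
  refine ⟨b ++ a, ?_, ⟨a.length, ?_⟩⟩
  · exact h.rot
  · rw [List.rotate_append_length_eq]; rfl

theorem IsCyc.insert_path {G : SimpleGraph V} {w z h₁ h₂ : V} {r p : List V}
    (hC : IsCyc G (w :: z :: r)) (hp : PL G h₁ h₂ p) (hd : ∀ x ∈ p, x ∉ w :: z :: r)
    (hw : G.Adj w h₁) (hz : G.Adj z h₂) : IsCyc G ([w] ++ (p ++ z :: r)) := by
  obtain ⟨hn, h3, hc, hl⟩ := hC
  have hne : z :: r ≠ [] := by simp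
  have h1 : PL G z ((z :: r).getLast hne) (z :: r) :=
    ⟨(List.isChain_cons_cons.1 hc).2, (List.nodup_cons.1 hn).2, rfl,
      List.getLast?_eq_some_getLast _⟩
  have h2 : G.Adj ((z :: r).getLast hne) w := by
    apply hl
    · rw [List.getLast?_cons_cons]; exact List.getLast?_eq_some_getLast _
    · simp
  have h3 : PL G h₁ ((z :: r).getLast hne) (p ++ z :: r) :=
    hp.append h1 hz.symm (fun x hx hx' => hd x hx (List.mem_cons_of_mem _ hx'))
  refine ((PL.single w).append h3 hw ?_).isCyc h2 ?_
  · intro x hx hx'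
    simp only [List.mem_singleton] at hx
    subst hx
    rcases List.mem_append.1 hx' with h' | h'
    · exact hd _ h' (by simp)
    · exact (List.nodup_cons.1 hn).1 h'
  · have := hp.ne_nil
    have := List.length_pos_iff.2 this
    simp
    omega

theorem IsCyc.cross_path {G : SimpleGraph V} {w a w' b h₁ h₂ : V} {A B p : List V}
    (hC : IsCyc G (w :: (a :: A) ++ (w' :: (b :: B)))) (hp : PL G h₁ h₂ p)
    (hd : ∀ x ∈ p, x ∉ w :: (a :: A) ++ (w' :: (b :: B)))
    (hw : G.Adj w h₁) (hz : G.Adj w' h₂) (hab : G.Adj a b) :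
    IsCyc G ([w] ++ (p ++ ([w'] ++ ((a :: A).reverse ++ b :: B)))) := by
  obtain ⟨hn, h3, hc, hl⟩ := hC
  have hneA : a :: A ≠ [] := by simp
  have hneB : b :: B ≠ [] := by simp
  rw [List.isChain_append] at hc
  obtain ⟨hc1, hc2, hc3⟩ := hc
  rw [List.nodup_append'] at hn
  obtain ⟨hn1, hn2, hn3⟩ := hn
  have hA : PL G a ((a :: A).getLast hneA) (a :: A) :=
    ⟨(List.isChain_cons_cons.1 hc1).2, (List.nodup_cons.1 hn1).2, rfl,
      List.getLast?_eq_some_getLast _⟩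
  have hB : PL G b ((b :: B).getLast hneB) (b :: B) :=
    ⟨(List.isChain_cons_cons.1 hc2).2, (List.nodup_cons.1 hn2).2, rfl,
      List.getLast?_eq_some_getLast _⟩
  have h2 : G.Adj ((b :: B).getLast hneB) w := by
    apply hl
    · rw [List.getLast?_append_of_ne_nil _ (by simp), List.getLast?_cons_cons]
      exact List.getLast?_eq_some_getLast _
    · simp
  have h4 : G.Adj ((a :: A).getLast hneA) w' := by
    apply hc3
    · rw [List.getLast?_cons_cons]
      exact List.getLast?_eq_some_getLast _
    · simp
  have q1 := hA.reverse.append hB hab (by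
    intro x hx hx'
    exact hn3 (List.mem_cons_of_mem _ (List.mem_reverse.1 hx)) (List.mem_cons_of_mem _ hx'))
  have q2 := (PL.single w').append q1 h4.symm (by
    intro x hx hx'
    simp only [List.mem_singleton] at hx
    subst hx
    rcases List.mem_append.1 hx' with h' | h'
    · exact hn3 (List.mem_cons_of_mem _ (List.mem_reverse.1 h')) (by simp)
    · exact (List.nodup_cons.1 hn2).1 h')
  have q3 := hp.append q2 hz.symm (by
    intro x hx hx'
    apply hd x hx
    simp only [List.mem_append, List.mem_reverse, List.mem_cons] at hx' ⊢
    simp only [List.not_mem_nil, or_false] at hx'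
    tauto)
  refine ((PL.single w).append q3 hw ?_).isCyc h2 (by simp; omega)
  intro x hx hx'
  simp only [List.mem_singleton] at hx
  subst hx
  rcases List.mem_append.1 hx' with h' | h'
  · exact hd _ h' (by simp)
  rcases List.mem_append.1 h' with h' | h'
  · simp only [List.mem_singleton] at h'
    subst h'
    exact hn3 (List.mem_cons_self) (List.mem_cons_self)
  rcases List.mem_append.1 h' with h' | h'
  · exact (List.nodup_cons.1 hn1).1 (List.mem_reverse.1 h')
  · exact hn3 (List.mem_cons_self) (List.mem_cons_of_mem _ h')

section maxcycle

variable [DecidableEq V] {G : SimpleGraph V} {C : List V}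

theorem succ_not_adj (hC : IsCyc G C)
    (hmax : ∀ C', IsCyc G C' → (∀ x ∈ C, x ∈ C') → ∀ x ∈ C', x ∈ C)
    {w h₁ h₂ : V} (hw : w ∈ C) (hR : Rch G C.toFinset h₁ h₂) (h1 : G.Adj w h₁) :
    ¬ G.Adj (C.formPerm w) h₂ := by
  intro h2
  obtain ⟨r, hr, hrot⟩ := hC.rot_to hw
  rw [List.formPerm_eq_of_isRotated hC.1 hrot] at h2
  obtain ⟨p, hp, hpC⟩ := hR.exists_PL
  match r, hr, hrot, h2 with
  | [], hr, _, _ => exact absurd hr.2.1 (by simp)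
  | z :: r, hr, hrot, h2 =>
    rw [List.formPerm_apply_head _ _ _ hr.1] at h2
    have hmem : ∀ x, x ∈ w :: z :: r ↔ x ∈ C := fun x => hrot.mem_iff.symm
    have hpd : ∀ x ∈ p, x ∉ C := fun x hx h' => hpC x hx (List.mem_toFinset.2 h')
    have := hr.insert_path hp (fun x hx h' => hpd x hx ((hmem x).1 h')) h1 h2
    apply hpd _ hp.left_mem
    apply hmax _ this
    · intro x hx
      have := (hmem x).2 hx
      simp only [List.mem_append, List.mem_cons] at this ⊢
      tauto
    · simp [hp.left_mem]

theorem succ_indep (hC : IsCyc G C)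
    (hmax : ∀ C', IsCyc G C' → (∀ x ∈ C, x ∈ C') → ∀ x ∈ C', x ∈ C)
    {w w' h₁ h₂ : V} (hw : w ∈ C) (hw' : w' ∈ C) (hne : w ≠ w') (hR : Rch G C.toFinset h₁ h₂)
    (h1 : G.Adj w h₁) (h2 : G.Adj w' h₂) :
    ¬ G.Adj (C.formPerm w) (C.formPerm w') := by
  intro hadj
  have hs := succ_not_adj hC hmax hw hR h1
  have hs' := succ_not_adj hC hmax hw' hR.symm h2
  obtain ⟨r, hr, hrot⟩ := hC.rot_to hw
  obtain ⟨p, hp, hpC⟩ := hR.exists_PL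
  have hmem : ∀ x, x ∈ w :: r ↔ x ∈ C := fun x => hrot.mem_iff.symm
  have hpd : ∀ x ∈ p, x ∉ C := fun x hx h' => hpC x hx (List.mem_toFinset.2 h')
  have hwr : w' ∈ r := by
    have := (hmem w').2 hw'
    rcases List.mem_cons.1 this with h | h
    · exact absurd h.symm hne
    · exact h
  obtain ⟨A, B, rfl⟩ := List.append_of_mem hwr
  have hrot2 : C ~r ((w' :: B) ++ (w :: A)) := by
    refine hrot.trans ⟨(w :: A).length, ?_⟩
    rw [← List.cons_append, List.rotate_append_length_eq]
  have hr2 : IsCyc G ((w' :: B) ++ (w :: A)) := by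
    rw [← List.cons_append] at hr
    exact hr.rot
  have e1 : C.formPerm w = (w :: (A ++ w' :: B)).formPerm w := by
    rw [List.formPerm_eq_of_isRotated hC.1 hrot]
  have e2 : C.formPerm w' = (w' :: (B ++ w :: A)).formPerm w' := by
    rw [List.formPerm_eq_of_isRotated hC.1 hrot2]; rfl
  match A, B, hr, hr2, hrot, hmem, e1, e2 with
  | [], B, hr, hr2, hrot, hmem, e1, e2 =>
    have : C.formPerm w = w' := e1.trans (List.formPerm_apply_head _ _ _ hr.1)
    rw [this] at hs
    exact hs h2
  | a :: A, [], hr, hr2, hrot, hmem, e1, e2 =>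
    have : C.formPerm w' = w := e2.trans (List.formPerm_apply_head _ _ _ hr2.1)
    rw [this] at hs'
    exact hs' h1
  | a :: A, b :: B, hr, hr2, hrot, hmem, e1, e2 =>
    have e1' : C.formPerm w = a := e1.trans (List.formPerm_apply_head _ _ _ hr.1)
    have e2' : C.formPerm w' = b := e2.trans (List.formPerm_apply_head _ _ _ hr2.1)
    rw [e1', e2'] at hadj
    have := IsCyc.cross_path hr hp (fun x hx h' => hpd x hx ((hmem x).1 h')) h1 h2 hadj
    apply hpd _ hp.left_mem
    apply hmax _ this
    · intro x hx
      have := (hmem x).2 hx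
      simp only [List.mem_append, List.mem_cons, List.mem_reverse] at this ⊢
      tauto
    · simp [hp.left_mem]

theorem max_cycle [Fintype V] [DecidableRel G.Adj] (ht : IsTough 15 G) (hfree : P2P3Free G)
    (hC : IsCyc G C)
    (hmax : ∀ C', IsCyc G C' → (∀ x ∈ C, x ∈ C') → ∀ x ∈ C', x ∈ C)
    {h : V} (hh : h ∉ C) : 16 * (G.degree h + 1) ≤ Fintype.card V := by
  classical
  have hhS : h ∉ C.toFinset := by simpa using hh
  let H : Finset V := Finset.univ.filter (fun v => Rch G C.toFinset h v)
  let W : Finset V := C.toFinset.filter (fun w => ∃ v ∈ H, G.Adj w v)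
  let s := C.formPerm
  have hH : ∀ v, v ∈ H ↔ Rch G C.toFinset h v := fun v => by simp [H]
  have hHC : ∀ v ∈ H, v ∉ C := fun v hv h' => ((hH v).1 hv).2.1 (by simpa using h')
  have hWC : ∀ w ∈ W, w ∈ C := fun w hw => by simpa using (Finset.mem_filter.1 hw).1
  have hhH : h ∈ H := (hH h).2 (Rch.refl hhS)
  have hHH : ∀ u ∈ H, ∀ v, G.Adj u v → v ∈ H ∨ v ∈ W := by
    intro u hu v huv
    by_cases hv : v ∈ C
    · right
      exact Finset.mem_filter.2 ⟨by simpa using hv, u, hu, huv.symm⟩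
    · left
      rw [hH]
      exact ((hH u).1 hu).trans (Rch.of_adj ((hH u).1 hu).2.1 (by simpa using hv) huv)
  have hsH : ∀ w ∈ W, ∀ v ∈ H, ¬ G.Adj (s w) v := by
    intro w hw v hv
    obtain ⟨u, hu, hwu⟩ := (Finset.mem_filter.1 hw).2
    exact succ_not_adj hC hmax (hWC w hw) (((hH u).1 hu).symm.trans ((hH v).1 hv)) hwu
  have hss : ∀ w ∈ W, ∀ w' ∈ W, ¬ G.Adj (s w) (s w') := by
    intro w hw w' hw'
    by_cases hne : w = w'
    · subst hne; exact G.loopless.irrefl _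
    obtain ⟨u, hu, hwu⟩ := (Finset.mem_filter.1 hw).2
    obtain ⟨u', hu', hwu'⟩ := (Finset.mem_filter.1 hw').2
    exact succ_indep hC hmax (hWC w hw) (hWC w' hw') hne
      (((hH u).1 hu).symm.trans ((hH u').1 hu')) hwu hwu'
  have hsW : ∀ w ∈ W, s w ∉ W := by
    intro w hw h'
    obtain ⟨u, hu, hwu⟩ := (Finset.mem_filter.1 h').2
    exact hsH w hw u hu hwu
  have hsC : ∀ w ∈ W, s w ∈ C := fun w hw => List.formPerm_apply_mem_of_mem (hWC w hw)
  have hhs : h ∉ W.image s := by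
    intro h'
    obtain ⟨w, hw, rfl⟩ := Finset.mem_image.1 h'
    exact hh (hsC w hw)
  let T : Finset V := insert h (W.image s)
  have hTcard : T.card = W.card + 1 := by
    rw [Finset.card_insert_of_notMem hhs, Finset.card_image_of_injective _ s.injective]
  have hWne : W.Nonempty := by
    by_contra hW
    rw [Finset.not_nonempty_iff_eq_empty] at hW
    obtain ⟨c, hc⟩ : ∃ c, c ∈ C := by
      have := hC.2.1
      exact List.exists_mem_of_length_pos (by omega)
    have := tough_rep ht ∅ (fun v => decide (v ∈ H)) {h, c} (by
      intro u v _ _ huv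
      have h1 := hHH u
      have h2 := hHH v
      simp only [hW, Finset.notMem_empty, or_false] at h1 h2
      have : u ∈ H ↔ v ∈ H := ⟨fun h => h1 h v huv, fun h => h2 h u huv.symm⟩
      simp [this]) (by simp) (by
      intro a ha b hb hab
      have hcH : c ∉ H := fun h' => hHC c h' hc
      simp only [Finset.coe_insert, Finset.coe_singleton, Set.mem_insert_iff,
        Set.mem_singleton_iff] at ha hb
      rcases ha with rfl | rfl <;> rcases hb with rfl | rfl <;> simp_all)
      (by rw [Finset.card_pair (show h ≠ c by rintro rfl; exact hh hc)])
    rw [Finset.card_pair (show h ≠ c by rintro rfl; exact hh hc)] at this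
    simp at this
  have hT2 : 2 ≤ T.card := by
    have := hWne.card_pos
    omega
  by_cases hsing : ∀ v, G.Adj h v → v ∈ C
  · have hdeg : G.degree h ≤ W.card := by
      rw [← G.card_neighborFinset_eq_degree]
      apply Finset.card_le_card
      intro v hv
      rw [mem_neighborFinset] at hv
      exact Finset.mem_filter.2 ⟨by simpa using hsing v hv, h, hhH, hv.symm⟩
    have hind : ∀ a ∈ T, ∀ b ∈ T, ¬ G.Adj a b := by
      intro a ha b hb
      rw [Finset.mem_insert, Finset.mem_image] at ha hb
      rcases ha with rfl | ⟨w, hw, rfl⟩ <;> rcases hb with rfl | ⟨w', hw', rfl⟩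
      · exact G.loopless.irrefl _
      · exact fun h' => hsH _ hw' _ hhH h'.symm
      · exact hsH _ hw _ hhH
      · exact hss _ hw _ hw'
    have := tough_rep ht Tᶜ id T (by
      intro u v hu hv huv
      rw [Finset.mem_compl, not_not] at hu hv
      exact absurd huv (hind u hu v hv)) (by simp) (Set.injOn_id _) hT2
    rw [Finset.card_compl] at this
    omega
  · exfalso
    push Not at hsing
    obtain ⟨h', hadj, hh'⟩ := hsing
    have hh'H : h' ∈ H := by
      rcases hHH h hhH h' hadj with h1 | h1
      · exact h1
      · exact absurd (hWC _ h1) hh'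
    have hout : ∀ a, a ∉ W → a ∉ H → ∀ v ∈ H, ¬ G.Adj v a := by
      intro a ha1 ha2 v hv hva
      rcases hHH v hv a hva with h1 | h1
      · exact ha2 h1
      · exact ha1 h1
    let cl : V → Finset V := fun v =>
      if v ∈ H then H else Finset.univ.filter (fun x => x ∉ W ∧ x ∉ H ∧ (x = v ∨ G.Adj v x))
    have hP3 : ∀ a b c, a ∉ W → a ∉ H → b ∉ W → b ∉ H → c ∉ W → c ∉ H → G.Adj a b → G.Adj b c →
        a ≠ c → G.Adj a c := by
      intro a b c a1 a2 b1 b2 c1 c2 hab hbc hac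
      by_contra hnac
      exact p2p3_s11 hfree hadj hab hbc hac hnac (hout a a1 a2 h hhH) (hout b b1 b2 h hhH)
        (hout c c1 c2 h hhH) (hout a a1 a2 h' hh'H) (hout b b1 b2 h' hh'H) (hout c c1 c2 h' hh'H)
    have := tough_rep ht W cl T (by
      intro u v hu hv huv
      by_cases huH : u ∈ H
      · have hvH : v ∈ H := by
          rcases hHH u huH v huv with h1 | h1
          · exact h1
          · exact absurd h1 hv
        simp [cl, huH, hvH]
      · have hvH : v ∉ H := fun h1 => hout u hu huH v h1 huv.symm
        simp only [cl, huH, hvH, if_false]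
        ext x
        simp only [Finset.mem_filter, Finset.mem_univ, true_and]
        constructor
        · rintro ⟨x1, x2, x3⟩
          refine ⟨x1, x2, ?_⟩
          by_cases hxv : x = v
          · exact Or.inl hxv
          right
          rcases x3 with rfl | x3
          · exact huv.symm
          · exact hP3 v u x hv hvH hu huH x1 x2 huv.symm x3 (Ne.symm hxv)
        · rintro ⟨x1, x2, x3⟩
          refine ⟨x1, x2, ?_⟩
          by_cases hxv : x = u
          · exact Or.inl hxv
          right
          rcases x3 with rfl | x3
          · exact huv
          · exact hP3 u v x hu huH hv hvH x1 x2 huv x3 (Ne.symm hxv)) (by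
      intro t ht
      rw [Finset.mem_insert, Finset.mem_image] at ht
      rcases ht with rfl | ⟨w, hw, rfl⟩
      · exact fun h1 => hh (hWC _ h1)
      · exact hsW w hw) (by
      have hsnH : ∀ w ∈ W, s w ∉ H := fun w hw h1 => hHC _ h1 (hsC w hw)
      have hself : ∀ w ∈ W, s w ∈ cl (s w) := by
        intro w hw
        simp [cl, hsnH w hw, hsW w hw]
      intro a ha b hb hab
      rw [Finset.mem_coe, Finset.mem_insert, Finset.mem_image] at ha hb
      rcases ha with rfl | ⟨w, hw, rfl⟩ <;> rcases hb with rfl | ⟨w', hw', rfl⟩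
      · rfl
      · have := hself w' hw'
        rw [← hab] at this
        simp only [cl, hhH, if_true] at this
        exact absurd this (hsnH w' hw')
      · have := hself w hw
        rw [hab] at this
        simp only [cl, hhH, if_true] at this
        exact absurd this (hsnH w hw)
      · have := hself w hw
        rw [hab] at this
        simp only [cl, hsnH w' hw', if_false, Finset.mem_filter] at this
        rcases this.2.2.2 with h1 | h1
        · exact h1
        · exact absurd h1 (hss _ hw' _ hw)) hT2
    omega

end maxcycle
/-! ### Cluster graphs -/

theorem clus_index [DecidableEq V] {G : SimpleGraph V} {R : Finset V} (h : Clus G R)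
    (hne : R.Nonempty) : ∃ k, ∃ Q : Fin (k + 1) → Finset V, Fam G R k Q := by
  classical
  let cl : V → Finset V := fun v => R.filter (fun w => w = v ∨ G.Adj v w)
  have hself : ∀ v ∈ R, v ∈ cl v := fun v hv => by simp [cl, hv]
  have hcl : ∀ u ∈ R, ∀ v ∈ R, G.Adj u v → cl u = cl v := by
    intro u hu v hv huv
    ext w
    simp only [cl, Finset.mem_filter]
    constructor
    · rintro ⟨hw, rfl | h1⟩
      · exact ⟨hw, Or.inr huv.symm⟩
      · refine ⟨hw, ?_⟩
        by_cases e : w = v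
        · exact Or.inl e
        · exact Or.inr (h v hv u hu w hw huv.symm h1 (Ne.symm e))
    · rintro ⟨hw, rfl | h1⟩
      · exact ⟨hw, Or.inr huv⟩
      · refine ⟨hw, ?_⟩
        by_cases e : w = u
        · exact Or.inl e
        · exact Or.inr (h u hu v hv w hw huv h1 (Ne.symm e))
  have hmem : ∀ u ∈ R, ∀ v, v ∈ cl u → v ∈ R ∧ cl v = cl u := by
    intro u hu v hv
    have hv' := hv
    simp only [cl, Finset.mem_filter] at hv'
    refine ⟨hv'.1, ?_⟩
    rcases hv'.2 with rfl | h1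
    · rfl
    · exact (hcl u hu v hv'.1 h1).symm
  let C := R.image cl
  have hC : 0 < C.card := Finset.card_pos.2 (hne.image _)
  obtain ⟨k, hk⟩ : ∃ k, C.card = k + 1 := ⟨C.card - 1, by omega⟩
  let e : Fin (k + 1) ≃ C := (C.equivFinOfCardEq hk).symm
  have hrep : ∀ i, ∃ u ∈ R, cl u = (e i : Finset V) := by
    intro i
    exact Finset.mem_image.1 (e i).2
  refine ⟨k, fun i => (e i : Finset V), ?_, ?_, ?_, ?_, ?_⟩
  · intro i
    obtain ⟨u, hu, he⟩ := hrep i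
    exact ⟨u, he ▸ hself u hu⟩
  · intro i v hv
    obtain ⟨u, hu, he⟩ := hrep i
    exact (hmem u hu v (he ▸ hv)).1
  · intro v hv
    refine ⟨e.symm ⟨cl v, Finset.mem_image_of_mem _ hv⟩, ?_⟩
    simpa using hself v hv
  · intro i u hu v hv huv
    obtain ⟨w, hw, he⟩ := hrep i
    rw [← he] at hu hv
    obtain ⟨hu1, hu2⟩ := hmem w hw u hu
    rw [← hu2] at hv
    simp only [cl, Finset.mem_filter] at hv
    rcases hv.2 with rfl | h1
    · exact absurd rfl huv
    · exact h1
  · intro i j hij u hu v hv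
    obtain ⟨w, hw, he⟩ := hrep i
    obtain ⟨w', hw', he'⟩ := hrep j
    rw [← he] at hu
    rw [← he'] at hv
    obtain ⟨hu1, hu2⟩ := hmem w hw u hu
    obtain ⟨hv1, hv2⟩ := hmem w' hw' v hv
    have hne : cl u ≠ cl v := by
      rw [hu2, hv2, he, he']
      intro h'
      exact hij (e.injective (Subtype.ext h'))
    refine ⟨?_, ?_⟩
    · rintro rfl
      exact hne rfl
    · intro h'
      exact hne (hcl u hu1 v hv1 h')

theorem Fam.eq_of_mem {G : SimpleGraph V} {R : Finset V} {k : ℕ} {Q : Fin (k + 1) → Finset V}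
    (h : Fam G R k Q) {i j : Fin (k + 1)} {v : V} (hi : v ∈ Q i) (hj : v ∈ Q j) : i = j := by
  by_contra hij
  exact (h.anti i j hij v hi v hj).1 rfl

theorem Fam.eq_of_adj {G : SimpleGraph V} {R : Finset V} {k : ℕ} {Q : Fin (k + 1) → Finset V}
    (h : Fam G R k Q) {i j : Fin (k + 1)} {u v : V} (hi : u ∈ Q i) (hj : v ∈ Q j)
    (huv : G.Adj u v) : i = j := by
  by_contra hij
  exact (h.anti i j hij u hi v hj).2 huv

theorem Fam.adj {G : SimpleGraph V} {R : Finset V} {k : ℕ} {Q : Fin (k + 1) → Finset V}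
    (h : Fam G R k Q) {i : Fin (k + 1)} {u v : V} (hi : u ∈ Q i) (hj : v ∈ Q i)
    (huv : u ≠ v) : G.Adj u v := h.clique i u hi v hj huv

/-- The colour of a vertex: the index of its clique, if any. -/
noncomputable def Fam.col {G : SimpleGraph V} {R : Finset V} {k : ℕ} {Q : Fin (k + 1) → Finset V}
    (_ : Fam G R k Q) (v : V) : Option (Fin (k + 1)) := by
  classical
  exact if h : ∃ i, v ∈ Q i then some h.choose else none

theorem Fam.col_eq {G : SimpleGraph V} {R : Finset V} {k : ℕ} {Q : Fin (k + 1) → Finset V}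
    (h : Fam G R k Q) {v : V} {i : Fin (k + 1)} (hv : v ∈ Q i) : h.col v = some i := by
  have hex : ∃ i, v ∈ Q i := ⟨i, hv⟩
  unfold Fam.col
  rw [dif_pos hex]
  exact congrArg some (h.eq_of_mem hex.choose_spec hv)

theorem fam_tough [Fintype V] [DecidableEq V] {G : SimpleGraph V} (ht : IsTough 15 G)
    {R : Finset V} {k : ℕ} {Q : Fin (k + 1) → Finset V}
    (h : Fam G R k Q) (hk : 1 ≤ k) : 15 * (k + 1) ≤ Rᶜ.card := by
  choose r hr using h.nonempty
  have hinj : Function.Injective r := fun i j hij => h.eq_of_mem (hr i) (hij ▸ hr j)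
  have hc : (Finset.univ.image r).card = k + 1 := by
    rw [Finset.card_image_of_injective _ hinj]; simp
  have := tough_rep ht Rᶜ h.col (Finset.univ.image r) (by
    intro u v hu hv huv
    simp only [Finset.mem_compl, not_not] at hu hv
    obtain ⟨i, hi⟩ := h.cover u hu
    obtain ⟨j, hj⟩ := h.cover v hv
    rw [h.col_eq hi, h.col_eq hj, h.eq_of_adj hi hj huv]) (by
    intro t ht
    obtain ⟨i, -, rfl⟩ := Finset.mem_image.1 ht
    simpa using h.sub i (hr i)) (by
    intro a ha b hb hab
    simp only [Finset.coe_image, Finset.coe_univ, Set.image_univ, Set.mem_range] at ha hb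
    obtain ⟨i, rfl⟩ := ha
    obtain ⟨j, rfl⟩ := hb
    rw [h.col_eq (hr i), h.col_eq (hr j)] at hab
    rw [Option.some.inj hab]) (by omega)
  omega

theorem fam_card [Fintype V] [DecidableEq V] {G : SimpleGraph V}
    {R : Finset V} {k : ℕ} {Q : Fin (k + 1) → Finset V}
    (h : Fam G R k Q) : k + 1 ≤ R.card := by
  choose r hr using h.nonempty
  have hinj : Function.Injective r := fun i j hij => h.eq_of_mem (hr i) (hij ▸ hr j)
  have hc : (Finset.univ.image r).card = k + 1 := by
    rw [Finset.card_image_of_injective _ hinj]; simp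
  rw [← hc]
  apply Finset.card_le_card
  intro t ht
  obtain ⟨i, -, rfl⟩ := Finset.mem_image.1 ht
  exact h.sub i (hr i)

theorem fam_tough' [Fintype V] [DecidableEq V] {G : SimpleGraph V} (ht : IsTough 15 G)
    {R : Finset V} {k : ℕ} {Q : Fin (k + 1) → Finset V}
    (h : Fam G R k Q) (hk : 1 ≤ k) : 16 * (k + 1) ≤ Fintype.card V := by
  have h1 := fam_tough ht h hk
  have h2 := fam_card h
  have h3 := Finset.card_compl_add_card R
  omega
/-! ### Neighbours of cliques and Hall's theorem -/

section hall

variable [Fintype V] [DecidableEq V]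

open Classical in
/-- Vertices outside `Z` with a neighbour in `X`. -/
noncomputable def NY (G : SimpleGraph V) (Z X : Finset V) : Finset V :=
  Finset.univ.filter (fun y => y ∉ Z ∧ ∃ x ∈ X, G.Adj x y)

theorem mem_NY {G : SimpleGraph V} {Z X : Finset V} {y : V} :
    y ∈ NY G Z X ↔ y ∉ Z ∧ ∃ x ∈ X, G.Adj x y := by
  simp [NY]

theorem hall_bound {G : SimpleGraph V} (ht : IsTough 15 G) {Z : Finset V} {k : ℕ}
    {Q : Fin (k + 1) → Finset V} (h : Fam G Z k Q) (hZ : 30 ≤ Zᶜ.card)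
    (Q' : Fin (k + 1) → Finset V) (hsub : ∀ i, Q' i ⊆ Q i) (hne : ∀ i, (Q' i).Nonempty)
    (hrem : ∀ i, (Q i \ Q' i).card ≤ 1) (F : Finset (Fin (k + 1))) :
    14 * F.card ≤ (NY G Z (F.biUnion Q')).card := by
  classical
  rcases F.eq_empty_or_nonempty with rfl | hF
  · simp
  choose r hr using hne
  have hinj : Function.Injective r :=
    fun i j hij => h.eq_of_mem (hsub i (hr i)) (hij ▸ hsub j (hr j))
  set N := NY G Z (F.biUnion Q') with hN
  set D := F.biUnion (fun i => Q i \ Q' i) with hD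
  have hDc : D.card ≤ F.card := by
    calc D.card ≤ ∑ i ∈ F, (Q i \ Q' i).card := Finset.card_biUnion_le
      _ ≤ ∑ i ∈ F, 1 := Finset.sum_le_sum (fun i _ => hrem i)
      _ = F.card := by simp
  have hS : (N ∪ D).card ≤ N.card + D.card := Finset.card_union_le _ _
  let f : V → Option (Fin (k + 1)) := fun v => if ∃ i ∈ F, v ∈ Q' i then h.col v else none
  have hfi : ∀ i ∈ F, ∀ v ∈ Q' i, f v = some i := by
    intro i hi v hv
    have : ∃ i ∈ F, v ∈ Q' i := ⟨i, hi, hv⟩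
    simp only [f, if_pos this, h.col_eq (hsub i hv)]
  have hstep : ∀ i ∈ F, ∀ u ∈ Q' i, ∀ v, v ∉ N ∪ D → G.Adj u v → v ∈ Q' i := by
    intro i hi u hu v hv huv
    simp only [Finset.mem_union, not_or] at hv
    by_cases hvZ : v ∈ Z
    · obtain ⟨j, hj⟩ := h.cover v hvZ
      obtain rfl := h.eq_of_adj (hsub i hu) hj huv
      by_contra hv'
      exact hv.2 (Finset.mem_biUnion.2 ⟨i, hi, Finset.mem_sdiff.2 ⟨hj, hv'⟩⟩)
    · exact absurd (mem_NY.2 ⟨hvZ, u, Finset.mem_biUnion.2 ⟨i, hi, hu⟩, huv⟩) hv.1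
  have hf : ∀ u v, u ∉ N ∪ D → v ∉ N ∪ D → G.Adj u v → f u = f v := by
    intro u v hu hv huv
    by_cases h1 : ∃ i ∈ F, u ∈ Q' i
    · obtain ⟨i, hi, hui⟩ := h1
      rw [hfi i hi u hui, hfi i hi v (hstep i hi u hui v hv huv)]
    · by_cases h2 : ∃ i ∈ F, v ∈ Q' i
      · obtain ⟨i, hi, hvi⟩ := h2
        exact absurd ⟨i, hi, hstep i hi v hvi u hu huv.symm⟩ h1
      · simp only [f, if_neg h1, if_neg h2]
  have hout : ∀ i ∈ F, r i ∉ N ∪ D := by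
    intro i hi hmem
    rcases Finset.mem_union.1 hmem with h1 | h1
    · exact (mem_NY.1 h1).1 (h.sub i (hsub i (hr i)))
    · obtain ⟨j, hj, h2⟩ := Finset.mem_biUnion.1 h1
      rw [Finset.mem_sdiff] at h2
      obtain rfl := h.eq_of_mem h2.1 (hsub i (hr i))
      exact h2.2 (hr _)
  by_cases h2 : 2 ≤ F.card
  · have hc : (F.image r).card = F.card := Finset.card_image_of_injective _ hinj
    have := tough_rep ht (N ∪ D) f (F.image r) hf (by
      intro t ht
      obtain ⟨i, hi, rfl⟩ := Finset.mem_image.1 ht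
      exact hout i hi) (by
      intro a ha b hb hab
      obtain ⟨i, hi, rfl⟩ := Finset.mem_image.1 (Finset.mem_coe.1 ha)
      obtain ⟨j, hj, rfl⟩ := Finset.mem_image.1 (Finset.mem_coe.1 hb)
      rw [hfi i hi _ (hr i), hfi j hj _ (hr j)] at hab
      rw [Option.some.inj hab]) (by omega)
    omega
  · have hF1 : F.card = 1 := by
      have := hF.card_pos
      omega
    obtain ⟨i, rfl⟩ := Finset.card_eq_one.1 hF1
    by_cases hw : ∃ w, w ∉ N ∪ D ∧ w ∉ Q' i
    · obtain ⟨w, hw1, hw2⟩ := hw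
      have hfw : f w = none := by simp [f, hw2]
      have hfr := hfi i (by simp) _ (hr i)
      have hne : r i ≠ w := by
        intro e
        exact hw2 (e ▸ hr i)
      have := tough_rep ht (N ∪ D) f {r i, w} hf (by
        intro t ht
        rcases Finset.mem_insert.1 ht with rfl | ht
        · exact hout i (by simp)
        · rw [Finset.mem_singleton.1 ht]; exact hw1) (by
        intro a ha b hb hab
        simp only [Finset.coe_insert, Finset.coe_singleton, Set.mem_insert_iff,
          Set.mem_singleton_iff] at ha hb
        rcases ha with rfl | rfl <;> rcases hb with rfl | rfl <;> simp_all)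
        (by rw [Finset.card_pair hne])
      rw [Finset.card_pair hne] at this
      omega
    · push Not at hw
      have : Zᶜ ⊆ N := by
        intro y hy
        rw [Finset.mem_compl] at hy
        by_contra hyN
        have h3 : y ∉ N ∪ D := by
          intro h4
          rcases Finset.mem_union.1 h4 with h4 | h4
          · exact hyN h4
          · obtain ⟨j, hj, h5⟩ := Finset.mem_biUnion.1 h4
            exact hy (h.sub j (Finset.mem_sdiff.1 h5).1)
        exact hy (h.sub i (hsub i (hw y h3)))
      have := Finset.card_le_card this
      omega

theorem NY_biUnion {G : SimpleGraph V} {Z : Finset V} {ι : Type*} [DecidableEq ι]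
    (F : Finset ι) (Q : ι → Finset V) :
    NY G Z (F.biUnion Q) ⊆ F.biUnion (fun i => NY G Z (Q i)) := by
  intro y hy
  obtain ⟨h1, x, hx, h2⟩ := mem_NY.1 hy
  obtain ⟨i, hi, hxi⟩ := Finset.mem_biUnion.1 hx
  exact Finset.mem_biUnion.2 ⟨i, hi, mem_NY.2 ⟨h1, x, hxi, h2⟩⟩

theorem hall_sys {G : SimpleGraph V} (ht : IsTough 15 G) {Z : Finset V} {k : ℕ}
    {Q : Fin (k + 1) → Finset V} (h : Fam G Z k Q) (hZ : 30 ≤ Zᶜ.card) :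
    ∃ x y p q : Fin (k + 1) → V, (∀ i, x i ∉ Z) ∧ (∀ i, y i ∉ Z) ∧ Function.Injective x ∧
      Function.Injective y ∧ (∀ i j, x i ≠ y j) ∧ (∀ i, p i ∈ Q i) ∧ (∀ i, q i ∈ Q i) ∧
      (∀ i, G.Adj (p i) (x i)) ∧ (∀ i, G.Adj (q i) (y i)) ∧ (∀ i, p i = q i → Q i = {p i}) := by
  classical
  obtain ⟨g, ginj, hg⟩ := (Finset.all_card_le_biUnion_card_iff_exists_injective
    (fun z : Fin (k + 1) × Fin 4 => NY G Z (Q z.1))).1 (by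
    intro A
    have h1 : A.card ≤ 4 * (A.image Prod.fst).card := by
      calc A.card ≤ ((A.image Prod.fst) ×ˢ (Finset.univ : Finset (Fin 4))).card := by
            apply Finset.card_le_card
            intro z hz
            simp only [Finset.mem_product, Finset.mem_univ, and_true]
            exact Finset.mem_image_of_mem _ hz
        _ = 4 * (A.image Prod.fst).card := by
            rw [Finset.card_product]; simp [mul_comm]
    have h2 := hall_bound ht h hZ Q (fun i => le_rfl) h.nonempty (by simp) (A.image Prod.fst)
    have h3 := Finset.card_le_card (NY_biUnion (G := G) (Z := Z) (A.image Prod.fst) Q)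
    have h4 : (A.image Prod.fst).biUnion (fun i => NY G Z (Q i)) =
        A.biUnion (fun z => NY G Z (Q z.1)) := Finset.image_biUnion
    rw [h4] at h3
    omega)
  have hg' : ∀ z, g z ∉ Z ∧ ∃ a ∈ Q z.1, G.Adj a (g z) := fun z => mem_NY.1 (hg z)
  choose hgZ a ha hag using hg'
  let t : Fin (k + 1) → Prop := fun i => ∃ s s' : Fin 4, s ≠ s' ∧ a (i, s) = a (i, s') ∧
    Q i ≠ {a (i, s)}
  have hss : ∀ i, ∃ s s' : Fin 4, s ≠ s' ∧ (t i → a (i, s) = a (i, s') ∧ Q i ≠ {a (i, s)}) := by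
    intro i
    by_cases hi : t i
    · obtain ⟨s, s', h1, h2⟩ := hi
      exact ⟨s, s', h1, fun _ => h2⟩
    · exact ⟨0, 1, by decide, fun h' => absurd h' hi⟩
  choose s s' hs1 hs2 using hss
  let σ : Fin (k + 1) → Bool → Finset (Fin 4) := fun i b =>
    if t i then {s i, s' i} else if b = true then {2, 3} else {0, 1}
  have hσ : ∀ i b, (σ i b).card = 2 := by
    intro i b
    simp only [σ]
    split_ifs
    · exact Finset.card_pair (hs1 i)
    · rfl
    · rfl
  let E : Fin (k + 1) × Bool → Finset V := fun z => (σ z.1 z.2).image (fun s => g (z.1, s))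
  have hE : ∀ z, (E z).card = 2 := by
    intro z
    rw [← hσ z.1 z.2]
    apply Finset.card_image_of_injective
    intro s1 s2 h12
    simpa using ginj h12
  let Q' : Fin (k + 1) → Finset V := fun i => if t i then (Q i).erase (a (i, s i)) else Q i
  let D : Fin (k + 1) × Bool → Finset V := fun z =>
    if t z.1 ∧ z.2 = true then NY G Z (Q' z.1) else E z
  have hQ'sub : ∀ i, Q' i ⊆ Q i := by
    intro i
    simp only [Q']
    split_ifs
    · exact Finset.erase_subset _ _
    · exact le_rfl
  have hQ'ne : ∀ i, (Q' i).Nonempty := by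
    intro i
    simp only [Q']
    split_ifs with hi
    · have h1 := (hs2 i hi).2
      have h2 := ha (i, s i)
      rw [Finset.nonempty_iff_ne_empty]
      intro h3
      rw [Finset.erase_eq_empty_iff] at h3
      rcases h3 with h3 | h3
      · rw [h3] at h2; simp at h2
      · exact h1 h3
    · exact h.nonempty i
  have hQ'rem : ∀ i, (Q i \ Q' i).card ≤ 1 := by
    intro i
    simp only [Q']
    split_ifs with hi
    · calc (Q i \ (Q i).erase (a (i, s i))).card ≤ ({a (i, s i)} : Finset V).card := by
            apply Finset.card_le_card
            intro v hv
            simp only [Finset.mem_sdiff, Finset.mem_erase, not_and, Finset.mem_singleton] at hv ⊢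
            by_contra h'
            exact hv.2 h' hv.1
        _ = 1 := by simp
    · simp
  obtain ⟨w, winj, hw⟩ := (Finset.all_card_le_biUnion_card_iff_exists_injective D).1 (by
    intro A
    let A1 := A.filter (fun z => ¬ (t z.1 ∧ z.2 = true))
    let A2 := A.filter (fun z => (t z.1 ∧ z.2 = true))
    have hA : A2.card + A1.card = A.card := Finset.card_filter_add_card_filter_not _
    have h1 : 2 * A1.card ≤ (A.biUnion D).card := by
      have e1 : (A1.biUnion E).card = 2 * A1.card := by
        rw [Finset.card_biUnion]
        · simp [hE, mul_comm]
        · rintro ⟨i, b⟩ hz ⟨i', b'⟩ hz' hne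
          rw [Function.onFun, Finset.disjoint_left]
          intro v hv hv'
          obtain ⟨c, hc, rfl⟩ := Finset.mem_image.1 hv
          obtain ⟨c', hc', hcc⟩ := Finset.mem_image.1 hv'
          have h4 := ginj hcc
          simp only [Prod.mk.injEq] at h4
          obtain ⟨rfl, rfl⟩ := h4
          simp only [A1, Finset.coe_filter, Set.mem_ofPred_eq] at hz hz'
          by_cases hti : t i'
          · apply hne
            have e1 : b = false := by
              by_contra h'
              exact hz.2 ⟨hti, by simpa using h'⟩
            have e2 : b' = false := by
              by_contra h'
              exact hz'.2 ⟨hti, by simpa using h'⟩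
            rw [e1, e2]
          · simp only [σ, if_neg hti] at hc hc'
            cases b <;> cases b'
            · exact hne rfl
            · fin_cases c' <;> simp at hc hc'
            · fin_cases c' <;> simp at hc hc'
            · exact hne rfl
      rw [← e1]
      apply Finset.card_le_card
      intro v hv
      obtain ⟨z, hz, hv⟩ := Finset.mem_biUnion.1 hv
      simp only [A1, Finset.mem_filter] at hz
      exact Finset.mem_biUnion.2 ⟨z, hz.1, by simp only [D, if_neg hz.2]; exact hv⟩
    have h2 : 14 * A2.card ≤ (A.biUnion D).card := by
      have e1 : (A2.image Prod.fst).card = A2.card := by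
        apply Finset.card_image_of_injOn
        rintro ⟨i, b⟩ hz ⟨i', b'⟩ hz' hne
        simp only [A2, Finset.coe_filter, Set.mem_ofPred_eq] at hz hz' hne
        rw [hne, hz.2.2, hz'.2.2]
      have e2 := hall_bound ht h hZ Q' hQ'sub hQ'ne hQ'rem (A2.image Prod.fst)
      rw [e1] at e2
      refine e2.trans (Finset.card_le_card ?_)
      refine (NY_biUnion _ _).trans ?_
      rw [Finset.image_biUnion]
      intro v hv
      obtain ⟨z, hz, hv⟩ := Finset.mem_biUnion.1 hv
      simp only [A2, Finset.mem_filter] at hz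
      exact Finset.mem_biUnion.2 ⟨z, hz.1, by simp only [D, if_pos hz.2]; exact hv⟩
    omega)
  have main : ∀ i, ∃ p q, p ∈ Q i ∧ q ∈ Q i ∧ G.Adj p (w (i, false)) ∧ G.Adj q (w (i, true)) ∧
      (p = q → Q i = {p}) := by
    intro i
    have w0 := hw (i, false)
    have w1 := hw (i, true)
    by_cases hi : t i
    · simp only [D, hi, E, σ, Q', Bool.false_eq_true, and_false, if_false, and_self, if_true] at w0 w1
      obtain ⟨-, q, hq, hqw⟩ := mem_NY.1 w1
      rw [Finset.mem_erase] at hq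
      obtain ⟨c, hc, hcw⟩ := Finset.mem_image.1 w0
      have hac : a (i, c) = a (i, s i) := by
        rcases Finset.mem_insert.1 hc with rfl | hc
        · rfl
        · rw [Finset.mem_singleton.1 hc]; exact (hs2 i hi).1.symm
      refine ⟨a (i, s i), q, ha _, hq.2, ?_, hqw, fun e => absurd e.symm hq.1⟩
      rw [← hac, ← hcw]
      exact hag _
    · simp only [D, hi, E, σ, false_and, if_false, Bool.false_eq_true, if_true] at w0 w1
      obtain ⟨c, hc, hcw⟩ := Finset.mem_image.1 w0
      obtain ⟨c', hc', hcw'⟩ := Finset.mem_image.1 w1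
      refine ⟨a (i, c), a (i, c'), ha _, ha _, hcw ▸ hag _, hcw' ▸ hag _, ?_⟩
      intro e
      by_contra hQ
      apply hi
      refine ⟨c, c', ?_, e, hQ⟩
      rintro rfl
      fin_cases c <;> simp at hc hc'
  have hwZ : ∀ z, w z ∉ Z := by
    intro z
    have := hw z
    simp only [D] at this
    split_ifs at this
    · exact (mem_NY.1 this).1
    · obtain ⟨c, hc, hcw⟩ := Finset.mem_image.1 this
      rw [← hcw]
      exact hgZ _
  choose p q hp hq hpw hqw hpq using main
  refine ⟨fun i => w (i, false), fun i => w (i, true), p, q, fun i => hwZ _, fun i => hwZ _,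
    ?_, ?_, ?_, hp, hq, hpw, hqw, hpq⟩
  · intro i j hij
    simpa using winj hij
  · intro i j hij
    simpa using winj hij
  · intro i j hij
    simpa using winj hij

end hall
/-! ### Linking cliques into a cycle -/

section link

variable [DecidableEq V]

theorem clique_path {G : SimpleGraph V} {K X : Finset V} {p q : V}
    (hK : ∀ u ∈ K, ∀ v ∈ K, u ≠ v → G.Adj u v) (hp : p ∈ K) (hq : q ∈ K) (hpX : p ∉ X)
    (hqX : q ∉ X) (hpq : p = q → K = {p}) :
    ∃ l, PL G p q l ∧ (∀ v ∈ l, v ∈ K ∧ v ∉ X) ∧ ∀ v ∈ K, v ∉ X → v ∈ l := by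
  by_cases e : p = q
  · have hK' := hpq e
    subst e
    refine ⟨[p], PL.single p, by simp [hp, hpX], ?_⟩
    intro v hv _
    rw [hK'] at hv
    simpa using hv
  · let M := (((K \ X).erase p).erase q).toList
    have hM : ∀ v, v ∈ M ↔ v ≠ q ∧ v ≠ p ∧ v ∈ K ∧ v ∉ X := by
      intro v
      simp [M]
    have hnd : (p :: (M ++ [q])).Nodup := by
      rw [List.nodup_cons, List.nodup_append]
      refine ⟨?_, Finset.nodup_toList _, by simp, ?_⟩
      · simp only [List.mem_append, hM, List.mem_singleton]
        rintro (h | h)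
        · exact h.2.1 rfl
        · exact e h
      · intro a ha b hb hab
        rw [List.mem_singleton] at hb
        rw [hM] at ha
        exact ha.1 (hab.trans hb)
    have hmem : ∀ v ∈ p :: (M ++ [q]), v ∈ K ∧ v ∉ X := by
      intro v hv
      simp only [List.mem_cons, List.mem_append, hM, List.not_mem_nil, or_false] at hv
      rcases hv with rfl | h | rfl
      · exact ⟨hp, hpX⟩
      · exact h.2.2
      · exact ⟨hq, hqX⟩
    refine ⟨p :: (M ++ [q]), ⟨?_, hnd, by simp, ?_⟩, hmem, ?_⟩
    · apply List.Pairwise.isChain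
      refine List.Pairwise.imp_of_mem ?_ hnd
      intro a b ha hb hab
      exact hK a (hmem a ha).1 b (hmem b hb).1 hab
    · rw [← List.cons_append, List.getLast?_append]
      simp
    · intro v hv hvX
      simp only [List.mem_cons, List.mem_append, hM, List.not_mem_nil, or_false]
      tauto

theorem concat_paths {G : SimpleGraph V} {k : ℕ} {seg : Fin (k + 1) → List V}
    {s t : Fin (k + 1) → V} (hseg : ∀ i, PL G (s i) (t i) (seg i))
    (hadj : ∀ i, G.Adj (t i) (s (i + 1))) (hd : ∀ i j, i ≠ j → ∀ v ∈ seg i, v ∉ seg j)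
    (n : ℕ) (hn : n < k + 1) :
    ∃ l, PL G (s 0) (t ⟨n, hn⟩) l ∧ ∀ v, v ∈ l ↔ ∃ i : Fin (k + 1), i.val ≤ n ∧ v ∈ seg i := by
  induction n with
  | zero =>
    refine ⟨seg 0, hseg 0, ?_⟩
    intro v
    constructor
    · intro hv
      exact ⟨0, by simp, hv⟩
    · rintro ⟨i, hi, hv⟩
      have : i = 0 := by
        apply Fin.ext
        simpa using hi
      rwa [this] at hv
  | succ n ih =>
    obtain ⟨l, hl, hm⟩ := ih (by omega)
    have hsucc : (⟨n, by omega⟩ : Fin (k + 1)) + 1 = ⟨n + 1, hn⟩ := by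
      apply Fin.ext
      rw [Fin.val_add_one_of_lt']
      exact hn
    refine ⟨l ++ seg ⟨n + 1, hn⟩, hl.append (hseg _) (hsucc ▸ hadj _) ?_, ?_⟩
    · intro v hv
      obtain ⟨i, hi, hvi⟩ := (hm v).1 hv
      apply hd i _ ?_ v hvi
      rintro rfl
      simp at hi
    · intro v
      rw [List.mem_append, hm]
      constructor
      · rintro (⟨i, hi, hv⟩ | hv)
        · exact ⟨i, by omega, hv⟩
        · exact ⟨_, le_rfl, hv⟩
      · rintro ⟨i, hi, hv⟩
        rcases Nat.lt_or_ge n i.val with h | h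
        · right
          have : i = ⟨n + 1, hn⟩ := by
            apply Fin.ext
            simp only
            omega
          rwa [this] at hv
        · exact Or.inl ⟨i, h, hv⟩

theorem links {G : SimpleGraph V} {k c e : ℕ} (A W : Finset V) (a b : Fin (k + 1) → V)
    (ha : Function.Injective a) (hb : Function.Injective b) (hab : ∀ i j, a i ≠ b j)
    (haW : ∀ i, a i ∉ W) (hbW : ∀ i, b i ∉ W) (hWA : (W ∩ A).card ≤ e)
    (hc : ∀ i, (({a i, b i} : Finset V) ∩ A).card ≤ c)
    (hlink : ∀ i, ∀ U : Finset V, a i ∉ U → b i ∉ U → (U ∩ A).card ≤ c * k + e →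
      ∃ l, PL G (a i) (b i) l ∧ (∀ v ∈ l, v ∉ U) ∧ (l.toFinset ∩ A).card ≤ c) :
    ∃ P : Fin (k + 1) → List V, (∀ i, PL G (a i) (b i) (P i)) ∧ (∀ i, ∀ v ∈ P i, v ∉ W) ∧
      ∀ i j, i ≠ j → ∀ v ∈ P i, v ∉ P j := by
  have main : ∀ s : Finset (Fin (k + 1)), ∃ P : Fin (k + 1) → List V,
      (∀ i, a i ∈ P i) ∧ (∀ i, b i ∈ P i) ∧ (∀ i, ((P i).toFinset ∩ A).card ≤ c) ∧
      (∀ i ∈ s, PL G (a i) (b i) (P i)) ∧ (∀ i, ∀ v ∈ P i, v ∉ W) ∧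
      ∀ i j, i ≠ j → ∀ v ∈ P i, v ∉ P j := by
    intro s
    induction s using Finset.induction_on with
    | empty =>
      refine ⟨fun i => [a i, b i], by simp, by simp, ?_, by simp, ?_, ?_⟩
      · intro i
        simpa using hc i
      · intro i v hv
        simp only [List.mem_cons, List.not_mem_nil, or_false] at hv
        rcases hv with rfl | rfl
        · exact haW i
        · exact hbW i
      · intro i j hij v hv
        simp only [List.mem_cons, List.not_mem_nil, or_false, not_or] at hv ⊢
        rcases hv with rfl | rfl
        · exact ⟨fun h => hij (ha h), hab _ _⟩
        · exact ⟨(hab _ _).symm, fun h => hij (hb h)⟩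
    | insert i s hi ih =>
      obtain ⟨P, h1, h2, h3, h4, h5, h6⟩ := ih
      let U := W ∪ (Finset.univ.erase i).biUnion (fun j => (P j).toFinset)
      have hU : ∀ v, v ∉ U ↔ v ∉ W ∧ ∀ j, j ≠ i → v ∉ P j := by
        intro v
        simp [U]
      obtain ⟨l, hl1, hl2, hl3⟩ := hlink i U
        ((hU _).2 ⟨haW i, fun j hj => h6 i j hj.symm _ (h1 i)⟩)
        ((hU _).2 ⟨hbW i, fun j hj => h6 i j hj.symm _ (h2 i)⟩) (by
          have e1 : U ∩ A ⊆ (W ∩ A) ∪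
              (Finset.univ.erase i).biUnion (fun j => (P j).toFinset ∩ A) := by
            intro v hv
            simp only [U, Finset.mem_inter, Finset.mem_union, Finset.mem_biUnion] at hv ⊢
            rcases hv with ⟨h | ⟨j, hj, h⟩, hA⟩
            · exact Or.inl ⟨h, hA⟩
            · exact Or.inr ⟨j, hj, h, hA⟩
          have e2 : ((Finset.univ.erase i).biUnion (fun j => (P j).toFinset ∩ A)).card ≤
              k * c := by
            refine (Finset.card_biUnion_le_card_mul _ _ c (fun j _ => h3 j)).trans ?_
            simp
          have e3 := Finset.card_le_card e1
          have e4 := Finset.card_union_le (W ∩ A)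
            ((Finset.univ.erase i).biUnion (fun j => (P j).toFinset ∩ A))
          rw [mul_comm k c] at e2
          omega)
      have hl2' : ∀ v ∈ l, v ∉ W ∧ ∀ j, j ≠ i → v ∉ P j := fun v hv => (hU v).1 (hl2 v hv)
      have hupd : ∀ j, j ≠ i → Function.update P i l j = P j := fun j hj =>
        Function.update_of_ne hj _ _
      have hupi : Function.update P i l i = l := Function.update_self _ _ _
      refine ⟨Function.update P i l, ?_, ?_, ?_, ?_, ?_, ?_⟩
      · intro j
        by_cases hj : j = i
        · subst hj; rw [hupi]; exact hl1.left_mem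
        · rw [hupd j hj]; exact h1 j
      · intro j
        by_cases hj : j = i
        · subst hj; rw [hupi]; exact hl1.right_mem
        · rw [hupd j hj]; exact h2 j
      · intro j
        by_cases hj : j = i
        · subst hj; rw [hupi]; exact hl3
        · rw [hupd j hj]; exact h3 j
      · intro j hjs
        by_cases hj : j = i
        · subst hj; rw [hupi]; exact hl1
        · rw [hupd j hj]; exact h4 j (Finset.mem_of_mem_insert_of_ne hjs hj)
      · intro j
        by_cases hj : j = i
        · subst hj; rw [hupi]; exact fun v hv => (hl2' v hv).1
        · rw [hupd j hj]; exact h5 j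
      · intro j j' hjj v
        by_cases hj : j = i
        · subst hj
          rw [hupi, hupd j' hjj.symm]
          exact fun hv => (hl2' v hv).2 j' hjj.symm
        · rw [hupd j hj]
          by_cases hj' : j' = i
          · subst hj'
            rw [hupi]
            exact fun hv hv' => (hl2' v hv').2 j hj hv
          · rw [hupd j' hj']
            exact h6 j j' hjj v
  obtain ⟨P, h1, h2, h3, h4, h5, h6⟩ := main Finset.univ
  exact ⟨P, fun i => h4 i (Finset.mem_univ _), h5, h6⟩

theorem link_cycle [Fintype V] {G : SimpleGraph V} (ht : IsTough 15 G) {Z : Finset V} {k : ℕ}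
    {Q : Fin (k + 1) → Finset V} (h : Fam G Z k Q) (hZ : 30 ≤ Zᶜ.card) (A : Finset V) (c e : ℕ)
    (he : ∀ p q : Fin (k + 1) → V, (∀ i, p i ∈ Q i) → (∀ i, q i ∈ Q i) →
      ((Finset.univ.image p ∪ Finset.univ.image q) ∩ A).card ≤ e)
    (hc : ∀ x y, x ∉ Z → y ∉ Z → (({x, y} : Finset V) ∩ A).card ≤ c)
    (hlink : ∀ x y, ∀ U : Finset V, x ∉ Z → y ∉ Z → (∃ z ∈ Z, G.Adj z x) →
      (∃ z ∈ Z, G.Adj z y) → x ≠ y → x ∉ U → y ∉ U → (U ∩ A).card ≤ c * k + e →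
      ∃ l, PL G x y l ∧ (∀ v ∈ l, v ∉ U) ∧ (l.toFinset ∩ A).card ≤ c) :
    ∃ l, IsCyc G l ∧ ∀ z ∈ Z, z ∈ l := by
  obtain ⟨x, y, p, q, hxZ, hyZ, hx, hy, hxy, hp, hq, hpx, hqy, hpq⟩ := hall_sys ht h hZ
  have hpZ : ∀ i, p i ∈ Z := fun i => h.sub i (hp i)
  have hqZ : ∀ i, q i ∈ Z := fun i => h.sub i (hq i)
  set W := Finset.univ.image p ∪ Finset.univ.image q with hW
  have hWZ : ∀ v ∈ W, v ∈ Z := by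
    intro v hv
    simp only [hW, Finset.mem_union, Finset.mem_image, Finset.mem_univ, true_and] at hv
    rcases hv with ⟨i, rfl⟩ | ⟨i, rfl⟩
    · exact hpZ i
    · exact hqZ i
  obtain ⟨P, hP1, hP2, hP3⟩ := links (G := G) (k := k) (c := c) (e := e) A W y
    (fun i => x (i + 1)) hy
    (fun i j hij => add_right_cancel (hx hij)) (fun i j => (hxy _ _).symm)
    (fun i hi => hyZ i (hWZ _ hi)) (fun i hi => hxZ _ (hWZ _ hi)) (he p q hp hq)
    (fun i => hc _ _ (hyZ i) (hxZ _))
    (fun i U h1 h2 h3 => hlink (y i) (x (i + 1)) U (hyZ i) (hxZ _) ⟨q i, hqZ i, hqy i⟩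
      ⟨p (i + 1), hpZ _, hpx _⟩ (hxy _ _).symm h1 h2 h3)
  let X := Finset.univ.biUnion (fun i => (P i).toFinset)
  have hX : ∀ v, v ∉ X ↔ ∀ i, v ∉ P i := by
    intro v
    simp [X]
  have hpW : ∀ i, p i ∈ W := fun i => by simp [hW]
  have hqW : ∀ i, q i ∈ W := fun i => by simp [hW]
  choose R hR1 hR2 hR3 using fun i => clique_path (G := G) (X := X) (h.clique i) (hp i) (hq i)
    ((hX _).2 (fun j hj => hP2 j _ hj (hpW i))) ((hX _).2 (fun j hj => hP2 j _ hj (hqW i))) (hpq i)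
  have hRP : ∀ i j, ∀ v ∈ R i, v ∉ P j := fun i j v hv => (hX v).1 (hR2 i v hv).2 j
  have hseg : ∀ i, PL G (p i) (x (i + 1)) (R i ++ P i) := fun i =>
    (hR1 i).append (hP1 i) (hqy i) (hRP i i)
  obtain ⟨l, hl1, hl2⟩ := concat_paths hseg (fun i => (hpx (i + 1)).symm) (by
    intro i j hij v hv
    rw [List.mem_append] at hv ⊢
    rintro (h1 | h1)
    · rcases hv with h2 | h2
      · exact hij (h.eq_of_mem (hR2 i v h2).1 (hR2 j v h1).1)
      · exact hRP j i v h1 h2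
    · rcases hv with h2 | h2
      · exact hRP i j v h2 h1
      · exact hP3 i j hij v h2 h1) k (by omega)
  have hall : ∀ i, ∀ v ∈ R i ++ P i, v ∈ l := fun i v hv => (hl2 v).2 ⟨i, by omega, hv⟩
  refine ⟨l, hl1.isCyc ?_ ?_, ?_⟩
  · have : (⟨k, by omega⟩ : Fin (k + 1)) + 1 = 0 := by
      have := Fin.last_add_one k
      exact this
    rw [this]
    exact (hpx 0).symm
  · have hsub : ([p 0, y 0, x (0 + 1)] : List V).Subperm l := by
      apply List.subperm_of_subset
      · have h1 : p 0 ≠ y 0 := fun e => hyZ 0 (e ▸ hpZ 0)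
        have h2 : p 0 ≠ x (0 + 1) := fun e => hxZ (0 + 1) (e ▸ hpZ 0)
        have h3 : y 0 ≠ x (0 + 1) := (hxy _ _).symm
        simp only [List.nodup_cons, List.mem_cons, List.not_mem_nil, or_false, not_or]
        exact ⟨⟨h1, h2⟩, h3, by simp⟩
      · intro v hv
        simp only [List.mem_cons, List.not_mem_nil, or_false] at hv
        apply hall 0 v
        rw [List.mem_append]
        rcases hv with rfl | rfl | rfl
        · exact Or.inl (hR1 0).left_mem
        · exact Or.inr (hP1 0).left_mem
        · exact Or.inr (hP1 0).right_mem
    exact hsub.length_le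
  · intro z hz
    obtain ⟨i, hi⟩ := h.cover z hz
    by_cases hzX : z ∈ X
    · simp only [X, Finset.mem_biUnion, Finset.mem_univ, true_and, List.mem_toFinset] at hzX
      obtain ⟨j, hj⟩ := hzX
      exact hall j z (List.mem_append.2 (Or.inr hj))
    · exact hall i z (List.mem_append.2 (Or.inl (hR3 i z hi hzX)))

end link
/-! ### A large clique -/

section bigclique

variable [Fintype V] [DecidableEq V]

theorem filter_le_degree (G : SimpleGraph V) [DecidableRel G.Adj] (v : V) (K : Finset V) :
    (K.filter (fun w => G.Adj v w)).card ≤ G.degree v := by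
  rw [← G.card_neighborFinset_eq_degree]
  apply Finset.card_le_card
  intro w hw
  simpa using (Finset.mem_filter.1 hw).2

theorem clique_degree (G : SimpleGraph V) [DecidableRel G.Adj] {K : Finset V}
    (hK : ∀ u ∈ K, ∀ v ∈ K, u ≠ v → G.Adj u v) {v : V} (hv : v ∈ K) :
    K.card ≤ G.degree v + 1 := by
  have h1 := filter_le_degree G v K
  have h2 : K.erase v ⊆ K.filter (fun w => G.Adj v w) := by
    intro w hw
    rw [Finset.mem_erase] at hw
    exact Finset.mem_filter.2 ⟨hw.2, hK v hv w hw.2 (Ne.symm hw.1)⟩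
  have h3 := Finset.card_le_card h2
  rw [Finset.card_erase_of_mem hv] at h3
  omega

/-- Vertices with few neighbours in the clique `K`. -/
def farSet (G : SimpleGraph V) [DecidableRel G.Adj] (K : Finset V) : Finset V :=
  Finset.univ.filter (fun v => v ∉ K ∧ 3 * (K.filter (fun w => G.Adj v w)).card + 2 ≤ K.card)

theorem mem_farSet {G : SimpleGraph V} [DecidableRel G.Adj] {K : Finset V} {v : V} :
    v ∈ farSet G K ↔ v ∉ K ∧ 3 * (K.filter (fun w => G.Adj v w)).card + 2 ≤ K.card := by
  simp [farSet]

theorem farSet_clus {G : SimpleGraph V} [DecidableRel G.Adj] (hfree : P2P3Free G) {K : Finset V}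
    (hK : ∀ u ∈ K, ∀ v ∈ K, u ≠ v → G.Adj u v) : Clus G (farSet G K) := by
  intro a ha b hb c hc hab hbc hac
  by_contra hnac
  rw [mem_farSet] at ha hb hc
  set A := K.filter (fun w => G.Adj a w)
  set B := K.filter (fun w => G.Adj b w)
  set C := K.filter (fun w => G.Adj c w)
  have h1 := Finset.card_union_le (A ∪ B) C
  have h2 := Finset.card_union_le A B
  have h3 := Finset.le_card_sdiff (A ∪ B ∪ C) K
  obtain ⟨u, hu, v, hv, huv⟩ := Finset.one_lt_card.1 (show 1 < (K \ (A ∪ B ∪ C)).card by omega)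
  simp only [A, B, C, Finset.mem_sdiff, Finset.mem_union, Finset.mem_filter, not_or, not_and] at hu hv
  exact p2p3_s11 hfree (hK u hu.1 v hv.1 huv) hab hbc hac hnac
    (fun h => hu.2.1.1 hu.1 h.symm) (fun h => hu.2.1.2 hu.1 h.symm) (fun h => hu.2.2 hu.1 h.symm)
    (fun h => hv.2.1.1 hv.1 h.symm) (fun h => hv.2.1.2 hv.1 h.symm) (fun h => hv.2.2 hv.1 h.symm)

theorem low_sub_far {G : SimpleGraph V} [DecidableRel G.Adj] {K : Finset V}
    (hK : ∀ u ∈ K, ∀ v ∈ K, u ≠ v → G.Adj u v) (hbig : 3 * Fintype.card V ≤ 16 * K.card)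
    {v : V} (hv : 16 * (G.degree v + 1) ≤ Fintype.card V) : v ∈ farSet G K := by
  rw [mem_farSet]
  constructor
  · intro hvK
    have := clique_degree G hK hvK
    omega
  · have := filter_le_degree G v K
    omega

theorem far_cycle {G : SimpleGraph V} [DecidableRel G.Adj] (ht : IsTough 15 G)
    {K : Finset V}
    (hK : ∀ u ∈ K, ∀ v ∈ K, u ≠ v → G.Adj u v) (h30 : 30 ≤ K.card) {k : ℕ}
    {Q : Fin (k + 1) → Finset V} (h : Fam G (farSet G K) k Q) (hm : 6 * (k + 1) ≤ K.card + 4) :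
    ∃ l, IsCyc G l ∧ ∀ z ∈ farSet G K, z ∈ l := by
  have hZK : ∀ z ∈ farSet G K, z ∉ K := fun z hz => (mem_farSet.1 hz).1
  refine link_cycle ht h ?_ K 2 0 ?_ ?_ ?_
  · refine h30.trans (Finset.card_le_card ?_)
    intro v hv
    rw [Finset.mem_compl]
    exact fun h' => hZK v h' hv
  · intro p q hp hq
    rw [Nat.le_zero, Finset.card_eq_zero, Finset.eq_empty_iff_forall_notMem]
    intro v hv
    simp only [Finset.mem_inter, Finset.mem_union, Finset.mem_image, Finset.mem_univ,
      true_and] at hv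
    obtain ⟨⟨i, rfl⟩ | ⟨i, rfl⟩, hvK⟩ := hv
    · exact hZK _ (h.sub i (hp i)) hvK
    · exact hZK _ (h.sub i (hq i)) hvK
  · intro x y _ _
    exact (Finset.card_le_card Finset.inter_subset_left).trans Finset.card_le_two
  · intro x y U hx hy _ _ hxy hxU hyU hU
    have near : ∀ v, v ∉ farSet G K → v ∉ K → ∃ a ∈ K, a ∉ U ∧ G.Adj v a := by
      intro v hv hvK
      rw [mem_farSet] at hv
      have h1 : ¬ (3 * (K.filter (fun w => G.Adj v w)).card + 2 ≤ K.card) := fun h' => hv ⟨hvK, h'⟩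
      have h2 := Finset.le_card_sdiff (U ∩ K) (K.filter (fun w => G.Adj v w))
      obtain ⟨a, ha⟩ := Finset.card_pos.1
        (show 0 < ((K.filter (fun w => G.Adj v w)) \ (U ∩ K)).card by omega)
      simp only [Finset.mem_sdiff, Finset.mem_filter, Finset.mem_inter, not_and] at ha
      exact ⟨a, ha.1.1, fun h' => ha.2 h' ha.1.1, ha.1.2⟩
    have cnt : ∀ (l : List V) (a b : V), (∀ v ∈ l, v ∈ K → v = a ∨ v = b) →
        (l.toFinset ∩ K).card ≤ 2 := by
      intro l a b hl
      refine (Finset.card_le_card (t := {a, b}) ?_).trans Finset.card_le_two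
      intro v hv
      rw [Finset.mem_inter, List.mem_toFinset] at hv
      simpa using hl v hv.1 hv.2
    by_cases hxK : x ∈ K
    · by_cases hyK : y ∈ K
      · have hadj := hK x hxK y hyK hxy
        refine ⟨[x, y], by simp [PL, hadj, hxy], by simp [hxU, hyU], cnt _ x y ?_⟩
        simp
      · obtain ⟨b, hbK, hbU, hyb⟩ := near y hy hyK
        by_cases e : b = x
        · subst e
          refine ⟨[b, y], by simp [PL, hyb.symm, hxy], by simp [hxU, hyU], cnt _ b y ?_⟩
          simp
        · have hadj := hK x hxK b hbK (Ne.symm e)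
          refine ⟨[x, b, y], by simp [PL, hyb.symm, hxy, hadj, Ne.symm e, hyb.ne.symm],
            by simp [hxU, hyU, hbU], cnt _ x b ?_⟩
          simp [hyK]
    · obtain ⟨a, haK, haU, hxa⟩ := near x hx hxK
      by_cases hyK : y ∈ K
      · by_cases e : a = y
        · subst e
          refine ⟨[x, a], by simp [PL, hxa, hxy], by simp [hxU, hyU], cnt _ x a ?_⟩
          simp
        · have hadj := hK a haK y hyK e
          refine ⟨[x, a, y], by simp [PL, hxa, hxy, hadj, e, hxa.ne],
            by simp [hxU, hyU, haU], cnt _ a y ?_⟩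
          simp [hxK]
      · obtain ⟨b, hbK, hbU, hyb⟩ := near y hy hyK
        by_cases e : a = b
        · subst e
          refine ⟨[x, a, y], by simp [PL, hxa, hxy, hyb.symm, hxa.ne, hyb.ne.symm],
            by simp [hxU, hyU, haU], cnt _ a a ?_⟩
          simp [hxK, hyK]
        · have hadj := hK a haK b hbK e
          have e1 : x ≠ b := fun e' => hxK (e' ▸ hbK)
          have e2 : a ≠ y := fun e' => hyK (e' ▸ haK)
          refine ⟨[x, a, b, y], by simp [PL, hxa, hxy, hyb.symm, hxa.ne, hyb.ne.symm, hadj, e, e1, e2],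
            by simp [hxU, hyU, haU, hbU], cnt _ a b ?_⟩
          simp [hxK, hyK]

/-- A clique on at least three eighths of the vertices. -/
theorem cycle_a {G : SimpleGraph V} [DecidableRel G.Adj] (ht : IsTough 15 G)
    (hfree : P2P3Free G) {K L : Finset V}
    (hK : ∀ u ∈ K, ∀ v ∈ K, u ≠ v → G.Adj u v) (hn : 496 ≤ Fintype.card V)
    (hL : ∀ v ∈ L, 16 * (G.degree v + 1) ≤ Fintype.card V) (hLne : L.Nonempty)
    (hbig : 6 * Fintype.card V ≤ 16 * K.card) : ∃ l, IsCyc G l ∧ ∀ z ∈ L, z ∈ l := by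
  have hsub : ∀ v ∈ L, v ∈ farSet G K := fun v hv => low_sub_far hK (by omega) (hL v hv)
  obtain ⟨k, Q, h⟩ := clus_index (farSet_clus hfree hK) (hLne.mono hsub)
  obtain ⟨l, hl1, hl2⟩ := far_cycle ht hK (by omega) h (by
    rcases Nat.eq_zero_or_pos k with rfl | hk
    · omega
    · have := fam_tough' ht h hk
      omega)
  exact ⟨l, hl1, fun z hz => hl2 z (hsub z hz)⟩

theorem fam_sum {G : SimpleGraph V} {R : Finset V} {k : ℕ} {Q : Fin (k + 1) → Finset V}
    (h : Fam G R k Q) : R.card = ∑ i, (Q i).card := by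
  rw [← Finset.card_biUnion]
  · congr 1
    ext v
    simp only [Finset.mem_biUnion, Finset.mem_univ, true_and]
    exact ⟨h.cover v, fun ⟨i, hi⟩ => h.sub i hi⟩
  · intro i _ j _ hij
    rw [Function.onFun, Finset.disjoint_left]
    intro v hi hj
    exact hij (h.eq_of_mem hi hj)

theorem cycle_b {G : SimpleGraph V} [DecidableRel G.Adj] (ht : IsTough 15 G)
    (hfree : P2P3Free G) {S L : Finset V} {k : ℕ} {K : Fin (k + 1) → Finset V}
    (hK : Fam G Sᶜ k K) (hS : 16 * S.card ≤ 7 * Fintype.card V) (hn : 496 ≤ Fintype.card V)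
    (hL : ∀ v ∈ L, 16 * (G.degree v + 1) ≤ Fintype.card V) (hLne : L.Nonempty)
    (i₁ : Fin (k + 1))
    (hbig : 3 * Fintype.card V ≤ 16 * (K i₁).card) : ∃ l, IsCyc G l ∧ ∀ z ∈ L, z ∈ l := by
  by_cases hbig2 : 6 * Fintype.card V ≤ 16 * (K i₁).card
  · exact cycle_a ht hfree (hK.clique i₁) hn hL hLne hbig2
  push Not at hbig2
  have hcard := Finset.card_compl_add_card S
  have hk : 1 ≤ k := by
    by_contra hk
    have hk0 : k = 0 := by omega
    subst hk0
    have := fam_sum hK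
    have e : i₁ = 0 := by apply Fin.ext; simp only [Fin.val_zero]; omega
    subst e
    simp at this
    omega
  have hkS := fam_tough ht hK hk
  rw [compl_compl] at hkS
  obtain ⟨i₂, hi2, hc2⟩ : ∃ i₂, i₂ ≠ i₁ ∧ 2 < (K i₂).card := by
    by_contra hcon
    push Not at hcon
    have h1 := fam_sum hK
    rw [← Finset.add_sum_erase _ _ (Finset.mem_univ i₁)] at h1
    have h2 : ∑ i ∈ Finset.univ.erase i₁, (K i).card ≤ ∑ i ∈ Finset.univ.erase i₁, 2 :=
      Finset.sum_le_sum (fun i hi => hcon i (Finset.ne_of_mem_erase hi))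
    simp at h2
    omega
  obtain ⟨u, hu, v, hv, huv⟩ := Finset.one_lt_card.1 (show 1 < (K i₂).card by omega)
  have hadj := hK.adj hu hv huv
  -- other cliques lie in the far set
  have hfar : ∀ j, j ≠ i₁ → ∀ w ∈ K j, w ∈ farSet G (K i₁) := by
    intro j hj w hw
    rw [mem_farSet]
    refine ⟨fun h' => hj (hK.eq_of_mem hw h'), ?_⟩
    have : (K i₁).filter (fun x => G.Adj w x) = ∅ := by
      rw [Finset.filter_eq_empty_iff]
      intro x hx h'
      exact hj (hK.eq_of_adj hw hx h')
    rw [this]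
    simp
    omega
  have hsub : ∀ v ∈ L, v ∈ farSet G (K i₁) :=
    fun v hv => low_sub_far (hK.clique i₁) (by omega) (hL v hv)
  obtain ⟨m, Q, h⟩ := clus_index (farSet_clus hfree (hK.clique i₁)) (hLne.mono hsub)
  obtain ⟨i₀, hi0⟩ := h.cover u (hfar i₂ hi2 u hu)
  have hv0 : v ∈ Q i₀ := by
    obtain ⟨j, hj⟩ := h.cover v (hfar i₂ hi2 v hv)
    rwa [h.eq_of_adj hi0 hj hadj]
  have hanti : ∀ i, i ≠ i₀ → ∀ z ∈ Q i, ∀ a ∈ K i₁, ¬ G.Adj z a := by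
    intro i hi z hz a ha hza
    have hzf := mem_farSet.1 (h.sub i hz)
    obtain ⟨b, hb, hzb⟩ : ∃ b ∈ K i₁, ¬ G.Adj z b := by
      by_contra hcon
      push Not at hcon
      rw [Finset.filter_true_of_mem hcon] at hzf
      omega
    have hab : a ≠ b := by
      rintro rfl
      exact hzb hza
    have hne : z ≠ b := by
      rintro rfl
      exact hzf.1 hb
    exact p2p3_s11 hfree hadj hza (hK.adj ha hb hab) hne hzb
      (h.anti i₀ i hi.symm u hi0 z hz).2 (hK.anti i₂ i₁ hi2 u hu a ha).2
      (hK.anti i₂ i₁ hi2 u hu b hb).2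
      (h.anti i₀ i hi.symm v hv0 z hz).2 (hK.anti i₂ i₁ hi2 v hv a ha).2
      (hK.anti i₂ i₁ hi2 v hv b hb).2
  have hcount : 240 * (m + 1) ≤ 7 * Fintype.card V := by
    rcases Nat.eq_zero_or_pos m with rfl | hm
    · omega
    classical
    choose r hr using h.nonempty
    have hinj : Function.Injective r := fun i j hij => h.eq_of_mem (hr i) (hij ▸ hr j)
    have hc : (Finset.univ.image r).card = m + 1 := by
      rw [Finset.card_image_of_injective _ hinj]; simp
    let f : V → Option (Fin (m + 1)) := fun v => if ∃ i, i ≠ i₀ ∧ v ∈ Q i then h.col v else none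
    have hf1 : ∀ i, i ≠ i₀ → ∀ v ∈ Q i, f v = some i := by
      intro i hi v hv
      have : ∃ i, i ≠ i₀ ∧ v ∈ Q i := ⟨i, hi, hv⟩
      simp only [f, if_pos this, h.col_eq hv]
    have hf0 : ∀ v ∈ Q i₀, f v = none := by
      intro v hv
      have : ¬ ∃ i, i ≠ i₀ ∧ v ∈ Q i := fun ⟨i, hi, hvi⟩ => hi (h.eq_of_mem hvi hv)
      simp only [f, if_neg this]
    have hstep : ∀ i, i ≠ i₀ → ∀ z ∈ Q i, ∀ w, w ∉ S \ farSet G (K i₁) → G.Adj z w → w ∈ Q i := by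
      intro i hi z hz w hw hzw
      have hwf : w ∈ farSet G (K i₁) := by
        by_contra hwf
        have hwS : w ∈ Sᶜ := by
          rw [Finset.mem_compl]
          exact fun h' => hw (Finset.mem_sdiff.2 ⟨h', hwf⟩)
        obtain ⟨j, hj⟩ := hK.cover w hwS
        by_cases hj1 : j = i₁
        · subst hj1
          exact hanti i hi z hz w hj hzw
        · exact hwf (hfar j hj1 w hj)
      obtain ⟨j, hj⟩ := h.cover w hwf
      rwa [h.eq_of_adj hz hj hzw]
    have := tough_rep ht (S \ farSet G (K i₁)) f (Finset.univ.image r) (by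
      intro a b ha hb hab
      by_cases h1 : ∃ i, i ≠ i₀ ∧ a ∈ Q i
      · obtain ⟨i, hi, hai⟩ := h1
        rw [hf1 i hi a hai, hf1 i hi b (hstep i hi a hai b hb hab)]
      · by_cases h2 : ∃ i, i ≠ i₀ ∧ b ∈ Q i
        · obtain ⟨i, hi, hbi⟩ := h2
          exact absurd ⟨i, hi, hstep i hi b hbi a ha hab.symm⟩ h1
        · simp only [f, if_neg h1, if_neg h2]) (by
      intro t ht
      obtain ⟨i, -, rfl⟩ := Finset.mem_image.1 ht
      intro h'
      exact (Finset.mem_sdiff.1 h').2 (h.sub i (hr i))) (by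
      intro a ha b hb hab
      simp only [Finset.coe_image, Finset.coe_univ, Set.image_univ, Set.mem_range] at ha hb
      obtain ⟨i, rfl⟩ := ha
      obtain ⟨j, rfl⟩ := hb
      by_cases hi : i = i₀
      · by_cases hj : j = i₀
        · rw [hi, hj]
        · rw [hi, hf0 _ (hr i₀), hf1 j hj _ (hr j)] at hab
          simp at hab
      · by_cases hj : j = i₀
        · rw [hj, hf0 _ (hr i₀), hf1 i hi _ (hr i)] at hab
          simp at hab
        · rw [hf1 j hj _ (hr j), hf1 i hi _ (hr i)] at hab
          rw [Option.some.inj hab]) (by omega)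
    have h2 := Finset.card_le_card (Finset.sdiff_subset (s := S) (t := farSet G (K i₁)))
    omega
  obtain ⟨l, hl1, hl2⟩ := far_cycle ht (hK.clique i₁) (by omega) h (by omega)
  exact ⟨l, hl1, fun z hz => hl2 z (hsub z hz)⟩

end bigclique
/-! ### All cliques are small -/

section smallcliques

variable [Fintype V] [DecidableEq V]

theorem fam_edge {G : SimpleGraph V} {R : Finset V} {k : ℕ} {Q : Fin (k + 1) → Finset V}
    (h : Fam G R k Q) {X : Finset V} (hX : X ⊆ R) (hc : k + 1 < X.card) :
    ∃ i, ∃ u ∈ X, ∃ v ∈ X, u ∈ Q i ∧ v ∈ Q i ∧ u ≠ v := by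
  have hcol : ∀ v ∈ R, ∃ i, v ∈ Q i := h.cover
  choose! c hc' using hcol
  obtain ⟨u, hu, v, hv, huv, e⟩ := Finset.exists_ne_map_eq_of_card_lt_of_maps_to
    (s := X) (t := Finset.univ) (f := c) (by simpa using hc) (by intro v _; simp)
  exact ⟨c u, u, hu, v, hv, hc' u (hX hu), e ▸ hc' v (hX hv), huv⟩

/-- The vertices seeing nothing of the cluster, or exactly one clique of it. -/
def InR (G : SimpleGraph V) (C : Finset V) {k : ℕ} (K : Fin (k + 1) → Finset V) (v : V) : Prop :=
  (∀ w ∈ C, ¬ (v = w ∨ G.Adj v w)) ∨ ∃ i, ∀ w ∈ C, (v = w ∨ G.Adj v w) ↔ w ∈ K i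

theorem InR.sub {G : SimpleGraph V} {C : Finset V} {k : ℕ} {K : Fin (k + 1) → Finset V} {v : V}
    (h : InR G C K v) : ∃ i, ∀ w ∈ C, (v = w ∨ G.Adj v w) → w ∈ K i := by
  rcases h with h | ⟨i, h⟩
  · exact ⟨0, fun w hw h' => absurd h' (h w hw)⟩
  · exact ⟨i, fun w hw => (h w hw).1⟩

theorem inR_of_mem {G : SimpleGraph V} {C : Finset V} {k : ℕ} {K : Fin (k + 1) → Finset V}
    (hK : Fam G C k K) {v : V} (hv : v ∈ C) : InR G C K v := by
  obtain ⟨i, hi⟩ := hK.cover v hv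
  refine Or.inr ⟨i, fun w hw => ⟨?_, ?_⟩⟩
  · rintro (rfl | h)
    · exact hi
    · obtain ⟨j, hj⟩ := hK.cover w hw
      rwa [hK.eq_of_adj hi hj h]
  · intro hwi
    by_cases e : v = w
    · exact Or.inl e
    · exact Or.inr (hK.adj hi hwi e)

theorem not_inR {G : SimpleGraph V} (hfree : P2P3Free G) {C : Finset V} {k : ℕ}
    {K : Fin (k + 1) → Finset V} (hK : Fam G C k K) {t : V} (ht : ¬ InR G C K t) :
    ∃ i, ∀ l, l ≠ i → ∀ u ∈ K l, ∀ v ∈ K l, ¬ G.Adj t u → ¬ G.Adj t v → u = v := by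
  have htC : t ∉ C := fun h => ht (inR_of_mem hK h)
  have htK : ∀ i, ∀ w ∈ K i, t ≠ w := by
    rintro i w hw rfl
    exact htC (hK.sub i hw)
  by_cases hA : ∃ i, ∃ a ∈ K i, ∃ b ∈ K i, G.Adj t a ∧ ¬ G.Adj t b
  · obtain ⟨i, a, ha, b, hb, hta, htb⟩ := hA
    refine ⟨i, ?_⟩
    intro l hl u hu v hv htu htv
    by_contra huv
    have hab : a ≠ b := by
      rintro rfl
      exact htb hta
    exact p2p3_s11 hfree (hK.adj hu hv huv) hta (hK.adj ha hb hab) (htK i b hb) htb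
      (fun h => htu h.symm) (hK.anti l i hl u hu a ha).2 (hK.anti l i hl u hu b hb).2
      (fun h => htv h.symm) (hK.anti l i hl v hv a ha).2 (hK.anti l i hl v hv b hb).2
  · push Not at hA
    obtain ⟨a, haC, hta⟩ : ∃ a ∈ C, G.Adj t a := by
      by_contra hcon
      push Not at hcon
      apply ht
      refine Or.inl ?_
      rintro w hw (rfl | h)
      · exact htC hw
      · exact hcon w hw h
    obtain ⟨i, hai⟩ := hK.cover a haC
    obtain ⟨j, hji, b, hbj, htb⟩ : ∃ j, j ≠ i ∧ ∃ b ∈ K j, G.Adj t b := by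
      by_contra hcon
      push Not at hcon
      apply ht
      refine Or.inr ⟨i, fun w hw => ⟨?_, ?_⟩⟩
      · rintro (rfl | h)
        · exact absurd hw htC
        · obtain ⟨j, hj⟩ := hK.cover w hw
          by_contra hwi
          refine hcon j ?_ w hj h
          rintro rfl
          exact hwi hj
      · intro hwi
        exact Or.inr (hA i a hai w hwi hta)
    refine ⟨i, ?_⟩
    intro l hl u hu v hv htu htv
    by_contra huv
    by_cases hlj : l = j
    · subst hlj
      exact htu (hA l b hbj u hu htb)
    have hab := hK.anti i j hji.symm a hai b hbj
    exact p2p3_s11 hfree (hK.adj hu hv huv) hta.symm htb hab.1 hab.2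
      (hK.anti l i hl u hu a hai).2 (fun h => htu h.symm) (hK.anti l j hlj u hu b hbj).2
      (hK.anti l i hl v hv a hai).2 (fun h => htv h.symm) (hK.anti l j hlj v hv b hbj).2

theorem not_inR_card {G : SimpleGraph V} [DecidableRel G.Adj] (hfree : P2P3Free G) {C : Finset V}
    {k : ℕ} {K : Fin (k + 1) → Finset V} (hK : Fam G C k K) {t : V} (ht : ¬ InR G C K t) :
    ∃ i, (C.filter (fun w => ¬ G.Adj t w)).card ≤ (K i).card + (k + 1) := by
  obtain ⟨i, hi⟩ := not_inR hfree hK ht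
  refine ⟨i, ?_⟩
  set X := C.filter (fun w => ¬ G.Adj t w) with hX
  have h1 : (X \ K i).card ≤ k + 1 := by
    by_contra hcon
    obtain ⟨l, u, hu, v, hv, hul, hvl, huv⟩ := fam_edge hK (X := X \ K i)
      (fun w hw => (Finset.mem_filter.1 (Finset.mem_sdiff.1 hw).1).1) (by omega)
    rw [Finset.mem_sdiff, hX, Finset.mem_filter] at hu hv
    refine huv (hi l ?_ u hul v hvl hu.1.2 hv.1.2)
    rintro rfl
    exact hu.2 hul
  have h2 := Finset.le_card_sdiff (K i) X
  omega

theorem cycle_c {G : SimpleGraph V} [DecidableRel G.Adj] (ht : IsTough 15 G)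
    (hfree : P2P3Free G) {S L : Finset V} {k : ℕ} {K : Fin (k + 1) → Finset V}
    (hK : Fam G Sᶜ k K) (hS : 16 * S.card ≤ 7 * Fintype.card V) (hn : 496 ≤ Fintype.card V)
    (hL : ∀ v ∈ L, 16 * (G.degree v + 1) ≤ Fintype.card V)
    (hsmall : ∀ i, 16 * (K i).card < 3 * Fintype.card V) :
    ∃ l, IsCyc G l ∧ ∀ z ∈ L, z ∈ l := by
  classical
  have hcard := Finset.card_compl_add_card S
  have hk : 1 ≤ k := by
    by_contra hk
    have hk0 : k = 0 := by omega
    subst hk0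
    have := fam_sum hK
    have := hsmall 0
    simp_all
    omega
  have hkS := fam_tough ht hK hk
  rw [compl_compl] at hkS
  set C := Sᶜ with hC
  have hedge : ∀ i j, ∃ u ∈ C, ∃ v ∈ C, u ∉ K i ∧ u ∉ K j ∧ v ∉ K i ∧ v ∉ K j ∧ G.Adj u v := by
    intro i j
    have h1 := Finset.card_union_le (K i) (K j)
    have h2 := Finset.le_card_sdiff (K i ∪ K j) C
    have h3 := hsmall i
    have h4 := hsmall j
    obtain ⟨l, u, hu, v, hv, hul, hvl, huv⟩ := fam_edge hK (X := C \ (K i ∪ K j))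
      Finset.sdiff_subset (by omega)
    simp only [Finset.mem_sdiff, Finset.mem_union, not_or] at hu hv
    exact ⟨u, hu.1, v, hv.1, hu.2.1, hu.2.2, hv.2.1, hv.2.2, hK.adj hul hvl huv⟩
  have hKanti : ∀ i, ∀ w ∈ K i, ∀ u ∈ C, u ∉ K i → ¬ G.Adj u w := by
    intro i w hw u hu hui h
    obtain ⟨j, hj⟩ := hK.cover u hu
    exact hui (by rwa [← hK.eq_of_adj hj hw h])
  let R : Finset V := Finset.univ.filter (fun v => InR G C K v)
  have hR : ∀ v, v ∈ R ↔ InR G C K v := by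
    intro v
    simp [R]
  have hCR : C ⊆ R := fun v hv => (hR v).2 (inR_of_mem hK hv)
  have htouch1 : ∀ a ∈ R, ∀ b ∈ R, G.Adj a b → ∀ w ∈ C, (b = w ∨ G.Adj b w) →
      (a = w ∨ G.Adj a w) := by
    intro a ha b hb hab w hw hbw
    by_contra hcon
    obtain ⟨i, hi⟩ := ((hR a).1 ha).sub
    obtain ⟨j, hj⟩ := ((hR b).1 hb).sub
    rw [not_or] at hcon
    have hbw' : G.Adj b w := by
      rcases hbw with rfl | h
      · exact absurd hab hcon.2
      · exact h
    have hwj := hj w hw hbw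
    obtain ⟨u, hu, v, hv, hui, huj, hvi, hvj, huv⟩ := hedge i j
    exact p2p3_s11 hfree huv hab hbw' hcon.1 hcon.2
      (fun h => hui (hi u hu (Or.inr h.symm))) (fun h => huj (hj u hu (Or.inr h.symm)))
      (hKanti j w hwj u hu huj)
      (fun h => hvi (hi v hv (Or.inr h.symm))) (fun h => hvj (hj v hv (Or.inr h.symm)))
      (hKanti j w hwj v hv hvj)
  have hRclus : Clus G R := by
    intro a ha b hb c hc hab hbc hac
    by_contra hnac
    obtain ⟨i, hi⟩ := ((hR b).1 hb).sub
    obtain ⟨u, hu, v, hv, hui, -, hvi, -, huv⟩ := hedge i i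
    have key : ∀ w ∈ C, w ∉ K i → ¬ G.Adj w a ∧ ¬ G.Adj w b ∧ ¬ G.Adj w c := by
      intro w hw hwi
      refine ⟨fun h => ?_, fun h => hwi (hi w hw (Or.inr h.symm)), fun h => ?_⟩
      · exact hwi (hi w hw (htouch1 b hb a ha hab.symm w hw (Or.inr h.symm)))
      · exact hwi (hi w hw (htouch1 b hb c hc hbc w hw (Or.inr h.symm)))
    obtain ⟨u1, u2, u3⟩ := key u hu hui
    obtain ⟨v1, v2, v3⟩ := key v hv hvi
    exact p2p3_s11 hfree huv hab hbc hac hnac u1 u2 u3 v1 v2 v3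
  have hTS : Rᶜ ⊆ S := by
    intro v hv
    by_contra h
    exact (Finset.mem_compl.1 hv) (hCR (by rw [hC, Finset.mem_compl]; exact h))
  have hTmiss : ∀ t, t ∉ R → 16 * (C.filter (fun w => ¬ G.Adj t w)).card ≤
      3 * Fintype.card V + 16 * (k + 1) := by
    intro t htR
    obtain ⟨i, hi⟩ := not_inR_card hfree hK (fun h => htR ((hR t).2 h))
    have := hsmall i
    omega
  have hLR : ∀ v ∈ L, v ∈ R := by
    intro v hv
    by_contra hvR
    have h1 := hTmiss v hvR
    have h2 := filter_le_degree G v C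
    have h3 : (C.filter (fun w => G.Adj v w)).card + (C.filter (fun w => ¬ G.Adj v w)).card = C.card :=
      Finset.card_filter_add_card_filter_not _
    have h4 := hL v hv
    omega
  obtain ⟨a0, ha0⟩ := hK.nonempty 0
  obtain ⟨m, Q, h⟩ := clus_index hRclus ⟨a0, hCR (hK.sub 0 ha0)⟩
  have hm : 1 ≤ m := by
    by_contra hm
    have hm0 : m = 0 := by omega
    subst hm0
    obtain ⟨a1, ha1⟩ := hK.nonempty (Fin.last k)
    have hne : (0 : Fin (k + 1)) ≠ Fin.last k := by
      intro e
      have := congrArg Fin.val e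
      simp at this
      omega
    have h01 := hK.anti 0 (Fin.last k) hne a0 ha0 a1 ha1
    obtain ⟨i, hi⟩ := h.cover a0 (hCR (hK.sub _ ha0))
    obtain ⟨j, hj⟩ := h.cover a1 (hCR (hK.sub _ ha1))
    have e : i = j := by
      apply Fin.ext
      omega
    subst e
    exact h01.2 (h.adj hi hj h01.1)
  have hmT := fam_tough ht h hm
  have hTc := Finset.card_le_card hTS
  obtain ⟨l, hl1, hl2⟩ := link_cycle ht h (by omega) C 1 (2 * (m + 1)) (by
    intro p q hp hq
    have h1 := Finset.card_le_card (Finset.inter_subset_left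
      (s₁ := Finset.univ.image p ∪ Finset.univ.image q) (s₂ := C))
    have h2 := Finset.card_union_le (Finset.univ.image p) (Finset.univ.image q)
    have h3 : (Finset.univ.image p).card ≤ m + 1 := Finset.card_image_le.trans (by simp)
    have h4 : (Finset.univ.image q).card ≤ m + 1 := Finset.card_image_le.trans (by simp)
    omega) (by
    intro x y hx hy
    have : ({x, y} : Finset V) ∩ C = ∅ := by
      rw [Finset.eq_empty_iff_forall_notMem]
      intro v hv
      simp only [Finset.mem_inter, Finset.mem_insert, Finset.mem_singleton] at hv
      obtain ⟨rfl | rfl, hvC⟩ := hv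
      · exact hx (hCR hvC)
      · exact hy (hCR hvC)
    rw [this]
    simp) (by
    intro x y U hx hy _ _ hxy hxU hyU hU
    have h1 := hTmiss x hx
    have h2 := hTmiss y hy
    set X := C.filter (fun w => ¬ G.Adj x w) with hX
    set Y := C.filter (fun w => ¬ G.Adj y w) with hY
    have h3 := Finset.card_union_le (X ∪ Y) (U ∩ C)
    have h4 := Finset.card_union_le X Y
    have h5 := Finset.le_card_sdiff (X ∪ Y ∪ U ∩ C) C
    obtain ⟨w, hw⟩ := Finset.card_pos.1 (show 0 < (C \ (X ∪ Y ∪ U ∩ C)).card by omega)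
    simp only [hX, hY, Finset.mem_sdiff, Finset.mem_union, Finset.mem_inter, Finset.mem_filter,
      not_or, not_and, not_not] at hw
    obtain ⟨hwC, ⟨hxw, hyw⟩, hwU⟩ := hw
    have hxw := hxw hwC
    have hyw := hyw hwC
    have hwU : w ∉ U := fun h' => hwU h' hwC
    have hxC : x ∉ C := fun h' => hx (hCR h')
    have hyC : y ∉ C := fun h' => hy (hCR h')
    refine ⟨[x, w, y], by simp [PL, hxw, hyw.symm, hxy, hxw.ne, hyw.ne.symm],
      by simp [hxU, hyU, hwU], ?_⟩
    refine (Finset.card_le_card (t := {w}) ?_).trans (by simp)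
    intro v hv
    simp only [List.toFinset_cons, List.toFinset_nil, Finset.mem_inter, Finset.mem_insert,
      Finset.notMem_empty, or_false] at hv
    rw [Finset.mem_singleton]
    obtain ⟨rfl | rfl | rfl, hvC⟩ := hv
    · exact absurd hvC hxC
    · rfl
    · exact absurd hvC hyC)
  exact ⟨l, hl1, fun z hz => hl2 z (hLR z hz)⟩

theorem cluster_cycle {G : SimpleGraph V} [DecidableRel G.Adj] (ht : IsTough 15 G)
    (hfree : P2P3Free G) {S L : Finset V}
    (hK : Clus G Sᶜ) (hS : 16 * S.card ≤ 7 * Fintype.card V) (hn : 496 ≤ Fintype.card V)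
    (hL : ∀ v ∈ L, 16 * (G.degree v + 1) ≤ Fintype.card V) (hLne : L.Nonempty) :
    ∃ l, IsCyc G l ∧ ∀ z ∈ L, z ∈ l := by
  have hcard := Finset.card_compl_add_card S
  obtain ⟨k, K, h⟩ := clus_index hK (Finset.card_pos.1 (by omega))
  by_cases hb : ∃ i, 3 * Fintype.card V ≤ 16 * (K i).card
  · obtain ⟨i, hi⟩ := hb
    exact cycle_b ht hfree h hS hn hL hLne i hi
  · push Not at hb
    exact cycle_c ht hfree h hS hn hL hb

end smallcliques
/-! ### Putting everything together -/

section final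

variable [Fintype V] [DecidableEq V]

theorem min_degree {G : SimpleGraph V} [DecidableRel G.Adj] (ht : IsTough 15 G) (v : V) :
    30 ≤ G.degree v ∨ Fintype.card V ≤ G.degree v + 1 := by
  by_cases hw : ∃ w, w ≠ v ∧ ¬ G.Adj v w
  · left
    obtain ⟨w, hwv, hvw⟩ := hw
    have := tough_rep ht (G.neighborFinset v) (fun u => u = v) {v, w} (by
      intro a b ha hb hab
      simp only [mem_neighborFinset] at ha hb
      have h1 : a ≠ v := by
        rintro rfl
        exact hb hab
      have h2 : b ≠ v := by
        rintro rfl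
        exact ha hab.symm
      simp [h1, h2]) (by
      intro t ht
      rcases Finset.mem_insert.1 ht with rfl | ht
      · simp
      · rw [Finset.mem_singleton.1 ht]; simpa using hvw) (by
      intro a ha b hb hab
      simp only [Finset.coe_insert, Finset.coe_singleton, Set.mem_insert_iff,
        Set.mem_singleton_iff] at ha hb
      rcases ha with rfl | rfl <;> rcases hb with rfl | rfl <;> simp_all)
      (by rw [Finset.card_pair hwv.symm])
    rw [Finset.card_pair hwv.symm, G.card_neighborFinset_eq_degree] at this
    omega
  · right
    push Not at hw
    apply clique_degree_aux
    exact hw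
where
  clique_degree_aux (hw : ∀ w, w ≠ v → G.Adj v w) : Fintype.card V ≤ G.degree v + 1 := by
    have h1 := filter_le_degree G v Finset.univ
    have h2 : Finset.univ.erase v ⊆ Finset.univ.filter (fun w => G.Adj v w) := by
      intro w hw'
      rw [Finset.mem_erase] at hw'
      exact Finset.mem_filter.2 ⟨Finset.mem_univ _, hw w hw'.1⟩
    have h3 := Finset.card_le_card h2
    rw [Finset.card_erase_of_mem (Finset.mem_univ _), Finset.card_univ] at h3
    omega

theorem some_cycle {G : SimpleGraph V} [DecidableRel G.Adj] (ht : IsTough 15 G)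
    (hn : 3 ≤ Fintype.card V) : ∃ l, IsCyc G l := by
  obtain ⟨v⟩ : Nonempty V := Fintype.card_pos_iff.1 (by omega)
  have hd : 2 ≤ G.degree v := by
    rcases min_degree ht v with h | h <;> omega
  rw [← G.card_neighborFinset_eq_degree] at hd
  obtain ⟨a, ha, b, hb, hab⟩ := Finset.one_lt_card.1 (show 1 < (G.neighborFinset v).card by omega)
  rw [mem_neighborFinset] at ha hb
  by_cases hr : Rch G {v} a b
  · obtain ⟨l, hl1, hl2⟩ := hr.exists_PL
    refine ⟨l ++ [v], (hl1.append (PL.single v) hb.symm ?_).isCyc ha ?_⟩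
    · intro x hx h'
      exact hl2 x hx (by simpa using h')
    · have hsub : ([a, b] : List V).Subperm l := by
        apply List.subperm_of_subset
        · simpa using hab
        · intro x hx
          simp only [List.mem_cons, List.not_mem_nil, or_false] at hx
          rcases hx with rfl | rfl
          · exact hl1.left_mem
          · exact hl1.right_mem
      have := hsub.length_le
      simp at this ⊢
      omega
  · exfalso
    have haa : Rch G {v} a a := Rch.refl (by simpa using ha.ne.symm)
    have := tough_rep ht {v} (fun u => Rch G {v} a u) {a, b} (by
      intro x y hx hy hxy
      apply propext
      exact ⟨fun h => h.trans (Rch.of_adj hx hy hxy),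
        fun h => h.trans (Rch.of_adj hy hx hxy.symm)⟩) (by
      intro t ht
      rcases Finset.mem_insert.1 ht with rfl | ht
      · simpa using ha.ne.symm
      · rw [Finset.mem_singleton.1 ht]; simpa using hb.ne.symm) (by
      intro x hx y hy hxy
      simp only [Finset.coe_insert, Finset.coe_singleton, Set.mem_insert_iff,
        Set.mem_singleton_iff] at hx hy
      rcases hx with rfl | rfl <;> rcases hy with rfl | rfl <;> simp_all)
      (by rw [Finset.card_pair hab])
    rw [Finset.card_pair hab] at this
    simp at this

theorem low_cycle {G : SimpleGraph V} [DecidableRel G.Adj] (ht : IsTough 15 G)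
    (hfree : P2P3Free G) (hn : 496 ≤ Fintype.card V) {L : Finset V}
    (hL : ∀ v ∈ L, 16 * (G.degree v + 1) ≤ Fintype.card V) (hLne : L.Nonempty) :
    ∃ l, IsCyc G l ∧ ∀ z ∈ L, z ∈ l := by
  by_contra hno
  have hclus : ∀ S : Finset V, Clus G Sᶜ → 7 * Fintype.card V < 16 * S.card := by
    intro S hS
    by_contra hcon
    exact hno (cluster_cycle ht hfree hS (by omega) hn hL hLne)
  have hdeg : ∀ l ∈ L, ∀ v, G.Adj l v → 6 * Fintype.card V < 16 * G.degree v := by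
    intro l hl v hlv
    have h1 := hclus (G.neighborFinset l ∪ G.neighborFinset v) (by
      intro a ha b hb c hc hab hbc hac
      by_contra hnac
      simp only [Finset.mem_compl, Finset.mem_union, mem_neighborFinset, not_or] at ha hb hc
      exact p2p3_s11 hfree hlv hab hbc hac hnac ha.1 hb.1 hc.1 ha.2 hb.2 hc.2)
    have h2 := Finset.card_union_le (G.neighborFinset l) (G.neighborFinset v)
    rw [G.card_neighborFinset_eq_degree, G.card_neighborFinset_eq_degree] at h2
    have h3 := hL l hl
    omega
  have hind : ∀ u ∈ L, ∀ v ∈ L, ¬ G.Adj u v := by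
    intro u hu v hv huv
    have h1 := hdeg u hu v huv
    have h2 := hL v hv
    omega
  obtain ⟨k, Q, h⟩ := clus_index (G := G) (R := L)
    (fun a ha b hb c hc hab => absurd hab (hind a ha b hb)) hLne
  apply hno
  refine link_cycle ht h ?_ Finset.univ 5 (k + 1) ?_ ?_ ?_
  · obtain ⟨v, hv⟩ := hLne
    have h1 := hL v hv
    have h2 : 30 ≤ G.degree v := by
      rcases min_degree ht v with h2 | h2 <;> omega
    refine h2.trans ?_
    rw [← G.card_neighborFinset_eq_degree]
    apply Finset.card_le_card
    intro w hw
    rw [mem_neighborFinset] at hw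
    rw [Finset.mem_compl]
    exact fun h' => hind v hv w h' hw
  · intro p q hp hq
    have : q = p := by
      funext i
      by_contra hne
      exact hind _ (h.sub i (hq i)) _ (h.sub i (hp i)) (h.adj (hq i) (hp i) hne)
    rw [this, Finset.union_self, Finset.inter_univ]
    exact Finset.card_image_le.trans (by simp)
  · intro x y _ _
    exact (Finset.card_le_card Finset.inter_subset_left).trans
      (Finset.card_le_two.trans (by norm_num))
  · intro x y U hx hy hzx hzy hxy hxU hyU hU
    rw [Finset.inter_univ] at hU
    have hUn : 16 * U.card ≤ 6 * Fintype.card V := by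
      rcases Nat.eq_zero_or_pos k with rfl | hk
      · omega
      · have := fam_tough' ht h hk
        omega
    have hnb : ∀ v, (∃ z ∈ L, G.Adj z v) → ∃ a, G.Adj v a ∧ a ∉ U := by
      rintro v ⟨z, hz, hzv⟩
      have h1 := hdeg z hz v hzv
      have h2 := Finset.le_card_sdiff U (G.neighborFinset v)
      rw [G.card_neighborFinset_eq_degree] at h2
      obtain ⟨a, ha⟩ := Finset.card_pos.1 (show 0 < (G.neighborFinset v \ U).card by omega)
      rw [Finset.mem_sdiff, mem_neighborFinset] at ha
      exact ⟨a, ha⟩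
    obtain ⟨a, hxa, haU⟩ := hnb x hzx
    obtain ⟨b, hyb, hbU⟩ := hnb y hzy
    by_cases hr : Rch G U x y
    · obtain ⟨l, hl1, hl2, hl3⟩ := hr.exists_short hfree
      refine ⟨l, hl1, hl2, ?_⟩
      rw [Finset.inter_univ]
      exact (List.toFinset_card_le l).trans hl3
    · exfalso
      have hU2 := hclus U (by
        intro c hc d hd e he hcd hde hce
        by_contra hnce
        rw [Finset.mem_compl] at hc hd he
        have key : ∀ s s', s ∉ U → s' ∉ U → G.Adj s s' → Rch G U s d := by
          intro s s' hs hs' hss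
          by_contra hnr
          have hnr' : ¬ Rch G U s' d := fun h' => hnr ((Rch.of_adj hs hs' hss).trans h')
          have k1 : ∀ r, r ∉ U → ¬ Rch G U r d → ¬ G.Adj r c ∧ ¬ G.Adj r d ∧ ¬ G.Adj r e := by
            intro r hr hrd
            refine ⟨fun h' => hrd ((Rch.of_adj hr hc h').trans (Rch.of_adj hc hd hcd)),
              fun h' => hrd (Rch.of_adj hr hd h'),
              fun h' => hrd ((Rch.of_adj hr he h').trans (Rch.of_adj he hd hde.symm))⟩
          obtain ⟨a1, a2, a3⟩ := k1 s hs hnr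
          obtain ⟨b1, b2, b3⟩ := k1 s' hs' hnr'
          exact p2p3_s11 hfree hss hcd hde hce hnce a1 a2 a3 b1 b2 b3
        exact hr ((key x a hxU haU hxa).trans (key y b hyU hbU hyb).symm))
      omega

end final

theorem stmt11 [Fintype V] [DecidableEq V] (G : SimpleGraph V)
    (hn : 3 ≤ Fintype.card V) (htough : IsTough 15 G) (hfree : P2P3Free G) :
    G.IsHamiltonian := by
  classical
  let L : Finset V := Finset.univ.filter (fun v => 16 * (G.degree v + 1) ≤ Fintype.card V)
  have hLmem : ∀ v, v ∈ L ↔ 16 * (G.degree v + 1) ≤ Fintype.card V := by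
    intro v
    simp [L]
  have hcyc : ∃ l, IsCyc G l ∧ ∀ z ∈ L, z ∈ l := by
    rcases L.eq_empty_or_nonempty with hL | hL
    · obtain ⟨l, hl⟩ := some_cycle htough hn
      exact ⟨l, hl, by simp [hL]⟩
    · have hn' : 496 ≤ Fintype.card V := by
        obtain ⟨v, hv⟩ := hL
        have h1 := (hLmem v).1 hv
        rcases min_degree htough v with h2 | h2 <;> omega
      exact low_cycle htough hfree hn' (fun v hv => (hLmem v).1 hv) hL
  let P : ℕ → Prop := fun n => ∃ l, IsCyc G l ∧ (∀ z ∈ L, z ∈ l) ∧ l.length = n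
  have hlen : ∀ l : List V, IsCyc G l → l.length ≤ Fintype.card V :=
    fun l hl => List.Nodup.length_le_card hl.1
  obtain ⟨l₀, hl₀, hl₀L⟩ := hcyc
  obtain ⟨C, hC, hCL, hClen⟩ : P (Nat.findGreatest P (Fintype.card V)) :=
    Nat.findGreatest_spec (hlen l₀ hl₀) ⟨l₀, hl₀, hl₀L, rfl⟩
  apply ham_of_cyc hC
  intro v
  by_contra hv
  apply hv
  apply hCL
  rw [hLmem]
  refine max_cycle htough hfree hC ?_ hv
  intro C' hC' hsub x hx
  have h1 : C'.length ≤ C.length := by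
    rw [hClen]
    exact Nat.le_findGreatest (hlen C' hC') ⟨C', hC', fun z hz => hsub z (hCL z hz), rfl⟩
  have h2 : C.toFinset ⊆ C'.toFinset := by
    intro y hy
    rw [List.mem_toFinset] at hy ⊢
    exact hsub y hy
  have h3 := Finset.eq_of_subset_of_card_le h2 (by
    rw [List.toFinset_card_of_nodup hC.1, List.toFinset_card_of_nodup hC'.1]
    exact h1)
  rw [← List.mem_toFinset, h3, List.mem_toFinset]
  exact hx
end
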